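/- arXiv:math/0405393 — 2 statements merged into one kernel-verified Lean document; each statement's English description precedes it below -/
import Mathlib

section
/- Let p ≥ 3 be a prime number, let K_{3p−2} be the complete simple graph on 3p−2 vertices, and let M be a maximal matching in K_{3p−2}, i.e. a set of (3p−3)/2 pairwise non-adjacent edges (covering all but one vertex). Then the graph obtained from K_{3p−2} by deleting the edges of M is p-winding. -/
noncomputable section

/-- The Euclidean plane `ℝ²`. -/
abbrev E2 : Type := EuclideanSpace ℝ (Fin 2)

/-- A plane drawing of a simple graph `G`: an assignment of points of `ℝ²` to the
vertices and of continuous paths to the edges (one path per edge, the path for the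
edge traversed in the opposite direction being the reverse). -/
structure Drawing {V : Type*} (G : SimpleGraph V) where
  vert : V → E2
  edgePath : ∀ {a b : V}, G.Adj a b → Path (vert a) (vert b)
  edgePath_symm : ∀ {a b : V} (h : G.Adj a b), edgePath h.symm = (edgePath h).symm

/-- The image of a walk under a drawing: the union of the images of the paths of
its edges (for the trivial walk, the image of its single vertex). -/
def walkImage {V : Type*} {G : SimpleGraph V} (D : Drawing G) :
    ∀ {a b : V}, G.Walk a b → Set E2
  | a, _, SimpleGraph.Walk.nil => {D.vert a}
  | _, _, SimpleGraph.Walk.cons h w => Set.range ⇑(D.edgePath h) ∪ walkImage D w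

/-- The continuous path in `ℝ²` obtained by concatenating the paths of the
consecutive edges of a walk. -/
def walkPath {V : Type*} {G : SimpleGraph V} (D : Drawing G) :
    ∀ {a b : V}, G.Walk a b → Path (D.vert a) (D.vert b)
  | _, _, SimpleGraph.Walk.nil => Path.refl _
  | _, _, SimpleGraph.Walk.cons h w => (D.edgePath h).trans (walkPath D w)

/-- A graph `G` is `q`-winding if for every plane drawing of `G` there are `q`
pairwise vertex-disjoint walks, each a path or a cycle, and a point `x ∈ ℝ²`, such
that each path passes through `x`, and each cycle passes through `x` or its
associated loop is not nullhomotopic in `ℝ² \ {x}` (i.e. not path-homotopic to a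
constant loop). -/
def IsQWinding {V : Type*} [DecidableEq V] (G : SimpleGraph V) (q : ℕ) : Prop :=
  ∀ D : Drawing G,
    ∃ (a b : Fin q → V) (w : ∀ i, G.Walk (a i) (b i)) (x : E2),
      (∀ i j, i ≠ j → Disjoint (w i).support.toFinset (w j).support.toFinset) ∧
      ∀ i,
        ((w i).IsPath ∧ x ∈ walkImage D (w i)) ∨
        (∃ h : b i = a i, ((w i).copy rfl h).IsCycle ∧
          (x ∈ walkImage D (w i) ∨
            ∀ (p : ↥({x}ᶜ : Set E2)) (γ : Path p p),
              (∀ t, (γ t : E2) = (walkPath D ((w i).copy rfl h)) t) →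
              ¬ γ.Homotopic (Path.refl p)))

/-!
Identify `ℝ²` with `ℂ`. Order the vertices so that the one missed by `M` comes first and matched
vertices are consecutive, and divide the vertices after the first one into three blocks of `p - 1`.
Colour the first vertex with one of `p` colours, and the vertices of each block with `p - 1`
distinct colours. As `p - 1` is even, matched vertices lie in the same block, so no colour class
contains a deleted edge. It thus suffices to find a colouring and a point that lies on the drawing
of each of the `p` colour classes or is encircled by it. This is the optimal coloured Tverberg
theorem of Blagojević, Matschke and Ziegler in the plane, for continuous drawings. By compactness an
approximate version is enough, and for this the drawing may be replaced by one in a fine grid.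

On a grid each face has an integral cochain: a vertex gives a cochain of degree `2`, an edge the
crossings of its path with the edges of the grid, and a triangle the winding numbers of its
boundary. Lines of class `a` modulo the number of labels are reserved for the label `a`, so that in
products of cochains of disjoint faces no two factors jump at the same line, and the Leibniz rule
holds for the naive product. Consider the signed sum of the integrals of the products of the `p`
cochains over the colourings in which a given label has the first colour; by the cyclic symmetry of
the colours it does not depend on the label. By Leibniz and Stokes, moving this label changes the
sum by contributions of the faces of the colour classes obtained by removing a label. When the
removed label lies in a block, they cancel in pairs, by exchanging its colour with the colour that
the block omits. When it is the first label, they do not depend on its colour, so they add up to a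
multiple of `p`. Hence the sum modulo `p` is the same for all drawings. With the labels on the
diagonal only the grid point `(2(p-1), p-1)` contributes, and the sum is `((p-1)!)³`, which is not
divisible by `p`.
-/

open Finset Filter Topology

/-! ### Cochains of mixed degree on a grid -/

lemma prod_eq_mul_mul_prod_compl_pair {I M : Type*} [Fintype I] [DecidableEq I] [CommMonoid M]
    {i l : I} (h : i ≠ l) (f : I → M) : ∏ t, f t = f i * f l * ∏ t ∈ {i, l}ᶜ, f t := by
  rw [← prod_mul_prod_compl {i, l} f, prod_pair h]

lemma sum_sum_compl_eq_of_forall_ne {I M : Type*} [Fintype I] [DecidableEq I] [AddCommMonoid M]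
    {m : I} {f : I → I → M} (hf : ∀ i l, i ≠ m → l ≠ m → f i l = 0) :
    ∑ i, ∑ l ∈ {i}ᶜ, f i l = ∑ l ∈ {m}ᶜ, (f m l + f l m) := by
  rw [Fintype.sum_eq_add_sum_compl m, sum_add_distrib]
  refine congrArg _ <| sum_congr rfl fun i hi => ?_
  have hi' : i ≠ m := by simpa using hi
  exact sum_eq_single_of_mem m (by simpa using hi'.symm) fun l _ hl => hf i l hi' hl

/-- The value of an integral cochain of mixed degree on one square of a grid, stored as its degree
`0` part, its values on the horizontal and on the vertical edge leaving the lower left corner, and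
its degree `2` part. -/
abbrev Cell : Type := ℤ × ℤ × ℤ × ℤ

namespace Cell

/-- The degree `0` part of a cell. -/
def deg0 : Cell →ₗ[ℤ] ℤ := LinearMap.fst ..

/-- The value of the degree `1` part of a cell on the horizontal edge. -/
def hor : Cell →ₗ[ℤ] ℤ := LinearMap.fst .. ∘ₗ LinearMap.snd ..

/-- The value of the degree `1` part of a cell on the vertical edge. -/
def ver : Cell →ₗ[ℤ] ℤ := LinearMap.fst .. ∘ₗ LinearMap.snd .. ∘ₗ LinearMap.snd ..

/-- The degree `2` part of a cell. -/
def deg2 : Cell →ₗ[ℤ] ℤ := LinearMap.snd .. ∘ₗ LinearMap.snd .. ∘ₗ LinearMap.snd ..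

@[simp] lemma deg0_mk (w h v p : ℤ) : deg0 (w, h, v, p) = w := rfl
@[simp] lemma hor_mk (w h v p : ℤ) : hor (w, h, v, p) = h := rfl
@[simp] lemma ver_mk (w h v p : ℤ) : ver (w, h, v, p) = v := rfl
@[simp] lemma deg2_mk (w h v p : ℤ) : deg2 (w, h, v, p) = p := rfl

lemma ext {a b : Cell} (h0 : deg0 a = deg0 b) (hh : hor a = hor b) (hv : ver a = ver b)
    (h2 : deg2 a = deg2 b) : a = b :=
  Prod.ext h0 <| Prod.ext hh <| Prod.ext hv h2

/-- The grade involution, negating the degree `1` part. -/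
def involute : Cell →+ Cell :=
  AddMonoidHom.mk' (fun a => (deg0 a, -hor a, -ver a, deg2 a)) fun a b => by
    ext <;> simp [add_comm]

@[simp] lemma deg0_involute (a : Cell) : deg0 (involute a) = deg0 a := rfl
@[simp] lemma hor_involute (a : Cell) : hor (involute a) = -hor a := rfl
@[simp] lemma ver_involute (a : Cell) : ver (involute a) = -ver a := rfl
@[simp] lemma deg2_involute (a : Cell) : deg2 (involute a) = deg2 a := rfl

lemma prod_deg0_update {I : Type*} [DecidableEq I] {s : Finset I} {m : I} (hm : m ∉ s)
    (A : I → Cell) (a : Cell) :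
    ∏ t ∈ s, deg0 (Function.update A m a t) = ∏ t ∈ s, deg0 (A t) :=
  prod_congr rfl fun t ht => by rw [Function.update_of_ne (ne_of_mem_of_not_mem ht hm)]

end Cell

/-- The sign with which the degree `1` parts of the factors `i` and `l` enter an ordered product
whose factor `t` carries `e t` grade involutions. -/
def pairSign {I : Type*} [LinearOrder I] (e : I → ℕ) (i l : I) : ℤ :=
  (-1) ^ (e i + e l + if l < i then 1 else 0)

lemma pairSign_antisymm {I : Type*} [LinearOrder I] (e : I → ℕ) {i l : I} (h : i ≠ l) :
    pairSign e i l = -pairSign e l i := by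
  unfold pairSign
  rcases lt_or_gt_of_ne h with h | h <;> simp [h, h.not_gt, pow_add, mul_comm]

section Product

open Cell

variable {I : Type*} [Fintype I] [LinearOrder I]

/-- The degree `2` part of the ordered exterior product of a family of cells, whose factor `t` is
subjected to `e t` grade involutions. -/
def wedgeTop (e : I → ℕ) : MultilinearMap ℤ (fun _ : I => Cell) ℤ :=
  (∑ i, (MultilinearMap.mkPiAlgebra ℤ I ℤ).compLinearMap fun t => if t = i then deg2 else deg0) +
    ∑ i, ∑ l ∈ {i}ᶜ, pairSign e i l • (MultilinearMap.mkPiAlgebra ℤ I ℤ).compLinearMap fun t =>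
      if t = i then hor else if t = l then ver else deg0

lemma wedgeTop_apply (e : I → ℕ) (A : I → Cell) :
    wedgeTop e A = ∑ i, deg2 (A i) * ∏ t ∈ {i}ᶜ, deg0 (A t) +
      ∑ i, ∑ l ∈ {i}ᶜ, pairSign e i l *
        (hor (A i) * ver (A l) * ∏ t ∈ {i, l}ᶜ, deg0 (A t)) := by
  simp only [wedgeTop, add_apply, _root_.sum_apply, smul_apply,
    MultilinearMap.compLinearMap_apply, MultilinearMap.mkPiAlgebra_apply, smul_eq_mul]
  congr 1
  · refine sum_congr rfl fun i _ => ?_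
    rw [Fintype.prod_eq_mul_prod_compl i, if_pos rfl]
    exact congrArg _ <| prod_congr rfl fun t ht => by rw [if_neg (by simpa using ht)]
  · refine sum_congr rfl fun i _ => sum_congr rfl fun l hl => ?_
    have hli : l ≠ i := by simpa using hl
    rw [prod_eq_mul_mul_prod_compl_pair hli.symm, if_pos rfl, if_neg hli, if_pos rfl]
    refine congrArg _ <| congrArg _ <| prod_congr rfl fun t ht => ?_
    obtain ⟨hti, htl⟩ : t ≠ i ∧ t ≠ l := by simpa using ht
    rw [if_neg hti, if_neg htl]

lemma wedgeTop_update_of_deg0_eq_zero (e : I → ℕ) (A : I → Cell) (m : I) {a : Cell}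
    (ha : deg0 a = 0) :
    wedgeTop e (Function.update A m a) = deg2 a * ∏ t ∈ {m}ᶜ, deg0 (A t) +
      ∑ l ∈ {m}ᶜ, pairSign e m l * (hor a * ver (A l) - ver a * hor (A l)) *
        ∏ t ∈ {m, l}ᶜ, deg0 (A t) := by
  have hprod (s : Finset I) (hm : m ∈ s) : ∏ t ∈ s, deg0 (Function.update A m a t) = 0 :=
    prod_eq_zero hm (by simp [ha])
  rw [wedgeTop_apply]
  congr 1
  · rw [Fintype.sum_eq_single m fun i hi => by rw [hprod _ (by simpa using hi.symm), mul_zero],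
      Function.update_self, prod_deg0_update (by simp)]
  · rw [sum_sum_compl_eq_of_forall_ne (m := m) fun i l hi hl => by
      rw [hprod _ (by simp [hi.symm, hl.symm]), mul_zero, mul_zero]]
    refine sum_congr rfl fun l hl => ?_
    have hlm : l ≠ m := by simpa using hl
    rw [Function.update_self, Function.update_of_ne hlm, pair_comm l m,
      prod_deg0_update (by simp), pairSign_antisymm e hlm]
    ring

lemma wedgeTop_congr_pairSign {e e' : I → ℕ}
    (h : ∀ i l, i ≠ l → pairSign e i l = pairSign e' i l) : wedgeTop e = wedgeTop e' := by
  ext A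
  rw [wedgeTop_apply, wedgeTop_apply]
  refine congrArg _ <| sum_congr rfl fun i _ => sum_congr rfl fun l hl => ?_
  rw [h i l (by simpa [eq_comm] using hl)]

lemma wedgeTop_update_involute (e : I → ℕ) (A : I → Cell) (m : I) (a : Cell) :
    wedgeTop e (Function.update A m (involute a)) =
      wedgeTop (Function.update e m (e m + 1)) (Function.update A m a) := by
  have hdeg0 (t : I) :
      deg0 (Function.update A m (involute a) t) = deg0 (Function.update A m a t) := by
    rcases eq_or_ne t m with rfl | ht <;> simp [*]
  have hdeg2 (t : I) :
      deg2 (Function.update A m (involute a) t) = deg2 (Function.update A m a t) := by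
    rcases eq_or_ne t m with rfl | ht <;> simp [*]
  simp only [wedgeTop_apply, hdeg0, hdeg2]
  refine congrArg _ <| sum_congr rfl fun i _ => sum_congr rfl fun l hl => ?_
  have hli : l ≠ i := by simpa using hl
  simp only [← mul_assoc]
  congr 1
  rcases eq_or_ne i m with rfl | hi
  · simp only [pairSign, Function.update_self, Function.update_of_ne hli, hor_involute, pow_add]
    ring
  · rcases eq_or_ne l m with rfl | hl
    · simp only [pairSign, Function.update_self, Function.update_of_ne hi, ver_involute, pow_add]
      ring
    · simp only [pairSign, Function.update_of_ne hi, Function.update_of_ne hl]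

end Product

/-- An integral cochain of mixed degree on the square grid `ℕ × ℕ`. -/
abbrev Coch : Type := ℕ → ℕ → Cell

namespace Coch

open Cell

/-- The coboundary operator. -/
def d : Coch →+ Coch :=
  AddMonoidHom.mk' (fun X i j => (0, deg0 (X (i + 1) j) - deg0 (X i j),
    deg0 (X i (j + 1)) - deg0 (X i j),
    hor (X i j) + ver (X (i + 1) j) - hor (X i (j + 1)) - ver (X i j))) fun X Y => by
      funext i j
      ext <;> simp <;> ring

lemma d_apply (X : Coch) (i j : ℕ) : d X i j = (0, deg0 (X (i + 1) j) - deg0 (X i j),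
    deg0 (X i (j + 1)) - deg0 (X i j),
    hor (X i j) + ver (X (i + 1) j) - hor (X i (j + 1)) - ver (X i j)) := rfl

/-- The grade involution, negating the degree `1` part. -/
def involute : Coch →+ Coch :=
  AddMonoidHom.mk' (fun X i j => Cell.involute (X i j)) fun _ _ => by
    funext i j
    exact map_add Cell.involute _ _

lemma involute_apply (X : Coch) (i j : ℕ) : involute X i j = Cell.involute (X i j) := rfl

lemma involute_involute (X : Coch) : involute (involute X) = X := by
  funext i j
  refine Cell.ext ?_ ?_ ?_ ?_ <;> simp [involute_apply]

lemma d_involute (X : Coch) : d (involute X) = -involute (d X) := by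
  funext i j
  refine Cell.ext ?_ ?_ ?_ ?_ <;>
    simp [d_apply, involute_apply, sub_eq_add_neg, add_comm, add_left_comm]

/-- The cochains whose parts of positive degree live in the columns and rows with class in `S`, and
whose degree `1` part vanishes on the boundary of the grid `[0, n]²`. -/
def onLines (n : ℕ) (c : ℕ → ℕ) (S : Set ℕ) : AddSubgroup Coch where
  carrier := {X | (∀ i j, c i ∉ S → hor (X i j) = 0 ∧ deg2 (X i j) = 0) ∧
    (∀ i j, c j ∉ S → ver (X i j) = 0 ∧ deg2 (X i j) = 0) ∧
    ∀ k, (hor (X k 0) = 0 ∧ hor (X k n) = 0) ∧ ver (X 0 k) = 0 ∧ ver (X n k) = 0}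
  zero_mem' := by simp
  add_mem' := by
    rintro X Y ⟨hX, vX, bX⟩ ⟨hY, vY, bY⟩
    refine ⟨fun i j h => ?_, fun i j h => ?_, fun k => ?_⟩
    · simp [hX i j h, hY i j h]
    · simp [vX i j h, vY i j h]
    · simp [bX k, bY k]
  neg_mem' := by
    rintro X ⟨hX, vX, bX⟩
    refine ⟨fun i j h => ?_, fun i j h => ?_, fun k => ?_⟩
    · simp [hX i j h]
    · simp [vX i j h]
    · simp [bX k]

variable {n : ℕ} {c : ℕ → ℕ} {S S' : Set ℕ}

lemma onLines_mono (h : S ⊆ S') : onLines n c S ≤ onLines n c S' := fun _ ⟨hX, vX, bX⟩ =>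
  ⟨fun i j hi => hX i j fun hi' => hi (h hi'), fun i j hj => vX i j fun hj' => hj (h hj'), bX⟩

lemma involute_mem_onLines {X : Coch} (hX : X ∈ onLines n c S) : involute X ∈ onLines n c S := by
  obtain ⟨hX, vX, bX⟩ := hX
  refine ⟨fun i j h => ?_, fun i j h => ?_, fun k => ?_⟩
  · simp [involute_apply, hX i j h]
  · simp [involute_apply, vX i j h]
  · simp [involute_apply, bX k]

lemma involute_mem_onLines_iff {X : Coch} : involute X ∈ onLines n c S ↔ X ∈ onLines n c S :=
  ⟨fun h => involute_involute X ▸ involute_mem_onLines h, involute_mem_onLines⟩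

end Coch

section Stokes

lemma prod_sub_prod_of_forall_ne {I R : Type*} [CommRing R] [DecidableEq I] {s : Finset I}
    {a b : I → R} (hu : ∀ m ∈ s, ∀ m' ∈ s, b m ≠ a m → b m' ≠ a m' → m = m') :
    ∏ t ∈ s, b t - ∏ t ∈ s, a t = ∑ m ∈ s, (b m - a m) * ∏ t ∈ s.erase m, a t := by
  by_cases hex : ∃ m ∈ s, b m ≠ a m
  · obtain ⟨m, hms, hm⟩ := hex
    have hother : ∀ t ∈ s, t ≠ m → b t = a t := fun t hts ht => by
      by_contra hc
      exact ht (hu t hts m hms hc hm)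
    rw [sum_eq_single_of_mem m hms fun t hts ht => by rw [hother t hts ht, sub_self, zero_mul],
      ← mul_prod_erase s a hms, ← mul_prod_erase s b hms,
      prod_congr rfl fun t ht => hother t (mem_of_mem_erase ht) (ne_of_mem_erase ht), sub_mul]
  · push Not at hex
    rw [prod_congr rfl hex, sub_self, sum_eq_zero fun m hm => by rw [hex m hm, sub_self, zero_mul]]

lemma sum_boundary_mul_eq_zero {R : Type*} [CommRing R] {n : ℕ} {f h v : ℕ → ℕ → R}
    (h0 : ∀ i, h i 0 = 0) (hn : ∀ i, h i n = 0) (v0 : ∀ j, v 0 j = 0) (vn : ∀ j, v n j = 0) :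
    ∑ i ∈ range n, ∑ j ∈ range n, ((f (i + 1) j * v (i + 1) j - f i j * v i j) -
      (f i (j + 1) * h i (j + 1) - f i j * h i j)) = 0 := by
  have hcol : ∑ i ∈ range n, ∑ j ∈ range n, (f (i + 1) j * v (i + 1) j - f i j * v i j) = 0 := by
    simp only [sum_sub_distrib]
    rw [← sum_sub_distrib, sum_range_sub fun i => ∑ j ∈ range n, f i j * v i j]
    simp [v0, vn]
  have hrow (i : ℕ) : ∑ j ∈ range n, (f i (j + 1) * h i (j + 1) - f i j * h i j) = 0 := by
    rw [sum_range_sub fun j => f i j * h i j]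
    simp [h0, hn]
  simp only [sum_sub_distrib (f := fun j => f _ j * _ - _), hrow] at hcol ⊢
  simpa using hcol

end Stokes

namespace Coch

open Cell

variable {n : ℕ} {c : ℕ → ℕ} {S S' : Set ℕ}

lemma hor_eq_zero_or_of_disjoint {X Y : Coch} (hX : X ∈ onLines n c S) (hY : Y ∈ onLines n c S')
    (h : Disjoint S S') (i j j' : ℕ) : hor (X i j) = 0 ∨ hor (Y i j') = 0 ∧ deg2 (Y i j') = 0 := by
  by_cases hi : c i ∈ S
  · exact .inr <| hY.1 i j' <| Set.disjoint_left.mp h hi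
  · exact .inl (hX.1 i j hi).1

lemma ver_eq_zero_or_of_disjoint {X Y : Coch} (hX : X ∈ onLines n c S) (hY : Y ∈ onLines n c S')
    (h : Disjoint S S') (i i' j : ℕ) : ver (X i j) = 0 ∨ ver (Y i' j) = 0 ∧ deg2 (Y i' j) = 0 := by
  by_cases hj : c j ∈ S
  · exact .inr <| hY.2.1 i' j <| Set.disjoint_left.mp h hj
  · exact .inl (hX.2.1 i j hj).1

lemma hor_d_mul_ver_succ {X Y : Coch} (hdX : d X ∈ onLines n c S) (hY : Y ∈ onLines n c S')
    (hdY : d Y ∈ onLines n c S') (h : Disjoint S S') (i j : ℕ) :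
    hor (d X i j) * ver (Y (i + 1) j) = hor (d X i j) * ver (Y i j) := by
  have h2 := hor_eq_zero_or_of_disjoint hdX hdY h i j j
  have h0 := hor_eq_zero_or_of_disjoint hdX hY h i j j
  have h1 := hor_eq_zero_or_of_disjoint hdX hY h i j (j + 1)
  rcases eq_or_ne (hor (d X i j)) 0 with hz | hz
  · rw [hz, zero_mul, zero_mul]
  · have hcurl := (h2.resolve_left hz).2
    rw [d_apply, deg2_mk, (h0.resolve_left hz).1, (h1.resolve_left hz).1] at hcurl
    rw [show ver (Y (i + 1) j) = ver (Y i j) by linarith]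

lemma ver_d_mul_hor_succ {X Y : Coch} (hdX : d X ∈ onLines n c S) (hY : Y ∈ onLines n c S')
    (hdY : d Y ∈ onLines n c S') (h : Disjoint S S') (i j : ℕ) :
    ver (d X i j) * hor (Y i (j + 1)) = ver (d X i j) * hor (Y i j) := by
  have h2 := ver_eq_zero_or_of_disjoint hdX hdY h i i j
  have h0 := ver_eq_zero_or_of_disjoint hdX hY h i i j
  have h1 := ver_eq_zero_or_of_disjoint hdX hY h i (i + 1) j
  rcases eq_or_ne (ver (d X i j)) 0 with hz | hz
  · rw [hz, zero_mul, zero_mul]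
  · have hcurl := (h2.resolve_left hz).2
    rw [d_apply, deg2_mk, (h0.resolve_left hz).1, (h1.resolve_left hz).1] at hcurl
    rw [show hor (Y i (j + 1)) = hor (Y i j) by linarith]

section Leibniz

variable {I : Type*} {S : I → Set ℕ}

section DecidableEq

variable [DecidableEq I]

lemma prod_deg0_succ_left {A : I → Coch} (hS : Pairwise (Function.onFun Disjoint S))
    (hdA : ∀ t, d (A t) ∈ onLines n c (S t)) (s : Finset I) (i j : ℕ) :
    ∏ t ∈ s, deg0 (A t (i + 1) j) = ∏ t ∈ s, deg0 (A t i j) +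
      ∑ m ∈ s, hor (d (A m) i j) * ∏ t ∈ s.erase m, deg0 (A t i j) := by
  rw [← sub_eq_iff_eq_add', prod_sub_prod_of_forall_ne]
  · rfl
  · intro m _ m' _ hm hm'
    by_contra hne
    exact (hor_eq_zero_or_of_disjoint (hdA m) (hdA m') (hS hne) i j j).elim
      (fun h => hm (sub_eq_zero.mp h)) (fun h => hm' (sub_eq_zero.mp h.1))

lemma prod_deg0_succ_right {A : I → Coch} (hS : Pairwise (Function.onFun Disjoint S))
    (hdA : ∀ t, d (A t) ∈ onLines n c (S t)) (s : Finset I) (i j : ℕ) :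
    ∏ t ∈ s, deg0 (A t i (j + 1)) = ∏ t ∈ s, deg0 (A t i j) +
      ∑ m ∈ s, ver (d (A m) i j) * ∏ t ∈ s.erase m, deg0 (A t i j) := by
  rw [← sub_eq_iff_eq_add', prod_sub_prod_of_forall_ne]
  · rfl
  · intro m _ m' _ hm hm'
    by_contra hne
    exact (ver_eq_zero_or_of_disjoint (hdA m) (hdA m') (hS hne) i i j).elim
      (fun h => hm (sub_eq_zero.mp h)) (fun h => hm' (sub_eq_zero.mp h.1))

variable [Fintype I]

/-- The value on the square `(i, j)` of the coboundary of the degree `1` part of `A l` multiplied by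
the degree `0` parts of the other members of `A`. -/
def leibnizTerm (A : I → Coch) (l : I) (i j : ℕ) : ℤ :=
  deg2 (d (A l) i j) * ∏ t ∈ {l}ᶜ, deg0 (A t i j) +
    ∑ m ∈ {l}ᶜ, (hor (d (A m) i j) * ver (A l i j) - ver (d (A m) i j) * hor (A l i j)) *
      ∏ t ∈ {m, l}ᶜ, deg0 (A t i j)

lemma leibnizTerm_eq {A : I → Coch} (hS : Pairwise (Function.onFun Disjoint S))
    (hA : ∀ t, A t ∈ onLines n c (S t)) (hdA : ∀ t, d (A t) ∈ onLines n c (S t)) (l : I)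
    (i j : ℕ) :
    leibnizTerm A l i j =
      ((∏ t ∈ {l}ᶜ, deg0 (A t (i + 1) j)) * ver (A l (i + 1) j) -
        (∏ t ∈ {l}ᶜ, deg0 (A t i j)) * ver (A l i j)) -
      ((∏ t ∈ {l}ᶜ, deg0 (A t i (j + 1))) * hor (A l i (j + 1)) -
        (∏ t ∈ {l}ᶜ, deg0 (A t i j)) * hor (A l i j)) := by
  have hsum : ∑ m ∈ {l}ᶜ, (hor (d (A m) i j) * ver (A l i j) - ver (d (A m) i j) *
      hor (A l i j)) * ∏ t ∈ {m, l}ᶜ, deg0 (A t i j) =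
      (∑ m ∈ {l}ᶜ, hor (d (A m) i j) * ∏ t ∈ ({l}ᶜ : Finset I).erase m, deg0 (A t i j)) *
        ver (A l (i + 1) j) -
      (∑ m ∈ {l}ᶜ, ver (d (A m) i j) * ∏ t ∈ ({l}ᶜ : Finset I).erase m, deg0 (A t i j)) *
        hor (A l i (j + 1)) := by
    rw [sum_mul, sum_mul, ← sum_sub_distrib]
    refine sum_congr rfl fun m hm => ?_
    have hml : m ≠ l := by simpa using hm
    have herase : ({l}ᶜ : Finset I).erase m = {m, l}ᶜ := by ext; simp
    rw [herase, mul_right_comm, mul_right_comm _ _ (hor _),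
      hor_d_mul_ver_succ (hdA m) (hA l) (hdA l) (hS hml),
      ver_d_mul_hor_succ (hdA m) (hA l) (hdA l) (hS hml)]
    ring
  rw [leibnizTerm, hsum, prod_deg0_succ_left hS hdA, prod_deg0_succ_right hS hdA, d_apply, deg2_mk]
  ring

lemma sum_leibnizTerm {A : I → Coch} (hS : Pairwise (Function.onFun Disjoint S))
    (hA : ∀ t, A t ∈ onLines n c (S t)) (hdA : ∀ t, d (A t) ∈ onLines n c (S t)) (l : I) :
    ∑ i ∈ range n, ∑ j ∈ range n, leibnizTerm A l i j = 0 := by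
  simp only [leibnizTerm_eq hS hA hdA]
  exact sum_boundary_mul_eq_zero (f := fun i j => ∏ t ∈ {l}ᶜ, deg0 (A t i j))
    (h := fun i j => hor (A l i j)) (v := fun i j => ver (A l i j))
    (fun k => ((hA l).2.2 k).1.1) (fun k => ((hA l).2.2 k).1.2)
    (fun k => ((hA l).2.2 k).2.1) (fun k => ((hA l).2.2 k).2.2)

end DecidableEq

variable [Fintype I] [LinearOrder I]

/-- The integral over the grid `[0, n]²` of the degree `2` part of the ordered exterior product of a
family of cochains, whose factor `t` is subjected to `e t` grade involutions. -/
def integral (n : ℕ) (e : I → ℕ) : MultilinearMap ℤ (fun _ : I => Coch) ℤ :=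
  ∑ i ∈ range n, ∑ j ∈ range n,
    (wedgeTop e).compLinearMap fun _ => LinearMap.proj j ∘ₗ LinearMap.proj i

lemma integral_apply (n : ℕ) (e : I → ℕ) (A : I → Coch) :
    integral n e A = ∑ i ∈ range n, ∑ j ∈ range n, wedgeTop e fun t => A t i j := by
  simp only [integral, _root_.sum_apply, MultilinearMap.compLinearMap_apply]
  rfl

lemma integral_update (n : ℕ) (e : I → ℕ) (A : I → Coch) (m : I) (X : Coch) :
    integral n e (Function.update A m X) = ∑ i ∈ range n, ∑ j ∈ range n,
      wedgeTop e (Function.update (fun t => A t i j) m (X i j)) := by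
  rw [integral_apply]
  refine sum_congr rfl fun i _ => sum_congr rfl fun j _ => congrArg _ ?_
  exact Function.comp_update (fun Y : Coch => Y i j) A m X

lemma integral_congr_pairSign {e e' : I → ℕ}
    (h : ∀ i l, i ≠ l → pairSign e i l = pairSign e' i l) : integral n e = integral n e' := by
  rw [integral, integral, wedgeTop_congr_pairSign h]

lemma integral_update_involute (e : I → ℕ) (A : I → Coch) (m : I) (X : Coch) :
    integral n e (Function.update A m (involute X)) =
      integral n (Function.update e m (e m + 1)) (Function.update A m X) := by
  simp only [integral_update, involute_apply, wedgeTop_update_involute]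

lemma sum_wedgeTop_update_d (e : I → ℕ) (A : I → Coch) (i j : ℕ) :
    ∑ m, (-1) ^ e m * wedgeTop (fun t => e t + if m < t then 1 else 0)
      (Function.update (fun t => A t i j) m (d (involute (A m)) i j)) =
      -∑ l, (-1) ^ e l * leibnizTerm A l i j := by
  have hsign (m l : I) (h : m ≠ l) :
      (-1) ^ e m * pairSign (fun t => e t + if m < t then 1 else 0) m l = -(-1) ^ e l := by
    rcases lt_or_gt_of_ne h with h | h <;>
      simp [pairSign, h, h.not_gt, pow_add, ← mul_assoc, ← mul_pow]
  have hcell (m : I) : d (involute (A m)) i j =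
      (0, hor (d (A m) i j), ver (d (A m) i j), -deg2 (d (A m) i j)) := by
    refine Cell.ext ?_ ?_ ?_ ?_ <;>
      simp [involute_apply, d_apply, sub_eq_add_neg, add_comm, add_left_comm]
  simp only [hcell, wedgeTop_update_of_deg0_eq_zero _ _ _ (deg0_mk ..), leibnizTerm, hor_mk,
    ver_mk, deg2_mk, mul_add, sum_add_distrib, neg_add]
  congr 1
  · rw [← sum_neg_distrib]
    exact sum_congr rfl fun m _ => by ring
  · simp only [mul_sum]
    rw [sum_comm' (t' := univ) (s' := fun l => {l}ᶜ) (by simp [eq_comm]), ← sum_neg_distrib]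
    refine sum_congr rfl fun l _ => ?_
    rw [← sum_neg_distrib]
    refine sum_congr rfl fun m hm => ?_
    have hml : m ≠ l := by simpa using hm
    rw [← mul_assoc, ← mul_assoc, hsign m l hml]
    ring

/-- The Leibniz rule combined with Stokes' theorem. Since the cochains vary along disjoint sets of
lines, there is no correction term for the discrete product. -/
theorem sum_integral_update_d {A : I → Coch} (hS : Pairwise (Function.onFun Disjoint S))
    (hA : ∀ t, A t ∈ onLines n c (S t)) (hdA : ∀ t, d (A t) ∈ onLines n c (S t)) (e : I → ℕ) :
    ∑ m, (-1) ^ e m * integral n (fun t => e t + if m < t then 1 else 0)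
      (Function.update A m (d (involute (A m)))) = 0 := by
  have hcomm (f : I → ℕ → ℕ → ℤ) :
      ∑ m, (-1) ^ e m * ∑ i ∈ range n, ∑ j ∈ range n, f m i j =
        ∑ i ∈ range n, ∑ j ∈ range n, ∑ m, (-1) ^ e m * f m i j := by
    simp only [mul_sum]
    rw [sum_comm]
    exact sum_congr rfl fun i _ => sum_comm
  simp only [integral_update]
  rw [hcomm]
  simp only [sum_wedgeTop_update_d, sum_neg_distrib]
  rw [← hcomm, neg_eq_zero]
  exact sum_eq_zero fun l _ => by rw [sum_leibnizTerm hS hA hdA, mul_zero]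

end Leibniz

end Coch

namespace Coch

open Cell

/-- The cochains concentrated in degree `1`. -/
def degreeOne : AddSubgroup Coch where
  carrier := {X | ∀ i j, deg0 (X i j) = 0 ∧ deg2 (X i j) = 0}
  zero_mem' := by simp
  add_mem' hX hY i j := by simp [hX i j, hY i j]
  neg_mem' hX i j := by simp [hX i j]

/-- The cochains concentrated in degree `2`. -/
def degreeTwo : AddSubgroup Coch where
  carrier := {X | ∀ i j, deg0 (X i j) = 0 ∧ hor (X i j) = 0 ∧ ver (X i j) = 0}
  zero_mem' := by simp
  add_mem' hX hY i j := by simp [hX i j, hY i j]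
  neg_mem' hX i j := by simp [hX i j]

lemma involute_of_mem_degreeOne {X : Coch} (hX : X ∈ degreeOne) : involute X = -X := by
  funext i j
  refine Cell.ext ?_ ?_ ?_ ?_ <;> simp [involute_apply, hX i j]

lemma d_involute_of_mem_degreeTwo {X : Coch} (hX : X ∈ degreeTwo) : d (involute X) = 0 := by
  funext i j
  refine Cell.ext ?_ ?_ ?_ ?_ <;>
    simp [d_apply, involute_apply, hX i j, hX (i + 1) j, hX i (j + 1)]

/-- The degree `0` cochain obtained from the degree `1` part of a cochain by summation along rows,
starting from the left boundary. -/
def potential : Coch →+ Coch :=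
  AddMonoidHom.mk' (fun X i j => (∑ k ∈ range i, hor (X k j), 0, 0, 0)) fun X Y => by
    funext i j
    refine Cell.ext ?_ ?_ ?_ ?_ <;> simp [sum_add_distrib]

lemma potential_apply (X : Coch) (i j : ℕ) :
    potential X i j = (∑ k ∈ range i, hor (X k j), 0, 0, 0) := rfl

lemma involute_potential (X : Coch) : involute (potential X) = potential X := by
  funext i j
  refine Cell.ext ?_ ?_ ?_ ?_ <;> simp [involute_apply, potential_apply]

lemma d_potential {X : Coch} (hX : X ∈ degreeOne) (hdX : d X = 0) (hX0 : ∀ j, ver (X 0 j) = 0) :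
    d (potential X) = X := by
  have hver (i j : ℕ) :
      ∑ k ∈ range i, hor (X k (j + 1)) - ∑ k ∈ range i, hor (X k j) = ver (X i j) := by
    induction i with
    | zero => simp [hX0]
    | succ i ih =>
      have hcurl : deg2 (d X i j) = 0 := by rw [hdX]; rfl
      rw [d_apply, deg2_mk] at hcurl
      rw [sum_range_succ, sum_range_succ]
      linarith
  funext i j
  refine Cell.ext ?_ ?_ ?_ ?_
  · rw [d_apply, (hX i j).1, deg0_mk]
  · simp [d_apply, potential_apply, sum_range_succ]
  · simpa [d_apply, potential_apply] using hver i j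
  · simp [d_apply, potential_apply, (hX i j).2]

variable {n : ℕ} {c : ℕ → ℕ} {S : Set ℕ}

lemma potential_mem_onLines (X : Coch) : potential X ∈ onLines n c S := by
  refine ⟨?_, ?_, ?_⟩ <;> simp [potential_apply]

end Coch

/-- The alternating sum of `g` over the lists obtained from `l` by omitting one entry. -/
def listBdry {M : Type*} [AddCommGroup M] (g : List ℕ → M) (l : List ℕ) : M :=
  ∑ k ∈ range l.length, (-1 : ℤ) ^ k • g (l.eraseIdx k)

lemma listBdry_eq_zero {M : Type*} [AddCommGroup M] {g : List ℕ → M} {l : List ℕ}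
    (h : ∀ k < l.length, g (l.eraseIdx k) = 0) : listBdry g l = 0 :=
  sum_eq_zero fun k hk => by rw [h k (mem_range.mp hk), smul_zero]

lemma listBdry_mem {M : Type*} [AddCommGroup M] {g : List ℕ → M} {l : List ℕ} {N : AddSubgroup M}
    (h : ∀ k < l.length, g (l.eraseIdx k) ∈ N) : listBdry g l ∈ N :=
  N.sum_mem fun k hk => N.zsmul_mem (h k (mem_range.mp hk)) _

lemma listBdry_of_length_gt {M : Type*} [AddCommGroup M] {g : List ℕ → M} {N : ℕ}
    (hg : ∀ l : List ℕ, N < l.length → g l = 0) {l : List ℕ} (hl : N + 1 < l.length) :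
    listBdry g l = 0 :=
  listBdry_eq_zero fun k hk => hg _ (by rw [List.length_eraseIdx_of_lt hk]; omega)

/-- A face of the simplicial complex spanned by vertices in four groups having at most one vertex in
each group; a vertex is given by its label. -/
abbrev Face : Type := Fin 4 → Option ℕ

namespace Face

/-- The list of labels of a face. -/
def labels (b : Face) : List ℕ :=
  (b 0).toList ++ ((b 1).toList ++ ((b 2).toList ++ (b 3).toList))

/-- The number of labels preceding the one in group `s`. -/
def pos (b : Face) (s : Fin 4) : ℕ := #{r | r < s ∧ (b r).isSome}

/-- The face obtained by removing the label in group `s`. -/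
def del (b : Face) (s : Fin 4) : Face := Function.update b s none

lemma mem_labels {b : Face} {x : ℕ} : x ∈ labels b ↔ ∃ s, b s = some x := by
  simp [labels, Fin.exists_fin_succ]

lemma labels_del_subset (b : Face) (s : Fin 4) : (b.del s).labels ⊆ b.labels := fun x hx => by
  obtain ⟨t, ht⟩ := mem_labels.mp hx
  rcases eq_or_ne t s with rfl | hts
  · simp [del] at ht
  · exact mem_labels.mpr ⟨t, by rwa [del, Function.update_of_ne hts] at ht⟩

lemma listBdry_labels {M : Type*} [AddCommGroup M] (g : List ℕ → M) (b : Face) :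
    listBdry g b.labels =
      ∑ s, (if (b s).isSome then (-1) ^ b.pos s else 0 : ℤ) • g (b.del s).labels := by
  have hpos (s : Fin 4) : b.pos s = ∑ r, if r < s ∧ (b r).isSome then 1 else 0 := card_filter _ _
  simp only [Fin.sum_univ_four, hpos, labels, del, listBdry]
  rcases h0 : b 0 with _ | x0 <;> rcases h1 : b 1 with _ | x1 <;> rcases h2 : b 2 with _ | x2 <;>
    rcases h3 : b 3 with _ | x3 <;> simp [h0, h1, h2, h3, sum_range_succ]

end Face

/-! ### Discretised drawings and their moves -/

open Coch

/-- A discretised drawing of the complete graph on the labels below `R`, seen from all points of a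
grid at once. The degree `2` cochain `vertex a` marks the square containing the point `a`, and the
degree `1` cochain `edge a b` records the signed crossings of the curve from `a` to `b` with the
edges of the grid. In the columns and rows of class `a` only the label `a` is visible. -/
structure Stage (n R : ℕ) (c : ℕ → ℕ) where
  vertex : ℕ → Coch
  edge : ℕ → ℕ → Coch
  vertex_mem_degreeTwo : ∀ a, vertex a ∈ degreeTwo
  vertex_mem_onLines : ∀ a < R, vertex a ∈ onLines n c {a}
  edge_mem_degreeOne : ∀ a b, edge a b ∈ degreeOne
  edge_mem_onLines : ∀ a b, a < b → b < R → edge a b ∈ onLines n c {a, b}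
  d_edge : ∀ a b, a < b → b < R → d (edge a b) = vertex a - vertex b

/-- The lists of labels below `R` in increasing order. -/
def IsAdmissible (R : ℕ) (l : List ℕ) : Prop := l.Pairwise (· < ·) ∧ ∀ x ∈ l, x < R

lemma IsAdmissible.eraseIdx {R : ℕ} {l : List ℕ} (hl : IsAdmissible R l) (k : ℕ) :
    IsAdmissible R (l.eraseIdx k) :=
  ⟨hl.1.sublist (List.eraseIdx_sublist l k), fun x hx => hl.2 x (List.mem_of_mem_eraseIdx hx)⟩

lemma onLines_eraseIdx_le {n : ℕ} {c : ℕ → ℕ} (l : List ℕ) (k : ℕ) :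
    onLines n c {x | x ∈ l.eraseIdx k} ≤ onLines n c {x | x ∈ l} :=
  onLines_mono fun _ hx => List.mem_of_mem_eraseIdx hx

namespace Stage

variable {n R : ℕ} {c : ℕ → ℕ} (T : Stage n R c)

/-- The cochain recording how the points of the grid are covered by the image of a face: its
vertices for a point, its crossings for a curve and the winding numbers around the grid points for a
closed triangle. -/
def part : List ℕ → Coch
  | [a] => T.vertex a
  | [a, b] => T.edge a b
  | [a, b, e] => potential (T.edge b e - T.edge a e + T.edge a b)
  | _ => 0

lemma part_of_length_gt {l : List ℕ} (hl : 3 < l.length) : T.part l = 0 := by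
  match l, hl with
  | _ :: _ :: _ :: _ :: _, _ => rfl

lemma d_part_triple {a b e : ℕ} (hab : a < b) (hbe : b < e) (he : e < R) :
    d (T.part [a, b, e]) = T.edge b e - T.edge a e + T.edge a b := by
  refine d_potential (add_mem (sub_mem (T.edge_mem_degreeOne _ _) (T.edge_mem_degreeOne _ _))
    (T.edge_mem_degreeOne _ _)) ?_ fun j => ?_
  · rw [map_add, map_sub, T.d_edge a b hab (hbe.trans he), T.d_edge b e hbe he,
      T.d_edge a e (hab.trans hbe) he]
    abel
  · have hver {x y : ℕ} (hxy : x < y) (hy : y < R) : Cell.ver (T.edge x y 0 j) = 0 :=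
      ((T.edge_mem_onLines x y hxy hy).2.2 j).2.1
    simp [hver hab (hbe.trans he), hver hbe he, hver (hab.trans hbe) he]

lemma listBdry_part {l : List ℕ} (hl : IsAdmissible R l) :
    listBdry T.part l = d (involute (T.part l)) := by
  obtain ⟨hsorted, hlt⟩ := hl
  match l, hsorted, hlt with
  | [], _, _ => simp [listBdry, part]
  | [a], _, _ =>
    simp [listBdry, part, d_involute_of_mem_degreeTwo (T.vertex_mem_degreeTwo a)]
  | [a, b], hsorted, hlt =>
    have hd := T.d_edge a b (by simpa using hsorted) (hlt b (by simp))
    simp only [listBdry, part, involute_of_mem_degreeOne (T.edge_mem_degreeOne a b), map_neg, hd]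
    simp [sum_range_succ, sub_eq_add_neg]
  | [a, b, e], hsorted, hlt =>
    simp only [List.pairwise_cons, List.mem_cons] at hsorted
    have hd := T.d_part_triple (hsorted.1 b (by simp)) (hsorted.2.1 e (by simp)) (hlt e (by simp))
    rw [show involute (T.part [a, b, e]) = T.part [a, b, e] from involute_potential _, hd]
    simp [listBdry, sum_range_succ, part, sub_eq_add_neg]
  | [a, b, e, f], _, _ =>
    simp only [listBdry, part, map_zero, List.length_cons, List.length_nil, sum_range_succ]
    simp only [range_zero, map_add, map_sub, sum_empty, pow_zero, List.eraseIdx_zero,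
      List.tail_cons, List.eraseIdx_cons_succ, even_two, Even.neg_pow, one_pow, smul_add, one_smul,
      zero_add, Int.reduceNeg, pow_one, neg_smul, neg_sub, Int.reducePow]
    abel
  | a :: b :: e :: f :: g :: l, _, _ =>
    rw [listBdry_of_length_gt (fun _ => T.part_of_length_gt) (by simp)]
    simp [part]

lemma part_mem_onLines {l : List ℕ} (hl : IsAdmissible R l) :
    T.part l ∈ onLines n c {x | x ∈ l} := by
  obtain ⟨hsorted, hlt⟩ := hl
  match l, hsorted, hlt with
  | [], _, _ => exact zero_mem _
  | [a], _, hlt => simpa [part] using T.vertex_mem_onLines a (hlt a (by simp))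
  | [a, b], hsorted, hlt =>
    have hset : {x | x ∈ [a, b]} = ({a, b} : Set ℕ) := by
      ext
      simp
    rw [hset]
    exact T.edge_mem_onLines a b (by simpa using hsorted) (hlt b (by simp))
  | [_, _, _], _, _ => exact potential_mem_onLines _
  | _ :: _ :: _ :: _ :: _, _, _ => exact zero_mem _

lemma d_part_mem_onLines {l : List ℕ} (hl : IsAdmissible R l) :
    d (T.part l) ∈ onLines n c {x | x ∈ l} := by
  rw [← involute_mem_onLines_iff, ← neg_mem_iff, ← d_involute, ← T.listBdry_part hl]
  exact listBdry_mem fun k _ => onLines_eraseIdx_le l k (T.part_mem_onLines (hl.eraseIdx k))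

end Stage

/-- The passage from a stage `T` to a stage `T'` by dragging the single label `u` to another place,
the cochain `sweep` recording the crossings of the grid by this motion. -/
structure Move {n R : ℕ} {c : ℕ → ℕ} (T T' : Stage n R c) (u : ℕ) where
  sweep : Coch
  vertex_eq : ∀ a, a ≠ u → T'.vertex a = T.vertex a
  edge_eq : ∀ a b, a ≠ u → b ≠ u → T'.edge a b = T.edge a b
  sweep_mem_degreeOne : sweep ∈ degreeOne
  sweep_mem_onLines : sweep ∈ onLines n c {u}
  d_sweep : d sweep = T.vertex u - T'.vertex u

namespace Move

variable {n R : ℕ} {c : ℕ → ℕ} {T T' : Stage n R c} {u : ℕ} (D : Move T T' u)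

/-- The crossings of the grid by the label `a` during a move. -/
def sweepAt (a : ℕ) : Coch := if a = u then D.sweep else 0

lemma sweepAt_of_ne {a : ℕ} (ha : a ≠ u) : D.sweepAt a = 0 := if_neg ha

lemma sweepAt_mem_degreeOne (a : ℕ) : D.sweepAt a ∈ degreeOne := by
  unfold sweepAt
  split_ifs
  exacts [D.sweep_mem_degreeOne, zero_mem _]

lemma sweepAt_mem_onLines (a : ℕ) : D.sweepAt a ∈ onLines n c {a} := by
  unfold sweepAt
  split_ifs with ha
  exacts [ha ▸ D.sweep_mem_onLines, zero_mem _]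

lemma d_sweepAt (a : ℕ) : d (D.sweepAt a) = T.vertex a - T'.vertex a := by
  unfold sweepAt
  split_ifs with ha
  · rw [ha, D.d_sweep]
  · rw [D.vertex_eq a ha, sub_self, map_zero]

/-- The closed degree `1` cochain recording the crossings of the grid by the boundary of the strip
swept by the edge from `a` to `b` during a move. -/
def strip (a b : ℕ) : Coch := T'.edge a b - T.edge a b + D.sweepAt a - D.sweepAt b

lemma d_potential_strip {a b : ℕ} (hab : a < b) (hb : b < R) :
    d (potential (D.strip a b)) = D.strip a b := by
  refine d_potential (sub_mem (add_mem (sub_mem (T'.edge_mem_degreeOne a b)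
    (T.edge_mem_degreeOne a b)) (D.sweepAt_mem_degreeOne a)) (D.sweepAt_mem_degreeOne b)) ?_
    fun j => ?_
  · rw [strip, map_sub, map_add, map_sub, D.d_sweepAt, D.d_sweepAt, T.d_edge a b hab hb,
      T'.d_edge a b hab hb]
    abel
  · simp [strip, ((T.edge_mem_onLines a b hab hb).2.2 j).2.1,
      ((T'.edge_mem_onLines a b hab hb).2.2 j).2.1, ((D.sweepAt_mem_onLines a).2.2 j).2.1,
      ((D.sweepAt_mem_onLines b).2.2 j).2.1]

/-- The cochain homotopy between the cochains of the faces before and after a move. -/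
def homotopy : List ℕ → Coch
  | [a] => -D.sweepAt a
  | [a, b] => potential (D.strip a b)
  | _ => 0

lemma homotopy_of_length_gt {l : List ℕ} (hl : 2 < l.length) : D.homotopy l = 0 := by
  match l, hl with
  | _ :: _ :: _ :: _, _ => rfl

lemma homotopy_of_notMem {l : List ℕ} (hu : u ∉ l) : D.homotopy l = 0 := by
  match l, hu with
  | [], _ => rfl
  | [a], hu =>
    have ha : a ≠ u := by grind
    rw [homotopy, D.sweepAt_of_ne ha, neg_zero]
  | [a, b], hu =>
    have ha : a ≠ u := by grind
    have hb : b ≠ u := by grind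
    simp [homotopy, strip, D.edge_eq a b ha hb, D.sweepAt_of_ne ha, D.sweepAt_of_ne hb]
  | _ :: _ :: _ :: _, _ => rfl

lemma part_eq {l : List ℕ} (hl : IsAdmissible R l) :
    T'.part l = T.part l + d (D.homotopy l) + involute (listBdry D.homotopy l) := by
  obtain ⟨hsorted, hlt⟩ := hl
  match l, hsorted, hlt with
  | [], _, _ => simp [listBdry, Stage.part, homotopy]
  | [a], _, _ => simp [listBdry, Stage.part, homotopy, D.d_sweepAt]
  | [a, b], hsorted, hlt =>
    have hd := D.d_potential_strip (a := a) (b := b) (by simpa using hsorted) (hlt b (by simp))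
    have hbdry : involute (listBdry D.homotopy [a, b]) = D.sweepAt b - D.sweepAt a := by
      rw [involute_of_mem_degreeOne]
      · simp [listBdry, sum_range_succ, homotopy, sub_eq_add_neg, add_comm]
      · refine listBdry_mem fun k hk => ?_
        simp only [List.length_cons, List.length_nil] at hk
        interval_cases k <;> exact neg_mem (D.sweepAt_mem_degreeOne _)
    rw [hbdry, homotopy, hd, strip, Stage.part, Stage.part]
    abel
  | [a, b, e], _, _ =>
    have hbdry : listBdry D.homotopy [a, b, e] =
        potential (D.strip b e - D.strip a e + D.strip a b) := by
      simp [listBdry, sum_range_succ, homotopy, sub_eq_add_neg]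
    rw [hbdry, involute_potential]
    simp only [homotopy, Stage.part, map_zero, add_zero, ← map_add, strip]
    exact congrArg _ (by abel)
  | a :: b :: e :: f :: l, _, _ =>
    rw [listBdry_of_length_gt (fun _ => D.homotopy_of_length_gt) (by simp)]
    simp [homotopy, Stage.part]

lemma part_eq_of_notMem (D : Move T T' u) {l : List ℕ} (hl : IsAdmissible R l) (hu : u ∉ l) :
    T'.part l = T.part l := by
  have hbdry : listBdry D.homotopy l = 0 := listBdry_eq_zero fun k _ =>
    D.homotopy_of_notMem fun hk => hu (List.mem_of_mem_eraseIdx hk)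
  rw [D.part_eq hl, D.homotopy_of_notMem hu, hbdry, map_zero, map_zero, add_zero, add_zero]

lemma homotopy_mem_onLines (l : List ℕ) : D.homotopy l ∈ onLines n c {x | x ∈ l} := by
  match l with
  | [] => exact zero_mem _
  | [a] => simpa [homotopy] using D.sweepAt_mem_onLines a
  | [_, _] => exact potential_mem_onLines _
  | _ :: _ :: _ :: _ => exact zero_mem _

lemma d_homotopy_mem_onLines {l : List ℕ} (hl : IsAdmissible R l) :
    d (D.homotopy l) ∈ onLines n c {x | x ∈ l} := by
  have hd : d (D.homotopy l) = T'.part l - T.part l - involute (listBdry D.homotopy l) := by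
    rw [D.part_eq hl]
    abel
  rw [hd]
  refine sub_mem (sub_mem (T'.part_mem_onLines hl) (T.part_mem_onLines hl)) ?_
  exact involute_mem_onLines <| listBdry_mem fun k _ =>
    onLines_eraseIdx_le l k (D.homotopy_mem_onLines _)

end Move

lemma Coch.integral_update_involute_of_forall_le {I : Type*} [Fintype I] [LinearOrder I] {n : ℕ}
    {z : I} (hz : ∀ i, z ≤ i) (e : I → ℕ) (A : I → Coch) (X : Coch) :
    integral n (fun t => e t + if z < t then 1 else 0) (Function.update A z (involute X)) =
      integral n e (Function.update A z X) := by
  rw [integral_update_involute]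
  refine congrFun (congrArg _ <| integral_congr_pairSign fun i l _ => ?_) _
  have hsucc (t : I) : Function.update (fun t => e t + if z < t then 1 else 0) z
      ((e z + if z < z then 1 else 0) + 1) t = e t + 1 := by
    rcases eq_or_ne t z with rfl | ht
    · simp
    · simp [ht, lt_of_le_of_ne (hz t) ht.symm]
  rw [pairSign, pairSign, hsucc, hsucc, show e i + 1 + (e l + 1) = e i + e l + 2 * 1 by ring]
  simp [pow_add]

namespace Face

variable {I : Type*}

/-- The sign with which the removal of the label in group `s` from the face `m` enters the
boundary of the join of the faces, `0` if there is no such label. -/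
def delSign (e : I → ℕ) (b : I → Face) (m : I) (s : Fin 4) : ℤ :=
  if (b m s).isSome then (-1) ^ (e m + (b m).pos s) else 0

lemma delSign_eq (e : I → ℕ) (b : I → Face) (m : I) (s : Fin 4) :
    delSign e b m s = (-1) ^ e m * if (b m s).isSome then (-1) ^ (b m).pos s else 0 := by
  unfold delSign
  split_ifs <;> simp [pow_add]

/-- The family of faces obtained by removing the label in group `s` from the face `m`. -/
def delAt [LinearOrder I] (b : I → Face) (m : I) (s : Fin 4) : I → Face :=
  Function.update b m ((b m).del s)

end Face

namespace Move

open Coch Face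

variable {I : Type*} [LinearOrder I] {n R : ℕ} {c : ℕ → ℕ} {T T' : Stage n R c} {u : ℕ}

/-- The cochains of a family of faces, with the homotopy of a move in place of the face `z`. -/
def fam (D : Move T T' u) (z : I) (b : I → Face) (t : I) : Coch :=
  if t = z then D.homotopy (b t).labels else T.part (b t).labels

variable (D : Move T T' u) (z : I) {b : I → Face} {e : I → ℕ}

lemma fam_self (b : I → Face) : D.fam z b z = D.homotopy (b z).labels := if_pos rfl

lemma fam_of_ne {z m : I} (hm : m ≠ z) (b : I → Face) : D.fam z b m = T.part (b m).labels :=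
  if_neg hm

lemma fam_delAt (b : I → Face) (m : I) (s : Fin 4) :
    D.fam z (delAt b m s) = Function.update (D.fam z b) m
      (if m = z then D.homotopy ((b m).del s).labels else T.part ((b m).del s).labels) := by
  funext t
  rcases eq_or_ne t m with rfl | ht
  · simp [fam, delAt]
  · simp [fam, delAt, ht]

lemma fam_mem_onLines (hadm : ∀ t, IsAdmissible R (b t).labels) (t : I) :
    D.fam z b t ∈ onLines n c {x | x ∈ (b t).labels} := by
  unfold fam
  split_ifs
  exacts [D.homotopy_mem_onLines _, T.part_mem_onLines (hadm t)]

lemma d_fam_mem_onLines (hadm : ∀ t, IsAdmissible R (b t).labels) (t : I) :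
    d (D.fam z b t) ∈ onLines n c {x | x ∈ (b t).labels} := by
  unfold fam
  split_ifs
  exacts [D.d_homotopy_mem_onLines (hadm t), T.d_part_mem_onLines (hadm t)]

lemma part_eq_update (D : Move T T' u) (hadm : ∀ t, IsAdmissible R (b t).labels)
    (hdisj : Pairwise (Function.onFun Disjoint fun t => {x | x ∈ (b t).labels}))
    (hu : u ∈ (b z).labels) :
    (fun t => T'.part (b t).labels) =
      Function.update (fun t => T.part (b t).labels) z (T'.part (b z).labels) := by
  funext t
  rcases eq_or_ne t z with rfl | ht
  · simp
  · rw [Function.update_of_ne ht]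
    exact D.part_eq_of_notMem (hadm t) fun hut => Set.disjoint_left.mp (hdisj ht) hut hu

lemma update_part_eq_update_fam (b : I → Face) (X : Coch) :
    Function.update (fun t => T.part (b t).labels) z X = Function.update (D.fam z b) z X := by
  funext t
  rcases eq_or_ne t z with rfl | ht
  · simp
  · simp [fam, ht]

variable [Fintype I] {z}

lemma integral_update_fam_listBdry (hz : ∀ i, z ≤ i) (he : e z = 0) (b : I → Face) :
    integral n e (Function.update (D.fam z b) z
        (involute (listBdry D.homotopy (b z).labels))) =
      ∑ s, delSign e b z s * integral n (fun t => e t + if z < t then 1 else 0)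
        (D.fam z (delAt b z s)) := by
  rw [← integral_update_involute_of_forall_le hz, involute_involute, listBdry_labels,
    MultilinearMap.map_update_sum]
  refine sum_congr rfl fun s _ => ?_
  rw [MultilinearMap.map_update_smul, smul_eq_mul, delSign_eq, he, pow_zero, one_mul, fam_delAt,
    if_pos rfl]

lemma integral_update_fam_d_involute (hadm : ∀ t, IsAdmissible R (b t).labels) {m : I}
    (hm : m ≠ z) :
    (-1) ^ e m * integral n (fun t => e t + if m < t then 1 else 0)
        (Function.update (D.fam z b) m (d (involute (D.fam z b m)))) =
      ∑ s, delSign e b m s * integral n (fun t => e t + if m < t then 1 else 0)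
        (D.fam z (delAt b m s)) := by
  rw [D.fam_of_ne hm, ← T.listBdry_part (hadm m), listBdry_labels,
    MultilinearMap.map_update_sum, mul_sum]
  refine sum_congr rfl fun s _ => ?_
  rw [MultilinearMap.map_update_smul, smul_eq_mul, delSign_eq, mul_assoc, fam_delAt, if_neg hm]

lemma integral_update_fam_d (hz : ∀ i, z ≤ i) (he : e z = 0)
    (hadm : ∀ t, IsAdmissible R (b t).labels)
    (hdisj : Pairwise (Function.onFun Disjoint fun t => {x | x ∈ (b t).labels})) :
    integral n e (Function.update (D.fam z b) z (d (D.homotopy (b z).labels))) =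
      ∑ m ∈ univ.erase z, ∑ s, delSign e b m s *
        integral n (fun t => e t + if m < t then 1 else 0) (D.fam z (delAt b m s)) := by
  have hstokes := sum_integral_update_d hdisj (D.fam_mem_onLines z hadm)
    (D.d_fam_mem_onLines z hadm) e
  rw [← add_sum_erase _ _ (mem_univ z), he, pow_zero, one_mul, d_involute,
    MultilinearMap.map_update_neg, integral_update_involute_of_forall_le hz, fam_self,
    neg_add_eq_zero] at hstokes
  rw [hstokes]
  exact sum_congr rfl fun m hm => D.integral_update_fam_d_involute hadm (ne_of_mem_erase hm)

/-- Dragging the label `u` changes the integral of a family of faces by the integrals over the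
boundary of the family, with the homotopy of the move at the face of `u`. -/
theorem integral_part_eq (hz : ∀ i, z ≤ i) (he : e z = 0)
    (hadm : ∀ t, IsAdmissible R (b t).labels)
    (hdisj : Pairwise (Function.onFun Disjoint fun t => {x | x ∈ (b t).labels}))
    (hu : u ∈ (b z).labels) :
    integral n e (fun t => T'.part (b t).labels) = integral n e (fun t => T.part (b t).labels) +
      ∑ m, ∑ s, delSign e b m s *
        integral n (fun t => e t + if m < t then 1 else 0) (D.fam z (delAt b m s)) := by
  rw [D.part_eq_update z hadm hdisj hu, D.part_eq (hadm z), MultilinearMap.map_update_add,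
    MultilinearMap.map_update_add, Function.update_eq_self (f := fun t => T.part (b t).labels),
    D.update_part_eq_update_fam, D.update_part_eq_update_fam,
    D.integral_update_fam_d hz he hadm hdisj, D.integral_update_fam_listBdry hz he, add_assoc,
    sum_erase_add _ _ (mem_univ z)]

end Move

/-! ### Signs and colourings -/

/-- The Iverson bracket of a proposition. -/
def iverson (P : Prop) [Decidable P] : ℕ := if P then 1 else 0

lemma iverson_false {P : Prop} [Decidable P] (h : ¬P) : iverson P = 0 := if_neg h

lemma iverson_lt_add_iverson_gt_add_iverson_eq {α : Type*} [LinearOrder α] (a b : α) :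
    iverson (a < b) + iverson (b < a) + iverson (b = a) = 1 := by
  unfold iverson
  rcases lt_trichotomy a b with h | rfl | h
  · simp [h, h.not_gt, h.ne']
  · simp
  · simp [h, h.not_gt, h.ne]

lemma iverson_not_add_iverson {P : Prop} [Decidable P] : iverson (¬P) + iverson P = 1 := by
  by_cases h : P <;> simp [iverson, h]

lemma neg_one_pow_eq_of_mod_two_eq {a b : ℕ} (h : a % 2 = b % 2) : (-1 : ℤ) ^ a = (-1) ^ b :=
  neg_one_pow_congr (by rw [Nat.even_iff, Nat.even_iff, h])

lemma neg_one_pow_eq_neg_of_mod_two {a b : ℕ} (h : (a + b) % 2 = 1) :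
    (-1 : ℤ) ^ a = -(-1) ^ b := by
  rw [neg_one_pow_eq_of_mod_two_eq (b := b + 1) (by omega), pow_succ, mul_neg_one]

section Signs

variable {p : ℕ}

/-- The exponent of the sign of a colouring, where `x` consists of the colour of the label `0` and
the colours omitted by the three blocks. -/
def orientation (x : Fin 4 → Fin p) : ℕ :=
  ∑ s, (x s : ℕ) + ∑ s, ∑ r, if r < s then iverson (x s < x r) else 0

/-- The Koszul exponent of the face of colour `i`, congruent modulo `2` to the number of labels of
smaller colour. -/
def koszul (x : Fin 4 → Fin p) (i : Fin p) : ℕ := i + ∑ s, iverson (x s < i)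

/-- The position of the label from group `s` in the face of colour `m`. -/
def labelPos (x : Fin 4 → Fin p) (m : Fin p) (s : Fin 4) : ℕ :=
  ∑ r, if r < s then iverson (if r = 0 then x r = m else x r ≠ m) else 0

lemma koszul_update_add (x : Fin 4 → Fin p) (s : Fin 4) (m i : Fin p) :
    koszul (Function.update x s m) i + iverson (x s < i) = koszul x i + iverson (m < i) := by
  have hrest : ∑ t ∈ univ.erase s, iverson (Function.update x s m t < i) =
      ∑ t ∈ univ.erase s, iverson (x t < i) :=
    sum_congr rfl fun t ht => by rw [Function.update_of_ne (ne_of_mem_erase ht)]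
  rw [koszul, koszul, ← add_sum_erase _ _ (mem_univ s), hrest, Function.update_self,
    ← add_sum_erase (f := fun s => iverson (x s < i)) _ (mem_univ s)]
  omega

lemma orientation_add_koszul_add_labelPos_update (x : Fin 4 → Fin p) (a : Fin 3) {m : Fin p}
    (hm : m ≠ x a.succ) :
    (orientation x + koszul x m + labelPos x m a.succ +
      (orientation (Function.update x a.succ m) +
        koszul (Function.update x a.succ m) (x a.succ) +
        labelPos (Function.update x a.succ m) (x a.succ) a.succ)) % 2 = 1 := by
  have hm' (s : Fin 4) := iverson_lt_add_iverson_gt_add_iverson_eq m (x s)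
  have hx (s : Fin 4) := iverson_lt_add_iverson_gt_add_iverson_eq (x a.succ) (x s)
  have hm_ne (s : Fin 4) := iverson_not_add_iverson (P := x s = m)
  have hx_ne (s : Fin 4) := iverson_not_add_iverson (P := x s = x a.succ)
  have hm_self := iverson_false (lt_irrefl m)
  have hx_self := iverson_false (lt_irrefl (x a.succ))
  have hne := iverson_false hm.symm
  have hne' := iverson_false hm
  simp only [Fin.forall_fin_succ, IsEmpty.forall_iff, and_true] at hm' hx hm_ne hx_ne
  simp only [orientation, koszul, labelPos, Fin.sum_univ_four]
  fin_cases a <;>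
    simp only [Function.update, Fin.zero_eta, Fin.mk_one, Fin.reduceFinMk, Fin.succ_zero_eq_one,
      Fin.succ_one_eq_two, Fin.reduceSucc, Fin.reduceEq, Fin.reduceLT, Fin.lt_one_iff, not_lt_zero,
      lt_self_iff_false, zero_lt_one, zero_ne_one, one_ne_zero, ne_eq, not_true_eq_false,
      ↓reduceIte, ↓reduceDIte, zero_add, add_zero, Nat.reduceAdd] at * <;>
    omega

lemma orientation_add_koszul_update_zero (x : Fin 4 → Fin p) (m : Fin p) :
    (orientation (Function.update x 0 m) + koszul (Function.update x 0 m) m) % 2 =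
      (∑ a : Fin 3, (x a.succ : ℕ) +
        ∑ a : Fin 3, ∑ b : Fin 3, if b < a then iverson (x a.succ < x b.succ) else 0) % 2 := by
  have hm := iverson_false (lt_irrefl m)
  simp only [orientation, koszul, Fin.sum_univ_four, Fin.sum_univ_three, Function.update,
    Fin.succ_zero_eq_one, Fin.succ_one_eq_two, Fin.reduceSucc, Fin.reduceEq, Fin.reduceLT,
    Fin.lt_one_iff, not_lt_zero, lt_self_iff_false, zero_lt_one, one_ne_zero, ↓reduceIte,
    ↓reduceDIte, zero_add, add_zero] at hm ⊢
  omega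

variable [NeZero p]

lemma fin_val_add_one_add (i : Fin p) :
    ((i + 1 : Fin p) : ℕ) + p * iverson ((i : ℕ) + 1 = p) = i + 1 := by
  obtain ⟨q, rfl⟩ := Nat.exists_eq_succ_of_ne_zero (NeZero.ne p)
  rw [Fin.val_add_one]
  split_ifs with h
  · simp [iverson, h]
  · have hi : (i : ℕ) + 1 ≠ q + 1 := fun hq => h (Fin.ext (by simpa using hq))
    rw [iverson_false hi, mul_zero, add_zero]

lemma fin_val_add_one_mod_two (hp : Odd p) (i : Fin p) :
    (((i + 1 : Fin p) : ℕ) + iverson ((i : ℕ) + 1 = p)) % 2 = (i + 1) % 2 := by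
  have hi := fin_val_add_one_add i
  obtain ⟨k, hk⟩ := hp
  have hmul : p * iverson ((i : ℕ) + 1 = p) =
      2 * (k * iverson ((i : ℕ) + 1 = p)) + iverson ((i : ℕ) + 1 = p) := by
    nth_rw 1 [hk]
    ring
  omega

lemma iverson_add_one_lt_add_one (y x : Fin p) :
    (iverson (y + 1 < x + 1) + iverson (y < x) + iverson ((y : ℕ) + 1 = p) +
      iverson ((x : ℕ) + 1 = p)) % 2 = 0 := by
  have hy := fin_val_add_one_add y
  have hx := fin_val_add_one_add x
  have := y.isLt
  have := x.isLt
  simp only [iverson, Fin.lt_def] at hx hy ⊢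
  split_ifs at hx hy ⊢ <;> omega

lemma orientation_add_one (hp : Odd p) (x : Fin 4 → Fin p) :
    orientation (fun s => x s + 1) % 2 = orientation x % 2 := by
  have hval (s : Fin 4) := fin_val_add_one_mod_two hp (x s)
  have hlt (s r : Fin 4) := iverson_add_one_lt_add_one (x s) (x r)
  have hval0 := hval 0
  have hval1 := hval 1
  have hval2 := hval 2
  have hval3 := hval 3
  have hlt10 := hlt 1 0
  have hlt20 := hlt 2 0
  have hlt21 := hlt 2 1
  have hlt30 := hlt 3 0
  have hlt31 := hlt 3 1
  have hlt32 := hlt 3 2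
  simp only [orientation, Fin.sum_univ_four, Fin.reduceEq, Fin.reduceLT, Fin.lt_one_iff,
    not_lt_zero, lt_self_iff_false, zero_lt_one, ↓reduceIte, zero_add, add_zero]
  omega

lemma koszul_add_one (hp : Odd p) (x : Fin 4 → Fin p) (i l : Fin p) :
    (koszul (fun s => x s + 1) (i + 1) + koszul (fun s => x s + 1) (l + 1) +
      iverson (l + 1 < i + 1)) % 2 = (koszul x i + koszul x l + iverson (l < i)) % 2 := by
  have hi := fin_val_add_one_mod_two hp i
  have hl := fin_val_add_one_mod_two hp l
  have hlt_i (s : Fin 4) := iverson_add_one_lt_add_one (x s) i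
  have hlt_l (s : Fin 4) := iverson_add_one_lt_add_one (x s) l
  have hli := iverson_add_one_lt_add_one l i
  simp only [Fin.forall_fin_succ, IsEmpty.forall_iff, and_true, Fin.succ_zero_eq_one,
    Fin.succ_one_eq_two, Fin.reduceSucc] at hlt_i hlt_l
  simp only [koszul, Fin.sum_univ_four]
  omega

end Signs

/-- The colourings by `p` colours of a distinguished vertex and of three blocks of `p - 1` vertices
in which the vertices of each block receive different colours. A block is coloured by a permutation
of the colours, whose value at `0` is the colour that the block omits. -/
abbrev Coloring (p : ℕ) : Type := Fin p × (Fin 3 → Equiv.Perm (Fin p))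

namespace Face

lemma pairwise_labels {b : Face}
    (hb : ∀ s t, s < t → ∀ x, b s = some x → ∀ y, b t = some y → x < y) :
    b.labels.Pairwise (· < ·) := by
  have hone (o : Option ℕ) : o.toList.Pairwise (· < ·) := by cases o <;> simp
  simp only [labels, List.pairwise_append, List.mem_append, Option.mem_toList]
  refine ⟨hone _, ⟨hone _, ⟨hone _, hone _, hb 2 3 (by decide)⟩, fun x hx y hy => ?_⟩,
    fun x hx y hy => ?_⟩
  · exact hy.elim (hb 1 2 (by decide) x hx y) (hb 1 3 (by decide) x hx y)
  · rcases hy with hy | hy | hy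
    exacts [hb 0 1 (by decide) x hx y hy, hb 0 2 (by decide) x hx y hy,
      hb 0 3 (by decide) x hx y hy]

end Face

namespace Coloring

/-- The number of vertices that are coloured. -/
abbrev numLabels (p : ℕ) : ℕ := 3 * (p - 1) + 1

variable {p : ℕ}

/-- The label of the vertex `r ≠ 0` of the block `a`. -/
def label (a : Fin 3) (r : Fin p) : ℕ := a * (p - 1) + r

variable [NeZero p]

/-- The face formed by the labels of colour `i`. -/
def face (κ : Coloring p) (i : Fin p) : Face :=
  Fin.cons (if κ.1 = i then some 0 else none)
    fun a => if (κ.2 a).symm i = 0 then none else some (label a ((κ.2 a).symm i))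

/-- The colour of the distinguished vertex and the colours omitted by the three blocks. -/
def omitted (κ : Coloring p) : Fin 4 → Fin p := Fin.cons κ.1 fun a => κ.2 a 0

lemma face_zero (κ : Coloring p) (i : Fin p) :
    face κ i 0 = if κ.1 = i then some 0 else none := rfl

lemma face_succ (κ : Coloring p) (i : Fin p) (a : Fin 3) :
    face κ i a.succ =
      if (κ.2 a).symm i = 0 then none else some (label a ((κ.2 a).symm i)) := rfl

lemma omitted_zero (κ : Coloring p) : omitted κ 0 = κ.1 := rfl

lemma omitted_succ (κ : Coloring p) (a : Fin 3) : omitted κ a.succ = κ.2 a 0 := rfl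

lemma label_mem_Ioc (a : Fin 3) {r : Fin p} (hr : r ≠ 0) :
    label a r ∈ Ioc ((a : ℕ) * (p - 1)) ((a + 1) * (p - 1)) := by
  have hpos : 0 < (r : ℕ) := Fin.pos_iff_ne_zero.mpr hr
  have := r.isLt
  rw [mem_Ioc, label, add_mul]
  omega

lemma label_pos (a : Fin 3) {r : Fin p} (hr : r ≠ 0) : 0 < label a r :=
  (Nat.zero_le _).trans_lt (mem_Ioc.mp (label_mem_Ioc a hr)).1

lemma label_lt_numLabels (a : Fin 3) {r : Fin p} (hr : r ≠ 0) : label a r < numLabels p := by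
  have hle := (mem_Ioc.mp (label_mem_Ioc a hr)).2
  have hmul : ((a : ℕ) + 1) * (p - 1) ≤ 3 * (p - 1) := Nat.mul_le_mul_right _ a.isLt
  rw [numLabels]
  omega

lemma label_lt_label {a b : Fin 3} {r t : Fin p} (hr : r ≠ 0) (ht : t ≠ 0) (hab : a < b) :
    label a r < label b t := by
  have hle := (mem_Ioc.mp (label_mem_Ioc a hr)).2
  have hlt := (mem_Ioc.mp (label_mem_Ioc b ht)).1
  have hmul : ((a : ℕ) + 1) * (p - 1) ≤ b * (p - 1) := Nat.mul_le_mul_right _ hab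
  omega

lemma label_inj {a b : Fin 3} {r t : Fin p} (hr : r ≠ 0) (ht : t ≠ 0)
    (h : label a r = label b t) : a = b ∧ r = t := by
  rcases lt_trichotomy a b with hab | rfl | hab
  · exact absurd h (label_lt_label hr ht hab).ne
  · exact ⟨rfl, Fin.ext (Nat.add_left_cancel h)⟩
  · exact absurd h (label_lt_label ht hr hab).ne'

lemma exists_eq_label {u : ℕ} (hu0 : u ≠ 0) (hu : u < numLabels p) :
    ∃ (a : Fin 3) (r : Fin p), r ≠ 0 ∧ u = label a r := by
  rw [numLabels] at hu
  have hp : 0 < p - 1 := by omega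
  have hr := Nat.mod_lt (u - 1) hp
  have ha : (u - 1) / (p - 1) < 3 := by
    rw [Nat.div_lt_iff_lt_mul hp]
    omega
  refine ⟨⟨_, ha⟩, ⟨(u - 1) % (p - 1) + 1, by omega⟩, fun h => ?_, ?_⟩
  · simpa using congrArg Fin.val h
  · have hdiv := Nat.div_add_mod (u - 1) (p - 1)
    rw [mul_comm] at hdiv
    simp only [label]
    omega

lemma mem_labels_face {κ : Coloring p} {i : Fin p} {u : ℕ} :
    u ∈ (face κ i).labels ↔
      (u = 0 ∧ κ.1 = i) ∨ ∃ a r, r ≠ 0 ∧ u = label a r ∧ κ.2 a r = i := by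
  rw [Face.mem_labels, Fin.exists_fin_succ]
  refine or_congr ?_ (exists_congr fun a => ?_)
  · rw [face_zero]
    split_ifs with h <;> simp [h, eq_comm]
  · rw [face_succ]
    constructor
    · intro h
      split_ifs at h with h0
      exact ⟨_, h0, (Option.some.inj h).symm, Equiv.apply_symm_apply _ _⟩
    · rintro ⟨r, hr, rfl, rfl⟩
      simp [hr]

lemma isSome_face {κ : Coloring p} {i : Fin p} {s : Fin 4} :
    (face κ i s).isSome ↔ if s = 0 then omitted κ s = i else omitted κ s ≠ i := by
  refine Fin.cases ?_ (fun a => ?_) s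
  · rw [face_zero, omitted_zero]
    split_ifs <;> simp_all
  · have hiff : (κ.2 a).symm i = 0 ↔ κ.2 a 0 = i := by rw [Equiv.symm_apply_eq, eq_comm]
    rw [face_succ, omitted_succ, if_neg (Fin.succ_ne_zero a), Ne, ← hiff]
    split_ifs with h <;> simp [h]

lemma pos_face (κ : Coloring p) (i : Fin p) (s : Fin 4) :
    (face κ i).pos s = labelPos (omitted κ) i s := by
  simp only [Face.pos, labelPos, card_filter, isSome_face, iverson, ite_and]

lemma eq_of_mem_labels_face {κ : Coloring p} {t l : Fin p} {u : ℕ} (ht : u ∈ (face κ t).labels)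
    (hl : u ∈ (face κ l).labels) : t = l := by
  rw [mem_labels_face] at ht hl
  rcases ht with ⟨rfl, rfl⟩ | ⟨a, r, hr, rfl, rfl⟩ <;> rcases hl with ⟨h, h'⟩ | ⟨b, q, hq, h, h'⟩
  · exact h'
  · exact absurd h (label_pos b hq).ne
  · exact absurd h (label_pos a hr).ne'
  · obtain ⟨rfl, rfl⟩ := label_inj hr hq h
    exact h'

lemma disjoint_labels_face (κ : Coloring p) :
    Pairwise (Function.onFun Disjoint fun t => {x | x ∈ (face κ t).labels}) := fun _ _ hne =>
  Set.disjoint_left.mpr fun _ ht hl => hne (eq_of_mem_labels_face ht hl)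

lemma exists_mem_labels_face (κ : Coloring p) {u : ℕ} (hu : u < numLabels p) :
    ∃ i, u ∈ (face κ i).labels := by
  rcases eq_or_ne u 0 with rfl | hu0
  · exact ⟨κ.1, mem_labels_face.mpr (.inl ⟨rfl, rfl⟩)⟩
  · obtain ⟨a, r, hr, hur⟩ := exists_eq_label hu0 hu
    exact ⟨_, mem_labels_face.mpr (.inr ⟨a, r, hr, hur, rfl⟩)⟩

lemma face_lt_face (κ : Coloring p) (i : Fin p) {s t : Fin 4} (hst : s < t) {x y : ℕ}
    (hx : face κ i s = some x) (hy : face κ i t = some y) : x < y := by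
  obtain ⟨b, rfl⟩ := Fin.exists_succ_eq.mpr (Fin.ne_zero_of_lt hst)
  have hb := (isSome_face (κ := κ) (i := i) (s := b.succ)).mp (by simp [hy])
  rw [face_succ] at hy
  split_ifs at hy with hb0
  rw [← Option.some.inj hy]
  rcases Fin.eq_zero_or_eq_succ s with rfl | ⟨a, rfl⟩
  · rw [face_zero] at hx
    split_ifs at hx
    rw [← Option.some.inj hx]
    exact label_pos b hb0
  · rw [face_succ] at hx
    split_ifs at hx with ha0
    rw [← Option.some.inj hx]
    exact label_lt_label ha0 hb0 (Fin.succ_lt_succ_iff.mp hst)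

lemma isAdmissible_labels_face (κ : Coloring p) (i : Fin p) :
    IsAdmissible (numLabels p) (face κ i).labels := by
  constructor
  · exact Face.pairwise_labels fun s t hst x hx y hy => face_lt_face κ i hst hx hy
  · intro x hx
    rcases mem_labels_face.mp hx with ⟨rfl, -⟩ | ⟨a, r, hr, rfl, -⟩
    · exact Nat.succ_pos _
    · exact label_lt_numLabels a hr

end Coloring

section Reindex

variable {I : Type*} [Fintype I] [LinearOrder I] {e e' : I → ℕ}

lemma wedgeTop_comp_perm (ρ : Equiv.Perm I)
    (h : ∀ i l, i ≠ l → pairSign e' (ρ i) (ρ l) = pairSign e i l) (A : I → Cell) :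
    wedgeTop e (fun t => A (ρ t)) = wedgeTop e' A := by
  have hprod (s s' : Finset I) (hs : ∀ t, t ∈ s ↔ ρ t ∈ s') :
      ∏ t ∈ s, Cell.deg0 (A (ρ t)) = ∏ t ∈ s', Cell.deg0 (A t) :=
    prod_equiv ρ hs fun _ _ => rfl
  rw [wedgeTop_apply, wedgeTop_apply]
  congr 1
  · refine Fintype.sum_equiv ρ _ _ fun i => ?_
    rw [hprod {i}ᶜ {ρ i}ᶜ (by simp)]
  · refine Fintype.sum_equiv ρ _ _ fun i => sum_equiv ρ (by simp) fun l hl => ?_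
    rw [h i l (by simpa [eq_comm] using hl), hprod {i, l}ᶜ {ρ i, ρ l}ᶜ (by simp)]

lemma Coch.integral_comp_perm (n : ℕ) (ρ : Equiv.Perm I)
    (h : ∀ i l, i ≠ l → pairSign e' (ρ i) (ρ l) = pairSign e i l) (A : I → Coch) :
    integral n e (fun t => A (ρ t)) = integral n e' A := by
  simp only [integral_apply]
  exact sum_congr rfl fun i _ => sum_congr rfl fun j _ =>
    wedgeTop_comp_perm ρ h fun t => A t i j

end Reindex

namespace Coloring

open Stage Coch Move Face

variable {p : ℕ} [NeZero p] {n : ℕ} {c : ℕ → ℕ}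

lemma koszul_zero (x : Fin 4 → Fin p) : koszul x 0 = 0 := by simp [koszul, iverson]

/-- The signed number of points of the grid that lie in all faces of a colouring. -/
def signedIntegral (T : Stage n (numLabels p) c) (κ : Coloring p) : ℤ :=
  (-1) ^ orientation (omitted κ) *
    integral n (koszul (omitted κ)) fun t => T.part (face κ t).labels

/-- The signed number of common points of the faces, summed over all colourings in which the label
`u` has colour `i`. -/
def colorSum (T : Stage n (numLabels p) c) (u : ℕ) (i : Fin p) : ℤ :=
  ∑ κ : Coloring p, if u ∈ (face κ i).labels then signedIntegral T κ else 0

/-- The cyclic shift of the colours. -/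
def shift : Coloring p ≃ Coloring p :=
  Equiv.prodCongr (Equiv.addRight 1) (Equiv.piCongrRight fun _ => Equiv.mulLeft (Equiv.addRight 1))

lemma face_shift (κ : Coloring p) (i : Fin p) : face (shift κ) (i + 1) = face κ i := by
  funext s
  refine Fin.cases ?_ (fun a => ?_) s
  · simp [face_zero, shift]
  · have hsymm : ((shift κ).2 a).symm (i + 1) = (κ.2 a).symm i := by
      rw [Equiv.symm_apply_eq]
      simp [shift]
    rw [face_succ, face_succ, hsymm]

lemma omitted_shift (κ : Coloring p) : omitted (shift κ) = fun s => omitted κ s + 1 := by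
  funext s
  refine Fin.cases ?_ (fun a => ?_) s
  · simp [omitted_zero, shift]
  · simp [omitted_succ, shift]

lemma signedIntegral_shift (hp : Odd p) (T : Stage n (numLabels p) c) (κ : Coloring p) :
    signedIntegral T (shift κ) = signedIntegral T κ := by
  rw [signedIntegral, signedIntegral, omitted_shift,
    neg_one_pow_eq_of_mod_two_eq (orientation_add_one hp (omitted κ))]
  refine congrArg _ ?_
  rw [← integral_comp_perm n (Equiv.addRight 1) (e := koszul (omitted κ)) fun i l _ =>
    neg_one_pow_eq_of_mod_two_eq (koszul_add_one hp (omitted κ) i l)]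
  simp only [Equiv.coe_addRight, face_shift]

lemma colorSum_add_one (hp : Odd p) (T : Stage n (numLabels p) c) (u : ℕ) (i : Fin p) :
    colorSum T u (i + 1) = colorSum T u i := by
  rw [colorSum, ← Equiv.sum_comp shift]
  simp only [face_shift, signedIntegral_shift hp, colorSum]

lemma colorSum_eq_colorSum_zero (hp : Odd p) (T : Stage n (numLabels p) c) (u : ℕ) (i : Fin p) :
    colorSum T u i = colorSum T u 0 := by
  have hcast (k : ℕ) : colorSum T u (Fin.ofNat p k) = colorSum T u 0 := by
    induction k with
    | zero => rfl
    | succ k ih =>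
      rw [← ih, ← colorSum_add_one hp T u (Fin.ofNat p k)]
      congr 1
      ext
      simp [Fin.val_add]
  rw [← hcast i, Fin.ofNat_val_eq_self]

lemma mul_colorSum_zero (hp : Odd p) (T : Stage n (numLabels p) c) {u : ℕ}
    (hu : u < numLabels p) : p * colorSum T u 0 = ∑ κ : Coloring p, signedIntegral T κ := by
  have hsum : ∑ i : Fin p, colorSum T u i = p * colorSum T u 0 := by
    simp [colorSum_eq_colorSum_zero hp T u]
  rw [← hsum]
  unfold colorSum
  rw [sum_comm]
  refine sum_congr rfl fun κ _ => ?_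
  obtain ⟨i, hi⟩ := exists_mem_labels_face κ hu
  rw [Fintype.sum_eq_single i fun l hl => if_neg fun h => hl (eq_of_mem_labels_face h hi),
    if_pos hi]

/-- By the cyclic symmetry of the colours, `p` times either side is the sum over all colourings. -/
lemma colorSum_zero_eq (hp : Odd p) (T : Stage n (numLabels p) c) {u : ℕ}
    (hu : u < numLabels p) : colorSum T u 0 = colorSum T 0 0 :=
  mul_left_cancel₀ (Nat.cast_ne_zero.mpr (NeZero.ne p)) <|
    (mul_colorSum_zero hp T hu).trans (mul_colorSum_zero hp T (Nat.succ_pos _)).symm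

section Moves

variable {T T' : Stage n (numLabels p) c} {u : ℕ} (D : Move T T' u)

/-- The contribution of the removal of the label in group `s` of the face of colour `m` to the
change of the sum over the colourings under a move. -/
def deletionTerm (κ : Coloring p) (m : Fin p) (s : Fin 4) : ℤ :=
  (-1) ^ orientation (omitted κ) * (delSign (koszul (omitted κ)) (face κ) m s *
    integral n (fun t => koszul (omitted κ) t + if m < t then 1 else 0)
      (D.fam 0 (delAt (face κ) m s)))

lemma deletionTerm_eq_zero_of_isSome_eq_false {κ : Coloring p} {m : Fin p} {s : Fin 4}
    (h : (face κ m s).isSome = false) : deletionTerm D κ m s = 0 := by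
  simp [deletionTerm, delSign, h]

lemma labels_delAt_subset {I : Type*} [LinearOrder I] (b : I → Face) (m : I) (s : Fin 4) (t : I) :
    (delAt b m s t).labels ⊆ (b t).labels := by
  rcases eq_or_ne t m with rfl | ht
  · simpa [delAt] using labels_del_subset (b t) s
  · simp [delAt, ht]

lemma deletionTerm_eq_zero_of_notMem {κ : Coloring p} (hu : u ∉ (face κ 0).labels) (m : Fin p)
    (s : Fin 4) : deletionTerm D κ m s = 0 := by
  have hzero : D.fam 0 (delAt (face κ) m s) 0 = 0 := by
    rw [fam_self]
    exact D.homotopy_of_notMem fun h => hu (labels_delAt_subset _ m s 0 h)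
  rw [deletionTerm, MultilinearMap.map_coord_zero _ 0 hzero, mul_zero, mul_zero]

lemma colorSum_eq_add_sum_deletionTerm :
    colorSum T' u 0 = colorSum T u 0 + ∑ κ : Coloring p, ∑ m, ∑ s, deletionTerm D κ m s := by
  simp only [colorSum, ← sum_add_distrib]
  refine sum_congr rfl fun κ _ => ?_
  split_ifs with hu
  · rw [signedIntegral, D.integral_part_eq (fun i => Fin.zero_le i) (koszul_zero _)
      (isAdmissible_labels_face κ) (disjoint_labels_face κ) hu, mul_add]
    simp only [mul_sum, signedIntegral, deletionTerm]
  · simp [deletionTerm_eq_zero_of_notMem D hu]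

/-- The exchange of the colour of the vertex `r` of the block `a` with the colour that the block
omits. -/
def exchange (a : Fin 3) (r : Fin p) (κ : Coloring p) : Coloring p :=
  (κ.1, Function.update κ.2 a (κ.2 a * Equiv.swap 0 r))

lemma exchange_involutive (a : Fin 3) (r : Fin p) : Function.Involutive (exchange a r) :=
  fun κ => by simp [exchange, mul_assoc]

lemma exchange_apply_self (a : Fin 3) (r : Fin p) (κ : Coloring p) :
    (exchange a r κ).2 a r = omitted κ a.succ := by
  simp [exchange, omitted_succ]

lemma omitted_exchange (a : Fin 3) (r : Fin p) (κ : Coloring p) :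
    omitted (exchange a r κ) = Function.update (omitted κ) a.succ (κ.2 a r) := by
  funext s
  refine Fin.cases ?_ (fun b => ?_) s
  · rw [Function.update_of_ne (Fin.succ_ne_zero a).symm]
    rfl
  · rcases eq_or_ne b a with rfl | hb
    · simp [omitted_succ, exchange]
    · rw [Function.update_of_ne (by simpa using hb)]
      simp [omitted_succ, exchange, hb]

lemma delAt_face_apply (a : Fin 3) (r : Fin p) (κ : Coloring p) (i : Fin p) (s : Fin 4) :
    delAt (face κ) (κ.2 a r) a.succ i s =
      if s = a.succ ∧ (κ.2 a).symm i = r then none else face κ i s := by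
  have hsymm : (κ.2 a).symm i = r ↔ i = κ.2 a r := by rw [Equiv.symm_apply_eq]
  rcases eq_or_ne i (κ.2 a r) with rfl | hi
  · rcases eq_or_ne s a.succ with rfl | hs <;> simp [delAt, del, *]
  · simp [delAt, hsymm, hi]

lemma delAt_face_exchange {a : Fin 3} {r : Fin p} (hr : r ≠ 0) (κ : Coloring p) :
    delAt (face (exchange a r κ)) ((exchange a r κ).2 a r) a.succ =
      delAt (face κ) (κ.2 a r) a.succ := by
  funext i s
  rw [delAt_face_apply, delAt_face_apply]
  refine Fin.cases ?_ (fun b => ?_) s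
  · simp [(Fin.succ_ne_zero a).symm, face_zero, exchange]
  · rcases eq_or_ne b a with rfl | hb
    · have hsymm : ((exchange b r κ).2 b).symm i = Equiv.swap 0 r ((κ.2 b).symm i) := by
        rw [Equiv.symm_apply_eq]
        simp [exchange]
      rw [hsymm, face_succ, face_succ, hsymm]
      generalize (κ.2 b).symm i = y
      rcases eq_or_ne y 0 with rfl | hy0
      · simp
      · rcases eq_or_ne y r with rfl | hyr
        · simp
        · rw [Equiv.swap_apply_of_ne_of_ne hy0 hyr]
    · simp [face_succ, exchange, hb]

lemma deletionTerm_exchange {a : Fin 3} {r : Fin p} (hr : r ≠ 0) (κ : Coloring p) :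
    deletionTerm D (exchange a r κ) ((exchange a r κ).2 a r) a.succ =
      -deletionTerm D κ (κ.2 a r) a.succ := by
  have hne : κ.2 a r ≠ omitted κ a.succ := fun h => hr ((κ.2 a).injective h)
  have hsome (κ : Coloring p) : (face κ (κ.2 a r) a.succ).isSome := by simp [face_succ, hr]
  have hsign : (-1 : ℤ) ^ (orientation (Function.update (omitted κ) a.succ (κ.2 a r)) +
      (koszul (Function.update (omitted κ) a.succ (κ.2 a r)) (omitted κ a.succ) +
        labelPos (Function.update (omitted κ) a.succ (κ.2 a r)) (omitted κ a.succ) a.succ)) =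
      -(-1) ^ (orientation (omitted κ) +
        (koszul (omitted κ) (κ.2 a r) + labelPos (omitted κ) (κ.2 a r) a.succ)) := by
    have hodd := orientation_add_koszul_add_labelPos_update (omitted κ) a hne
    exact neg_one_pow_eq_neg_of_mod_two (by omega)
  have hkoszul : (fun t => koszul (Function.update (omitted κ) a.succ (κ.2 a r)) t +
      if omitted κ a.succ < t then 1 else 0) =
      fun t => koszul (omitted κ) t + if κ.2 a r < t then 1 else 0 :=
    funext <| koszul_update_add (omitted κ) a.succ (κ.2 a r)
  rw [deletionTerm, deletionTerm, delAt_face_exchange hr, delSign, delSign, if_pos (hsome _),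
    if_pos (hsome _), pos_face, pos_face, exchange_apply_self, omitted_exchange, hkoszul,
    ← mul_assoc, ← mul_assoc, ← neg_mul, ← pow_add, ← pow_add, hsign]

lemma sum_deletionTerm_succ (a : Fin 3) :
    ∑ κ : Coloring p, ∑ m, deletionTerm D κ m a.succ = 0 := by
  have hreindex (κ : Coloring p) :
      ∑ m, deletionTerm D κ m a.succ = ∑ r, deletionTerm D κ (κ.2 a r) a.succ :=
    (Equiv.sum_comp (κ.2 a) _).symm
  simp only [hreindex]
  rw [sum_comm]
  refine sum_eq_zero fun r _ => ?_
  rcases eq_or_ne r 0 with rfl | hr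
  · exact sum_eq_zero fun κ _ =>
      deletionTerm_eq_zero_of_isSome_eq_false D (by simp [face_succ])
  · have hneg := Equiv.sum_comp (exchange_involutive a r).toPerm
      fun κ => deletionTerm D κ (κ.2 a r) a.succ
    simp only [Function.Involutive.coe_toPerm, deletionTerm_exchange D hr, sum_neg_distrib] at hneg
    linarith

lemma omitted_mk (ω : Fin p) (π : Fin 3 → Equiv.Perm (Fin p)) :
    omitted (ω, π) = Function.update (omitted (0, π)) 0 ω := by
  funext s
  refine Fin.cases ?_ (fun b => ?_) s
  · simp [omitted_zero]
  · rw [Function.update_of_ne (Fin.succ_ne_zero b)]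
    rfl

lemma delAt_face_mk (ω : Fin p) (π : Fin 3 → Equiv.Perm (Fin p)) :
    delAt (face (ω, π)) ω 0 = delAt (face (0, π)) 0 0 := by
  have hdel (ω : Fin p) :
      delAt (face (ω, π)) ω 0 = fun i => Function.update (face (0, π) i) 0 none := by
    funext i s
    refine Fin.cases ?_ (fun b => ?_) s <;> rcases eq_or_ne i ω with rfl | hi <;>
      simp [delAt, del, face_zero, face_succ, *, Ne.symm]
  rw [hdel, hdel]

lemma deletionTerm_mk (ω : Fin p) (π : Fin 3 → Equiv.Perm (Fin p)) :
    deletionTerm D (ω, π) ω 0 = deletionTerm D (0, π) 0 0 := by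
  have hsome (ω : Fin p) : (face (ω, π) ω 0).isSome := by simp [face_zero]
  have hpos (ω : Fin p) : (face (ω, π) ω).pos 0 = 0 := by simp [Face.pos]
  have hsign (ω : Fin p) := orientation_add_koszul_update_zero (omitted (0, π)) ω
  have hkoszul (ω t : Fin p) :
      koszul (omitted (ω, π)) t + iverson (0 < t) =
        koszul (omitted (0, π)) t + iverson (ω < t) := by
    rw [omitted_mk]
    exact koszul_update_add (omitted (0, π)) 0 ω t
  simp only [← omitted_mk] at hsign
  rw [deletionTerm, deletionTerm, delAt_face_mk, delSign, delSign, if_pos (hsome ω),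
    if_pos (hsome 0), hpos, hpos, add_zero, add_zero, ← mul_assoc, ← mul_assoc, ← pow_add,
    ← pow_add, neg_one_pow_eq_of_mod_two_eq ((hsign ω).trans (hsign 0).symm)]
  refine congrArg _ <| congrFun (congrArg _ <| integral_congr_pairSign fun i l _ =>
    neg_one_pow_eq_of_mod_two_eq ?_) _
  have hi := hkoszul ω i
  have hl := hkoszul ω l
  unfold iverson at hi hl
  omega

lemma dvd_sum_deletionTerm_zero : (p : ℤ) ∣ ∑ κ : Coloring p, ∑ m, deletionTerm D κ m 0 := by
  have hsingle (κ : Coloring p) : ∑ m, deletionTerm D κ m 0 = deletionTerm D (0, κ.2) 0 0 := by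
    obtain ⟨ω, π⟩ := κ
    rw [Fintype.sum_eq_single ω fun m hm =>
      deletionTerm_eq_zero_of_isSome_eq_false D (by simp [face_zero, hm.symm]), deletionTerm_mk]
  simp only [hsingle]
  rw [Fintype.sum_prod_type]
  simp

theorem colorSum_modEq_of_move (D : Move T T' u) (hp : Odd p) (hu : u < numLabels p) :
    colorSum T' 0 0 ≡ colorSum T 0 0 [ZMOD p] := by
  have hsum : ∑ κ : Coloring p, ∑ m, ∑ s, deletionTerm D κ m s =
      ∑ κ : Coloring p, ∑ m, deletionTerm D κ m 0 := by
    simp only [Fin.sum_univ_succ (n := 3), sum_add_distrib, sum_comm (t := (univ : Finset (Fin 3))),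
      sum_deletionTerm_succ D, sum_const_zero, add_zero]
  rw [← colorSum_zero_eq hp T' hu, ← colorSum_zero_eq hp T hu,
    colorSum_eq_add_sum_deletionTerm D, hsum]
  exact (Int.modEq_iff_dvd.mpr (by simpa using dvd_sum_deletionTerm_zero D)).symm

end Moves

end Coloring

/-- The squares of the grid `[0, n)²` whose row and column have class `a`. -/
def InClass (c : ℕ → ℕ) (n a : ℕ) (z : ℕ × ℕ) : Prop := c z.1 = a ∧ c z.2 = a ∧ z.1 < n ∧ z.2 < n

namespace Coch

/-- The degree `2` cochain marking a square of the grid. -/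
def point (z : ℕ × ℕ) : Coch := fun i j => (0, 0, 0, if i = z.1 ∧ j = z.2 then 1 else 0)

/-- The degree `1` cochain recording the crossings of the edges of the grid by the path from the
square `y` to the square `z` that first follows the row of `y` and then the column of `z`. -/
def path (y z : ℕ × ℕ) : Coch := fun i j =>
  (0, if i = z.1 then (if j ≤ y.2 then 1 else 0) - (if j ≤ z.2 then 1 else 0) else 0,
    if j = y.2 then (if i ≤ z.1 then 1 else 0) - (if i ≤ y.1 then 1 else 0) else 0, 0)

lemma point_mem_degreeTwo (z : ℕ × ℕ) : point z ∈ degreeTwo := fun _ _ => ⟨rfl, rfl, rfl⟩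

lemma path_mem_degreeOne (y z : ℕ × ℕ) : path y z ∈ degreeOne := fun _ _ => ⟨rfl, rfl⟩

lemma d_path (y z : ℕ × ℕ) : d (path y z) = point y - point z := by
  funext i j
  refine Cell.ext (by simp [point, d_apply]) (by simp [d_apply, path, point])
    (by simp [d_apply, path, point]) ?_
  have hstep (a b : ℕ) : (if a ≤ b then (1 : ℤ) else 0) =
      (if a = b then 1 else 0) + (if a + 1 ≤ b then 1 else 0) := by
    split_ifs <;> first | rfl | omega
  simp only [d_apply, path, point, Pi.sub_apply, map_sub, Cell.hor_mk, Cell.ver_mk, Cell.deg2_mk,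
    ite_and, hstep j y.2, hstep j z.2, hstep i y.1, hstep i z.1]
  split_ifs <;> ring

variable {n : ℕ} {c : ℕ → ℕ}

lemma point_mem_onLines {a : ℕ} {z : ℕ × ℕ} (hz : InClass c n a z) : point z ∈ onLines n c {a} := by
  refine ⟨fun i j hi => ⟨rfl, if_neg ?_⟩, fun i j hj => ⟨rfl, if_neg ?_⟩, fun k => by simp [point]⟩
  · rintro ⟨rfl, -⟩
    exact hi hz.1
  · rintro ⟨-, rfl⟩
    exact hj hz.2.1

lemma path_mem_onLines {a b : ℕ} {y z : ℕ × ℕ} (hy : InClass c n a y) (hz : InClass c n b z) :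
    path y z ∈ onLines n c {a, b} := by
  obtain ⟨-, hya, hy1, hy2⟩ := hy
  obtain ⟨hzb, -, hz1, hz2⟩ := hz
  refine ⟨fun i j hi => ⟨if_neg ?_, rfl⟩, fun i j hj => ⟨if_neg ?_, rfl⟩, fun k => ?_⟩
  · rintro rfl
    simp [hzb] at hi
  · rintro rfl
    simp [hya] at hj
  · simp [path, hy1.not_ge, hy2.not_ge, hz1.not_ge, hz2.not_ge]

end Coch

namespace Stage

open Coch

variable {n R : ℕ} {c : ℕ → ℕ}

/-- The labels below `R` are placed in the squares `l`, which lie on lines of their own class. -/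
def IsPlacedAt (T : Stage n R c) (l : ℕ → ℕ × ℕ) : Prop :=
  ∀ a < R, InClass c n a (l a) ∧ T.vertex a = point (l a)

lemma part_congr {T T' : Stage n R c} (hvertex : ∀ a < R, T'.vertex a = T.vertex a)
    (hedge : ∀ a < R, ∀ b < R, T'.edge a b = T.edge a b) {l : List ℕ} (hl : ∀ x ∈ l, x < R) :
    T'.part l = T.part l := by
  match l, hl with
  | [], _ => rfl
  | [a], hl => exact hvertex a (hl a (by simp))
  | [a, b], hl => exact hedge a (hl a (by simp)) b (hl b (by simp))
  | [a, b, e], hl =>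
    simp only [part, hedge a (hl a (by simp)) b (hl b (by simp)),
      hedge b (hl b (by simp)) e (hl e (by simp)), hedge a (hl a (by simp)) e (hl e (by simp))]
  | _ :: _ :: _ :: _ :: _, _ => rfl

/-- The stage in which the labels below `k` are at their place in `T'`, the others at their place in
`T`. -/
def interpolate {T T' : Stage n R c} {l l' : ℕ → ℕ × ℕ} (hT : T.IsPlacedAt l)
    (hT' : T'.IsPlacedAt l') (k : ℕ) : Stage n R c where
  vertex a := if a < k then T'.vertex a else T.vertex a
  edge a b := if b < k then T'.edge a b else
    if a < k then T.edge a b - path (l a) (l' a) else T.edge a b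
  vertex_mem_degreeTwo a := by
    split_ifs
    exacts [T'.vertex_mem_degreeTwo a, T.vertex_mem_degreeTwo a]
  vertex_mem_onLines a ha := by
    split_ifs
    exacts [T'.vertex_mem_onLines a ha, T.vertex_mem_onLines a ha]
  edge_mem_degreeOne a b := by
    split_ifs
    exacts [T'.edge_mem_degreeOne a b,
      sub_mem (T.edge_mem_degreeOne a b) (path_mem_degreeOne _ _), T.edge_mem_degreeOne a b]
  edge_mem_onLines a b hab hb := by
    have hpath := path_mem_onLines (hT a (hab.trans hb)).1 (hT' a (hab.trans hb)).1
    split_ifs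
    exacts [T'.edge_mem_onLines a b hab hb,
      sub_mem (T.edge_mem_onLines a b hab hb) (onLines_mono (by simp) hpath),
      T.edge_mem_onLines a b hab hb]
  d_edge a b hab hb := by
    have ha := hab.trans hb
    by_cases hbk : b < k
    · simp only [if_pos hbk, if_pos (hab.trans hbk), T'.d_edge a b hab hb]
    · by_cases hak : a < k
      · simp only [if_neg hbk, if_pos hak, map_sub, T.d_edge a b hab hb, d_path, (hT a ha).2,
          (hT' a ha).2]
        abel
      · simp only [if_neg hbk, if_neg hak, T.d_edge a b hab hb]

/-- The move of the label `k` that relates consecutive interpolating stages. -/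
def interpolateMove {T T' : Stage n R c} {l l' : ℕ → ℕ × ℕ} (hT : T.IsPlacedAt l)
    (hT' : T'.IsPlacedAt l') {k : ℕ} (hk : k < R) :
    Move (interpolate hT hT' k) (interpolate hT hT' (k + 1)) k where
  sweep := path (l k) (l' k)
  vertex_eq a ha := by
    have hlt : a < k + 1 ↔ a < k := by omega
    simp only [interpolate, hlt]
  edge_eq a b ha hb := by
    have hlta : a < k + 1 ↔ a < k := by omega
    have hltb : b < k + 1 ↔ b < k := by omega
    simp only [interpolate, hlta, hltb]
  sweep_mem_degreeOne := path_mem_degreeOne _ _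
  sweep_mem_onLines := by simpa using path_mem_onLines (hT k hk).1 (hT' k hk).1
  d_sweep := by simp [interpolate, d_path, (hT k hk).2, (hT' k hk).2]

end Stage

namespace Coloring

open Stage

variable {p : ℕ} [NeZero p] {n : ℕ} {c : ℕ → ℕ}

lemma colorSum_congr {T T' : Stage n (numLabels p) c}
    (hvertex : ∀ a < numLabels p, T'.vertex a = T.vertex a)
    (hedge : ∀ a < numLabels p, ∀ b < numLabels p, T'.edge a b = T.edge a b) (u : ℕ) (i : Fin p) :
    colorSum T' u i = colorSum T u i := by
  have hpart (κ : Coloring p) (t : Fin p) :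
      T'.part (face κ t).labels = T.part (face κ t).labels :=
    part_congr hvertex hedge (isAdmissible_labels_face κ t).2
  simp only [colorSum, signedIntegral, hpart]

theorem colorSum_modEq (hp : Odd p) {T T' : Stage n (numLabels p) c} {l l' : ℕ → ℕ × ℕ}
    (hT : T.IsPlacedAt l) (hT' : T'.IsPlacedAt l') : colorSum T' 0 0 ≡ colorSum T 0 0 [ZMOD p] := by
  have hinterpolate (k : ℕ) (hk : k ≤ numLabels p) :
      colorSum (interpolate hT hT' k) 0 0 ≡ colorSum T 0 0 [ZMOD p] := by
    induction k with
    | zero => rw [colorSum_congr (T := T)] <;> intros <;> rfl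
    | succ k ih =>
      exact (colorSum_modEq_of_move (interpolateMove hT hT' hk) hp hk).trans
        (ih (Nat.le_of_succ_le hk))
  have hlast := hinterpolate _ le_rfl
  rwa [colorSum_congr (T := T') (fun a ha => if_pos ha) (fun a _ b hb => if_pos hb)] at hlast

end Coloring

/-! ### The diagonal stage -/

namespace Stage

open Coch Cell

variable {n R : ℕ} {c : ℕ → ℕ}

/-- The stage in which the label `a` is placed in the square `(a, a)` and labels are joined by
`Coch.path`. -/
def diagonal (hc : ∀ a < R, InClass c n a (a, a)) : Stage n R c where
  vertex a := point (a, a)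
  edge a b := path (a, a) (b, b)
  vertex_mem_degreeTwo _ := point_mem_degreeTwo _
  vertex_mem_onLines a ha := point_mem_onLines (hc a ha)
  edge_mem_degreeOne _ _ := path_mem_degreeOne _ _
  edge_mem_onLines a b hab hb := path_mem_onLines (hc a (hab.trans hb)) (hc b hb)
  d_edge _ _ _ _ := d_path _ _

variable (hc : ∀ a < R, InClass c n a (a, a))

lemma diagonal_isPlacedAt : (diagonal hc).IsPlacedAt fun a => (a, a) := fun a ha => ⟨hc a ha, rfl⟩

lemma part_diagonal_pair {a b : ℕ} (hab : a < b) (i j : ℕ) :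
    (diagonal hc).part [a, b] i j =
      (0, if i = b ∧ a < j ∧ j ≤ b then -1 else 0, if j = a ∧ a < i ∧ i ≤ b then 1 else 0, 0) := by
  simp only [part, diagonal, path]
  refine Cell.ext rfl ?_ ?_ rfl <;> simp only [hor_mk, ver_mk] <;> split_ifs <;>
    first | rfl | omega

lemma part_diagonal_triple {a b d : ℕ} (hab : a < b) (hbd : b < d) (i j : ℕ) :
    (diagonal hc).part [a, b, d] i j =
      (if b < i ∧ i ≤ d ∧ a < j ∧ j ≤ b then -1 else 0, 0, 0, 0) := by
  have hsum (x y : ℕ) : ∑ k ∈ range i, hor (path (x, x) (y, y) k j) =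
      if y < i then (if j ≤ x then 1 else 0) - (if j ≤ y then 1 else 0) else 0 := by
    simp [path, sum_ite_eq']
  simp only [part, diagonal, potential_apply, Pi.add_apply, Pi.sub_apply, map_add, map_sub,
    sum_add_distrib, sum_sub_distrib, hsum]
  refine Cell.ext ?_ rfl rfl rfl
  simp only [deg0_mk]
  split_ifs <;> first | rfl | omega

lemma eq_of_deg2_part_diagonal_ne_zero {l : List ℕ} {i j : ℕ}
    (h : deg2 ((diagonal hc).part l i j) ≠ 0) : i = j := by
  match l with
  | [a] => simp_all [part, diagonal, point]
  | [] | [_, _] | [_, _, _] | _ :: _ :: _ :: _ :: _ =>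
    simp [part, diagonal, path, potential_apply] at h

open scoped Classical in
lemma hor_part_diagonal {l : List ℕ} (hl : l.Pairwise (· < ·)) (i j : ℕ) :
    hor ((diagonal hc).part l i j) = if ∃ a, l = [a, i] ∧ a < j ∧ j ≤ i then -1 else 0 := by
  match l, hl with
  | [a, b], hl =>
    rw [part_diagonal_pair hc (by simpa using hl)]
    simp only [hor_mk]
    congr 1
    simp only [List.cons.injEq]
    grind
  | [], _ | [_], _ | [_, _, _], _ | _ :: _ :: _ :: _ :: _, _ =>
    simp [part, diagonal, point, potential_apply]

open scoped Classical in
lemma ver_part_diagonal {l : List ℕ} (hl : l.Pairwise (· < ·)) (i j : ℕ) :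
    ver ((diagonal hc).part l i j) = if ∃ e, l = [j, e] ∧ j < i ∧ i ≤ e then 1 else 0 := by
  match l, hl with
  | [a, b], hl =>
    rw [part_diagonal_pair hc (by simpa using hl)]
    simp only [ver_mk]
    congr 1
    simp only [List.cons.injEq]
    grind
  | [], _ | [_], _ | [_, _, _], _ | _ :: _ :: _ :: _ :: _, _ =>
    simp [part, diagonal, point, potential_apply]

open scoped Classical in
lemma deg0_part_diagonal {l : List ℕ} (hl : l.Pairwise (· < ·)) (i j : ℕ) :
    deg0 ((diagonal hc).part l i j) =
      if ∃ a b e, l = [a, b, e] ∧ a < j ∧ j ≤ b ∧ b < i ∧ i ≤ e then -1 else 0 := by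
  match l, hl with
  | [a, b, e], hl =>
    obtain ⟨hab, -, hbe⟩ : a < b ∧ a < e ∧ b < e := by simpa [and_assoc] using hl
    rw [part_diagonal_triple hc hab hbe]
    simp only [deg0_mk]
    congr 1
    simp only [List.cons.injEq]
    grind
  | [], _ | [_], _ | [_, _], _ | _ :: _ :: _ :: _ :: _, _ => simp [part, diagonal, point, path]

end Stage

namespace Coloring

variable {p : ℕ} [NeZero p]

lemma card_eq_of_existsUnique_mem_labels (κ : Coloring p) {U : Finset ℕ} {S : Finset (Fin p)}
    (hU : ∀ u ∈ U, u < numLabels p) (hS : ∀ t ∈ S, ∃! u, u ∈ U ∧ u ∈ (face κ t).labels)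
    (hUS : ∀ t, ∀ u ∈ U, u ∈ (face κ t).labels → t ∈ S) : #U = #S := by
  choose! color hcolor using fun u (hu : u ∈ U) => exists_mem_labels_face κ (hU u hu)
  refine card_nbij color (fun u hu => hUS _ u hu (hcolor u hu)) (fun u hu v hv huv => ?_)
    fun t ht => ?_
  · rw [mem_coe] at hu hv
    refine (hS _ (hUS _ u hu (hcolor u hu))).unique ⟨hu, hcolor u hu⟩ ⟨hv, ?_⟩
    rw [huv]
    exact hcolor v hv
  · obtain ⟨u, ⟨hu, hut⟩, -⟩ := hS t ht
    exact ⟨u, hu, eq_of_mem_labels_face (hcolor u hu) hut⟩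

/-- The combinatorial condition under which the grid point `(i, j)` contributes to the diagonal
stage: the curve of the face of colour `m` crosses the line `i`, that of colour `l` crosses the line
`j`, and the triangles of the other colours wind around the point. -/
def IsCrossedAt (κ : Coloring p) (i j : ℕ) (m l : Fin p) : Prop :=
  (∃ a, (face κ m).labels = [a, i] ∧ a < j ∧ j ≤ i) ∧
    (∃ e, (face κ l).labels = [j, e] ∧ j < i ∧ i ≤ e) ∧
    ∀ t, t ≠ m → t ≠ l → ∃ a b e, (face κ t).labels = [a, b, e] ∧ a < j ∧ j ≤ b ∧ b < i ∧ i ≤ e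

/-- The colour omitted by each block is the colour of the vertex preceding the block. -/
def IsLinked (κ : Coloring p) : Prop :=
  κ.2 0 0 = κ.1 ∧ κ.2 1 0 = κ.2 0 ⊤ ∧ κ.2 2 0 = κ.2 1 ⊤

lemma top_ne_zero (hp : 1 < p) : (⊤ : Fin p) ≠ 0 := fun h => hp.ne' (Fin.top_eq_zero.mp h)

lemma label_mem_labels_face (κ : Coloring p) (a : Fin 3) {r : Fin p} (hr : r ≠ 0) :
    label a r ∈ (face κ (κ.2 a r)).labels :=
  mem_labels_face.mpr (.inr ⟨a, r, hr, rfl, rfl⟩)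

lemma omitted_eq_of_notMem {κ : Coloring p} {t : Fin p} {a : Fin 3}
    (h : ∀ u ∈ (face κ t).labels, u ∉ Ioc ((a : ℕ) * (p - 1)) ((a + 1) * (p - 1))) :
    κ.2 a 0 = t := by
  by_contra hne
  have hr : (κ.2 a).symm t ≠ 0 := fun h0 => hne (by rw [← h0, Equiv.apply_symm_apply])
  have hmem := label_mem_labels_face κ a hr
  rw [Equiv.apply_symm_apply] at hmem
  exact h _ hmem (label_mem_Ioc a hr)

namespace IsCrossedAt

variable {κ : Coloring p} {i j : ℕ} {m l : Fin p}

lemma row_eq (h : IsCrossedAt κ i j m l) (hml : m ≠ l) : i = 2 * (p - 1) := by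
  obtain ⟨⟨a, hm, haj, hji⟩, ⟨e, hl, hjlt, hie⟩, hrest⟩ := h
  have hlt (t : Fin p) {u : ℕ} (hu : u ∈ (face κ t).labels) := (isAdmissible_labels_face κ t).2 u hu
  have hcard := card_eq_of_existsUnique_mem_labels κ (U := Ico i (numLabels p)) (S := univ)
    (fun u hu => (mem_Ico.mp hu).2) (fun t _ => ?_) fun t _ _ _ => mem_univ t
  · rw [Nat.card_Ico, card_univ, Fintype.card_fin] at hcard
    have := Fintype.one_lt_card_iff.mpr ⟨m, l, hml⟩
    rw [Fintype.card_fin] at this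
    rw [numLabels] at hcard
    omega
  · suffices ∃! u, i ≤ u ∧ u ∈ (face κ t).labels by
      refine (existsUnique_congr fun u => ?_).mp this
      rw [mem_Ico]
      exact ⟨fun hu => ⟨⟨hu.1, hlt t hu.2⟩, hu.2⟩, fun hu => ⟨hu.1.1, hu.2⟩⟩
    by_cases htm : t = m
    · subst htm
      exact ⟨i, by simp [hm], by grind⟩
    by_cases htl : t = l
    · subst htl
      exact ⟨e, by grind, by grind⟩
    obtain ⟨a, b, e, ht, h⟩ := hrest t htm htl
    exact ⟨e, by grind, by grind⟩

lemma col_eq (h : IsCrossedAt κ i j m l) : j = p - 1 := by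
  obtain ⟨⟨a, hm, haj, hji⟩, ⟨e, hl, hjlt, hie⟩, hrest⟩ := h
  have hi := (isAdmissible_labels_face κ m).2 i (by simp [hm])
  have hcard := card_eq_of_existsUnique_mem_labels κ (U := range j) (S := {l}ᶜ)
    (fun u hu => (mem_range.mp hu).trans_le (hji.trans hi.le)) (fun t ht => ?_) fun t u hu hut => ?_
  · simpa [card_compl] using hcard
  · by_cases htm : t = m
    · subst htm
      exact ⟨a, by simp [hm, haj], by grind⟩
    obtain ⟨a, b, e, ht, h⟩ := hrest t htm (by simpa using ht)
    exact ⟨a, by simp [ht, h], by grind⟩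
  · rw [mem_range] at hu
    simp only [mem_compl, mem_singleton]
    rintro rfl
    simp only [hl, List.mem_cons, List.not_mem_nil, or_false] at hut
    omega

lemma horColor_eq (h : IsCrossedAt κ i j m l) (hml : m ≠ l) : m = κ.2 1 ⊤ := by
  have hp : 1 < p := by simpa using Fintype.one_lt_card_iff.mpr ⟨m, l, hml⟩
  have hlabel : label 1 (⊤ : Fin p) = i := by
    simp [label, h.row_eq hml, two_mul]
  obtain ⟨a, hm, -⟩ := h.1
  exact eq_of_mem_labels_face (u := i) (by simp [hm])
    (hlabel ▸ label_mem_labels_face κ 1 (top_ne_zero hp))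

lemma verColor_eq (h : IsCrossedAt κ i j m l) (hml : m ≠ l) : l = κ.2 0 ⊤ := by
  have hp : 1 < p := by simpa using Fintype.one_lt_card_iff.mpr ⟨m, l, hml⟩
  have hlabel : label 0 (⊤ : Fin p) = j := by
    simp [label, h.col_eq]
  obtain ⟨e, hl, -⟩ := h.2.1
  exact eq_of_mem_labels_face (u := j) (by simp [hl])
    (hlabel ▸ label_mem_labels_face κ 0 (top_ne_zero hp))

lemma omitted_eq (h : IsCrossedAt κ i j m l) (hml : m ≠ l) : κ.2 0 0 = κ.1 := by
  have hp : 1 < p := by simpa using Fintype.one_lt_card_iff.mpr ⟨m, l, hml⟩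
  have hne : κ.2 0 0 ≠ l := by
    rw [h.verColor_eq hml]
    exact fun h0 => top_ne_zero hp ((κ.2 0).injective h0).symm
  obtain ⟨a, ha, haj⟩ : ∃ a ∈ (face κ (κ.2 0 0)).labels, a < j := by
    obtain ⟨⟨a, hm, haj, -⟩, -, hrest⟩ := h
    by_cases htm : κ.2 0 0 = m
    · exact ⟨a, by simp [htm, hm], haj⟩
    · obtain ⟨a, b, e, ht, haj, -⟩ := hrest _ htm hne
      exact ⟨a, by simp [ht], haj⟩
  rcases mem_labels_face.mp ha with ⟨-, h0⟩ | ⟨b, r, hr, rfl, hbr⟩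
  · exact h0.symm
  · rw [h.col_eq] at haj
    obtain rfl : b = 0 := by
      by_contra hb
      have hmul : 1 * (p - 1) ≤ b * (p - 1) :=
        Nat.mul_le_mul_right _ (Nat.one_le_iff_ne_zero.mpr (Fin.val_ne_zero_iff.mpr hb))
      rw [label] at haj
      omega
    exact absurd ((κ.2 0).injective hbr) hr

lemma isLinked (h : IsCrossedAt κ i j m l) (hml : m ≠ l) : IsLinked κ := by
  have hi := h.row_eq hml
  have hj := h.col_eq
  refine ⟨h.omitted_eq hml, ?_, ?_⟩
  · rw [← h.verColor_eq hml]
    obtain ⟨⟨a, hm, -⟩, ⟨e, hl, -, hie⟩, -⟩ := h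
    have hei : e ≠ i := by
      rintro rfl
      exact hml (eq_of_mem_labels_face (κ := κ) (u := e) (by simp [hm]) (by simp [hl]))
    refine omitted_eq_of_notMem fun u hu => ?_
    rw [hl] at hu
    simp only [List.mem_cons, List.not_mem_nil, or_false] at hu
    rw [mem_Ioc, Fin.val_one]
    omega
  · rw [← h.horColor_eq hml]
    obtain ⟨⟨a, hm, haj, -⟩, -, -⟩ := h
    refine omitted_eq_of_notMem fun u hu => ?_
    rw [hm] at hu
    simp only [List.mem_cons, List.not_mem_nil, or_false] at hu
    rw [mem_Ioc, Fin.val_two]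
    omega

end IsCrossedAt

namespace IsLinked

variable {κ : Coloring p}

lemma top_ne_top (h : IsLinked κ) (hp : 1 < p) : κ.2 1 ⊤ ≠ κ.2 0 ⊤ := by
  rw [← h.2.1]
  exact fun h0 => top_ne_zero hp ((κ.2 1).injective h0)

lemma labels_face (h : IsLinked κ) (t : Fin p) : (face κ t).labels = ((κ.2 0).symm t : ℕ) ::
    ((if (κ.2 1).symm t = 0 then [] else [label 1 ((κ.2 1).symm t)]) ++
      if (κ.2 2).symm t = 0 then [] else [label 2 ((κ.2 2).symm t)]) := by
  have h0 : κ.1 = t ↔ (κ.2 0).symm t = 0 := by rw [← h.1, Equiv.symm_apply_eq, eq_comm]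
  rw [Face.labels, show (1 : Fin 4) = Fin.succ 0 from rfl, show (2 : Fin 4) = Fin.succ 1 from rfl,
    show (3 : Fin 4) = Fin.succ 2 from rfl, face_zero, face_succ, face_succ, face_succ]
  simp only [h0]
  split_ifs with h0 <;> simp_all [label]

lemma isCrossedAt (h : IsLinked κ) (hp : 1 < p) :
    IsCrossedAt κ (2 * (p - 1)) (p - 1) (κ.2 1 ⊤) (κ.2 0 ⊤) := by
  have hlt {r : Fin p} (hr : r ≠ ⊤) : (r : ℕ) < p - 1 := by
    have := Fin.val_ne_of_ne hr
    rw [Fin.val_top] at this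
    omega
  have hpos {r : Fin p} (hr : r ≠ 0) : 0 < (r : ℕ) := Fin.pos_iff_ne_zero.mpr hr
  have hne := h.top_ne_top hp
  simp only [IsCrossedAt, h.labels_face, label]
  refine ⟨⟨(κ.2 0).symm (κ.2 1 ⊤), ?_, hlt ?_, by omega⟩,
    ⟨label 2 ((κ.2 2).symm (κ.2 0 ⊤)), ?_, by omega, ?_⟩, fun t htm htl =>
      ⟨(κ.2 0).symm t, label 1 ((κ.2 1).symm t), label 2 ((κ.2 2).symm t), ?_, ?_⟩⟩
  · rw [Equiv.symm_apply_apply, if_neg (top_ne_zero hp),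
      if_pos (by simp [Equiv.symm_apply_eq, h.2.2])]
    simp [two_mul]
  · simpa [Equiv.symm_apply_eq] using hne
  · rw [Equiv.symm_apply_apply, if_pos (by simp [Equiv.symm_apply_eq, h.2.1]), if_neg]
    · simp [label]
    · simpa [Equiv.symm_apply_eq, h.2.2] using hne.symm
  · simp [label]
  · rw [if_neg (by simpa [Equiv.symm_apply_eq, h.2.1]),
      if_neg (by simpa [Equiv.symm_apply_eq, h.2.2])]
    simp [label]
  · have h0 := hlt (r := (κ.2 0).symm t) (by simpa [Equiv.symm_apply_eq])
    have h1 := hlt (r := (κ.2 1).symm t) (by simpa [Equiv.symm_apply_eq])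
    have h1' := hpos (r := (κ.2 1).symm t) (by simpa [Equiv.symm_apply_eq, h.2.1])
    have h2' := hpos (r := (κ.2 2).symm t) (by simpa [Equiv.symm_apply_eq, h.2.2])
    simp only [label, Fin.val_one, Fin.val_two]
    omega

end IsLinked

lemma isCrossedAt_iff {κ : Coloring p} {i j : ℕ} {m l : Fin p} (hp : 1 < p) (hml : m ≠ l) :
    IsCrossedAt κ i j m l ↔
      m = κ.2 1 ⊤ ∧ l = κ.2 0 ⊤ ∧ IsLinked κ ∧ i = 2 * (p - 1) ∧ j = p - 1 := by
  refine ⟨fun h => ⟨h.horColor_eq hml, h.verColor_eq hml, h.isLinked hml, h.row_eq hml,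
    h.col_eq⟩, ?_⟩
  rintro ⟨rfl, rfl, h, rfl, rfl⟩
  exact h.isCrossedAt hp

end Coloring

namespace Coloring

open Stage Cell Coch

variable {p : ℕ} [NeZero p] {n : ℕ} {c : ℕ → ℕ}

lemma IsLinked.orientation_mul_pairSign {κ : Coloring p} (h : IsLinked κ) (hp : 1 < p)
    (h0 : κ.1 = 0) :
    (-1) ^ orientation (omitted κ) * pairSign (koszul (omitted κ)) (κ.2 1 ⊤) (κ.2 0 ⊤) = 1 := by
  have hne := h.top_ne_top hp
  have e0 : omitted κ 0 = 0 := h0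
  have e1 : omitted κ 1 = 0 := h.1.trans h0
  have e2 : omitted κ 2 = κ.2 0 ⊤ := h.2.1
  have e3 : omitted κ 3 = κ.2 1 ⊤ := h.2.2
  generalize κ.2 1 ⊤ = m at hne e3 ⊢
  generalize κ.2 0 ⊤ = l at hne e2 ⊢
  rw [pairSign, ← pow_add, ← pow_zero (-1)]
  refine neg_one_pow_eq_of_mod_two_eq ?_
  simp only [orientation, koszul, Fin.sum_univ_four, e0, e1, e2, e3, iverson]
  rcases lt_or_gt_of_ne hne with h | h
  · simp only [Fin.coe_ofNat_eq_mod, Nat.zero_mod, Fin.isValue, lt_self_iff_false, ↓reduceIte,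
      not_lt_zero, zero_lt_one, Fin.lt_one_iff, Fin.reduceEq, Fin.reduceLT, h, h.not_gt]
    omega
  · simp only [Fin.coe_ofNat_eq_mod, Nat.zero_mod, Fin.isValue, lt_self_iff_false, ↓reduceIte,
      not_lt_zero, zero_lt_one, Fin.lt_one_iff, Fin.reduceEq, Fin.reduceLT, h, h.not_gt]
    omega

variable (hc : ∀ a < numLabels p, InClass c n a (a, a))

open scoped Classical in
lemma hor_mul_ver_mul_prod_deg0_diagonal (hp : Odd p) (κ : Coloring p) (i j : ℕ) {m l : Fin p}
    (hml : m ≠ l) :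
    hor ((diagonal hc).part (face κ m).labels i j) *
        ver ((diagonal hc).part (face κ l).labels i j) *
      ∏ t ∈ {m, l}ᶜ, deg0 ((diagonal hc).part (face κ t).labels i j) =
      if IsCrossedAt κ i j m l then 1 else 0 := by
  have hsorted (t : Fin p) := (isAdmissible_labels_face κ t).1
  have hcard : #({m, l}ᶜ : Finset (Fin p)) = p - 2 := by
    rw [card_compl, card_pair hml, Fintype.card_fin]
  have hp2 : 2 ≤ p := Fin.nontrivial_iff_two_le.mp ⟨m, l, hml⟩
  rw [hor_part_diagonal hc (hsorted m), ver_part_diagonal hc (hsorted l),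
    prod_congr rfl fun t _ => deg0_part_diagonal hc (hsorted t) i j, prod_ite_zero, prod_const,
    hcard, (Nat.Odd.sub_even hp2 hp even_two).neg_one_pow]
  simp only [mem_compl, mem_insert, mem_singleton, not_or, and_imp]
  by_cases hm : ∃ a, (face κ m).labels = [a, i] ∧ a < j ∧ j ≤ i
  · by_cases hl : ∃ e, (face κ l).labels = [j, e] ∧ j < i ∧ i ≤ e
    · simp only [IsCrossedAt, hm, hl, if_true, true_and]
      split_ifs <;> rfl
    · simp [IsCrossedAt, hl]
  · simp [IsCrossedAt, hm]

lemma deg2_mul_prod_deg0_diagonal (hp : 1 < p) (κ : Coloring p) (i j : ℕ) (m : Fin p) :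
    deg2 ((diagonal hc).part (face κ m).labels i j) *
      ∏ t ∈ {m}ᶜ, deg0 ((diagonal hc).part (face κ t).labels i j) = 0 := by
  classical
  by_contra hne
  have hij := eq_of_deg2_part_diagonal_ne_zero hc (left_ne_zero_of_mul hne)
  have : Nontrivial (Fin p) := Fin.nontrivial_iff_two_le.mpr hp
  obtain ⟨t, ht⟩ := exists_ne m
  have hdeg := prod_ne_zero_iff.mp (right_ne_zero_of_mul hne) t (by simpa using ht)
  rw [deg0_part_diagonal hc (isAdmissible_labels_face κ t).1] at hdeg
  obtain ⟨a, b, e, -, h⟩ := (ite_ne_right_iff.mp hdeg).1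
  omega

open scoped Classical in
lemma wedgeTop_diagonal (hp : Odd p) (hp1 : 1 < p) (κ : Coloring p) (i j : ℕ) (s : Fin p → ℕ) :
    wedgeTop s (fun t => (diagonal hc).part (face κ t).labels i j) =
      if IsLinked κ ∧ i = 2 * (p - 1) ∧ j = p - 1 then pairSign s (κ.2 1 ⊤) (κ.2 0 ⊤) else 0 := by
  rw [wedgeTop_apply, sum_eq_zero fun m _ => deg2_mul_prod_deg0_diagonal hc hp1 κ i j m, zero_add]
  have hterm (m l : Fin p) (hl : l ∈ ({m}ᶜ : Finset (Fin p))) : pairSign s m l *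
      (hor ((diagonal hc).part (face κ m).labels i j) *
        ver ((diagonal hc).part (face κ l).labels i j) *
        ∏ t ∈ {m, l}ᶜ, deg0 ((diagonal hc).part (face κ t).labels i j)) =
      if m = κ.2 1 ⊤ then if l = κ.2 0 ⊤ then
        if IsLinked κ ∧ i = 2 * (p - 1) ∧ j = p - 1 then pairSign s m l else 0 else 0 else 0 := by
    have hml : m ≠ l := by simpa [eq_comm] using hl
    rw [hor_mul_ver_mul_prod_deg0_diagonal hc hp κ i j hml]
    simp only [isCrossedAt_iff hp1 hml, mul_ite, mul_one, mul_zero, ite_and]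
  rw [sum_congr rfl fun m _ => sum_congr rfl fun l hl => hterm m l hl]
  rw [Fintype.sum_eq_single (κ.2 1 ⊤) fun m hm => sum_eq_zero fun l _ => if_neg hm]
  simp only [if_true]
  by_cases h : IsLinked κ
  · rw [sum_eq_single_of_mem (κ.2 0 ⊤) (by simpa using (h.top_ne_top hp1).symm) fun l _ hl =>
      if_neg hl, if_pos rfl]
  · simp [h]

open scoped Classical in
lemma signedIntegral_diagonal (hp : Odd p) (hp1 : 1 < p) {κ : Coloring p} (h0 : κ.1 = 0) :
    signedIntegral (diagonal hc) κ = if IsLinked κ then 1 else 0 := by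
  have hn : 2 * (p - 1) < n := (hc (2 * (p - 1)) (by rw [numLabels]; omega)).2.2.1
  rw [signedIntegral, integral_apply]
  simp only [wedgeTop_diagonal hc hp hp1]
  by_cases h : IsLinked κ
  · rw [if_pos h, sum_eq_single_of_mem (2 * (p - 1)) (mem_range.mpr hn) fun i _ hi =>
        sum_eq_zero fun j _ => if_neg fun h => hi h.2.1,
      sum_eq_single_of_mem (p - 1) (mem_range.mpr (by omega)) fun j _ hj =>
        if_neg fun h => hj h.2.2, if_pos ⟨h, rfl, rfl⟩, h.orientation_mul_pairSign hp1 h0]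
  · simp [h]

open scoped Classical in
lemma colorSum_diagonal (hp : Odd p) (hp1 : 1 < p) :
    colorSum (diagonal hc) 0 0 = #{κ : Coloring p | κ.1 = 0 ∧ IsLinked κ} := by
  have hmem (κ : Coloring p) : 0 ∈ (face κ 0).labels ↔ κ.1 = 0 := by
    rw [mem_labels_face, or_iff_left]
    · simp
    · rintro ⟨a, r, hr, h, -⟩
      exact (label_pos a hr).ne h
  rw [colorSum, card_filter, Nat.cast_sum]
  refine sum_congr rfl fun κ _ => ?_
  simp only [hmem, ite_and]
  split_ifs with h0 h
  · rw [signedIntegral_diagonal hc hp hp1 h0, if_pos h, Nat.cast_one]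
  · rw [signedIntegral_diagonal hc hp hp1 h0, if_neg h, Nat.cast_zero]
  · rfl

lemma sum_fin_three_arrow {α M : Type*} [Fintype α] [AddCommMonoid M] (f : α → α → α → M) :
    ∑ g : Fin 3 → α, f (g 0) (g 1) (g 2) = ∑ x, ∑ y, ∑ z, f x y z := by
  rw [← (Fin.consEquiv fun _ : Fin 3 => α).sum_comp, Fintype.sum_prod_type]
  refine sum_congr rfl fun x _ => ?_
  rw [← (finTwoArrowEquiv α).symm.sum_comp, Fintype.sum_prod_type]
  rfl

lemma sum_perm_apply_zero_eq (y : Fin p) :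
    ∑ π : Equiv.Perm (Fin p), (if π 0 = y then 1 else 0) = (p - 1).factorial := by
  obtain ⟨q, rfl⟩ := Nat.exists_eq_succ_of_ne_zero (NeZero.ne p)
  rw [← Equiv.Perm.decomposeFin.symm.sum_comp, Fintype.sum_prod_type]
  simp [Fintype.card_perm]

open scoped Classical in
lemma card_isLinked :
    #{κ : Coloring p | κ.1 = 0 ∧ IsLinked κ} = (p - 1).factorial ^ 3 := by
  have hfactor (π : Fin 3 → Equiv.Perm (Fin p)) :
      (if IsLinked ((0 : Fin p), π) then 1 else 0) = (if π 0 0 = 0 then 1 else 0) *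
        ((if π 1 0 = π 0 ⊤ then 1 else 0) * if π 2 0 = π 1 ⊤ then 1 else 0) := by
    by_cases h0 : π 0 0 = 0
    · by_cases h1 : π 1 0 = π 0 ⊤ <;> simp [IsLinked, h0, h1]
    · simp [IsLinked, h0]
  rw [card_filter, Fintype.sum_prod_type, Fintype.sum_eq_single 0 fun ω hω => by simp [hω]]
  simp only [true_and, hfactor]
  rw [sum_fin_three_arrow fun x y z : Equiv.Perm (Fin p) => (if x 0 = 0 then 1 else 0) *
    ((if y 0 = x ⊤ then 1 else 0) * if z 0 = y ⊤ then 1 else 0)]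
  simp only [← mul_sum, sum_perm_apply_zero_eq, ← sum_mul]
  ring

lemma not_colorSum_diagonal_modEq_zero (hp : p.Prime) (hp2 : p ≠ 2) :
    ¬ colorSum (diagonal hc) 0 0 ≡ 0 [ZMOD p] := by
  classical
  rw [colorSum_diagonal hc (hp.odd_of_ne_two hp2) hp.one_lt, card_isLinked,
    Int.modEq_zero_iff_dvd, Int.natCast_dvd_natCast]
  intro h
  have := hp.dvd_factorial.mp (hp.dvd_of_dvd_pow h)
  have := hp.pos
  omega

/-- The optimal coloured Tverberg theorem for discretised drawings. -/
theorem exists_forall_part_ne_zero (hp : p.Prime) (hp2 : p ≠ 2)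
    (hc : ∀ a < numLabels p, InClass c n a (a, a)) {T : Stage n (numLabels p) c} {l : ℕ → ℕ × ℕ}
    (hT : T.IsPlacedAt l) :
    ∃ (κ : Coloring p) (i j : ℕ), i < n ∧ j < n ∧ ∀ t, T.part (face κ t).labels i j ≠ 0 := by
  by_contra! hcon
  have hzero : colorSum T 0 0 = 0 := by
    refine sum_eq_zero fun κ _ => ite_eq_right_iff.mpr fun _ => ?_
    rw [signedIntegral, integral_apply, sum_eq_zero, mul_zero]
    refine fun i hi => sum_eq_zero fun j hj => ?_
    obtain ⟨t, ht⟩ := hcon κ i j (mem_range.mp hi) (mem_range.mp hj)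
    exact MultilinearMap.map_coord_zero _ t ht
  have hmod := colorSum_modEq (hp.odd_of_ne_two hp2) hT (diagonal_isPlacedAt hc)
  rw [hzero] at hmod
  exact not_colorSum_diagonal_modEq_zero hc hp hp2 hmod

end Coloring

namespace Coch

lemma abs_sub_le_of_path_apply_ne_zero {y z : ℕ × ℕ} {i j : ℕ} (h : path y z i j ≠ 0) :
    |(i : ℤ) - z.1| ≤ |(y.1 : ℤ) - z.1| ∧ |(j : ℤ) - z.2| ≤ |(y.2 : ℤ) - z.2| := by
  contrapose! h
  refine Cell.ext rfl ?_ ?_ rfl <;>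
    simp only [path, Cell.hor_mk, Cell.ver_mk, map_zero] <;> grind

end Coch

/-- The signed number of crossings of the leftward ray from the lower left corner of the square
`(i, j)` with `Coch.path y z`. -/
def crossing (y z : ℕ × ℕ) (i j : ℕ) : ℤ :=
  if z.1 < i then (if j ≤ y.2 then 1 else 0) - (if j ≤ z.2 then 1 else 0) else 0

lemma deg0_potential_path (y z : ℕ × ℕ) (i j : ℕ) :
    Cell.deg0 (Coch.potential (Coch.path y z) i j) = crossing y z i j := by
  simp [Coch.potential_apply, Coch.path, crossing, sum_ite_eq']

/-- The squares `Q a b 0, …, Q a b K` lead from the square `l a` of class `a` to the square `l b` of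
class `b`, and all but the last one have class `a`. -/
structure IsChainSystem (n R : ℕ) (c : ℕ → ℕ) (l : ℕ → ℕ × ℕ) (K : ℕ)
    (Q : ℕ → ℕ → ℕ → ℕ × ℕ) : Prop where
  inClass_base : ∀ a < R, InClass c n a (l a)
  chain_zero : ∀ a b, Q a b 0 = l a
  chain_length : ∀ a b, Q a b K = l b
  inClass_chain : ∀ a < R, ∀ b < R, ∀ k < K, InClass c n a (Q a b k)

/-- The condition under which the face with the given labels covers the square `(i, j)` when labels
are placed in the squares `l a` and joined by the chains of squares `Q a b`. -/
def ChainCovers (l : ℕ → ℕ × ℕ) (K : ℕ) (Q : ℕ → ℕ → ℕ → ℕ × ℕ) (i j : ℕ) : List ℕ → Prop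
  | [a] => (i, j) = l a
  | [a, b] => ∃ k < K, |(i : ℤ) - (Q a b (k + 1)).1| ≤ |((Q a b k).1 : ℤ) - (Q a b (k + 1)).1| ∧
      |(j : ℤ) - (Q a b (k + 1)).2| ≤ |((Q a b k).2 : ℤ) - (Q a b (k + 1)).2|
  | [a, b, e] => ∑ k ∈ range K, crossing (Q b e k) (Q b e (k + 1)) i j -
      ∑ k ∈ range K, crossing (Q a e k) (Q a e (k + 1)) i j +
      ∑ k ∈ range K, crossing (Q a b k) (Q a b (k + 1)) i j ≠ 0
  | _ => False

namespace IsChainSystem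

open Coch

variable {n R : ℕ} {c : ℕ → ℕ} {l : ℕ → ℕ × ℕ} {K : ℕ} {Q : ℕ → ℕ → ℕ → ℕ × ℕ}

lemma path_mem_onLines (h : IsChainSystem n R c l K Q) {a b k : ℕ} (ha : a < R) (hb : b < R)
    (hk : k < K) : path (Q a b k) (Q a b (k + 1)) ∈ onLines n c {a, b} := by
  rcases Nat.lt_or_eq_of_le (Nat.succ_le_of_lt hk) with hk' | hk'
  · refine onLines_mono ?_ (Coch.path_mem_onLines (h.inClass_chain a ha b hb k hk)
      (h.inClass_chain a ha b hb (k + 1) hk'))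
    simp
  · refine Coch.path_mem_onLines (h.inClass_chain a ha b hb k hk) ?_
    rw [← Nat.succ_eq_add_one, hk', h.chain_length]
    exact h.inClass_base b hb

/-- The stage joining consecutive squares of a system of chains by `Coch.path`. -/
def stage (h : IsChainSystem n R c l K Q) : Stage n R c where
  vertex a := point (l a)
  edge a b := ∑ k ∈ range K, path (Q a b k) (Q a b (k + 1))
  vertex_mem_degreeTwo _ := point_mem_degreeTwo _
  vertex_mem_onLines a ha := point_mem_onLines (h.inClass_base a ha)
  edge_mem_degreeOne _ _ := sum_mem fun _ _ => path_mem_degreeOne _ _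
  edge_mem_onLines _ _ hab hb := sum_mem fun _ hk =>
    h.path_mem_onLines (hab.trans hb) hb (mem_range.mp hk)
  d_edge a b _ _ := by
    rw [map_sum, sum_congr rfl fun k _ => d_path (Q a b k) (Q a b (k + 1)),
      sum_range_sub' fun k => point (Q a b k), h.chain_zero, h.chain_length]

lemma stage_isPlacedAt (h : IsChainSystem n R c l K Q) : h.stage.IsPlacedAt l :=
  fun a ha => ⟨h.inClass_base a ha, rfl⟩

lemma deg0_potential_edge_stage (h : IsChainSystem n R c l K Q) (a b i j : ℕ) :
    Cell.deg0 (potential (h.stage.edge a b) i j) =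
      ∑ k ∈ range K, crossing (Q a b k) (Q a b (k + 1)) i j := by
  simp_rw [← deg0_potential_path]
  simp [stage]

lemma chainCovers_of_part_ne_zero (h : IsChainSystem n R c l K Q) {f : List ℕ} {i j : ℕ}
    (hf : h.stage.part f i j ≠ 0) : ChainCovers l K Q i j f := by
  match f with
  | [] | _ :: _ :: _ :: _ :: _ => exact hf rfl
  | [a] =>
    contrapose! hf
    exact Cell.ext rfl rfl rfl (if_neg fun hij => hf (Prod.ext hij.1 hij.2))
  | [a, b] =>
    have hsum : ∑ k ∈ range K, path (Q a b k) (Q a b (k + 1)) i j ≠ 0 := by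
      simpa only [Stage.part, stage, Finset.sum_apply] using hf
    obtain ⟨k, hk, hne⟩ := exists_ne_zero_of_sum_ne_zero hsum
    exact ⟨k, mem_range.mp hk, abs_sub_le_of_path_apply_ne_zero hne⟩
  | [a, b, e] =>
    refine fun hsum => hf (Cell.ext ?_ rfl rfl rfl)
    simpa only [Stage.part, map_add, map_sub, Pi.add_apply, Pi.sub_apply,
      h.deg0_potential_edge_stage, map_zero] using hsum

end IsChainSystem

/-! ### Winding numbers and continuous logarithms -/

section AxisCrossing

open scoped Real

lemma re_div_pos_of_norm_sub_lt {u w : ℂ} (h : ‖w - u‖ < ‖u‖) : 0 < (w / u).re := by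
  have hu : u ≠ 0 := norm_pos_iff.mp ((norm_nonneg _).trans_lt h)
  have h1 : ‖w / u - 1‖ < 1 := by
    rwa [div_sub_one hu, norm_div, div_lt_one (norm_pos_iff.mpr hu)]
  have h2 := (abs_lt.mp ((Complex.abs_re_le_norm (w / u - 1)).trans_lt h1)).1
  simp only [Complex.sub_re, Complex.one_re] at h2
  linarith

lemma abs_arg_div_lt_of_norm_sub_lt {u w : ℂ} (h : ‖w - u‖ < ‖u‖) : |(w / u).arg| < π / 2 :=
  Complex.abs_arg_lt_pi_div_two_iff.mpr (Or.inl (re_div_pos_of_norm_sub_lt h))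

lemma coe_arg_div_of_norm_sub_lt {u w : ℂ} (h : ‖w - u‖ < ‖u‖) :
    ((w / u).arg : Real.Angle) = w.arg - u.arg := by
  refine Complex.arg_div_coe_angle ?_ (norm_pos_iff.mp ((norm_nonneg _).trans_lt h))
  rintro rfl
  simp at h

lemma eq_add_two_pi_mul_of_coe_angle_eq {x y : ℝ} {m : ℤ} (h : (x : Real.Angle) = y)
    (hlt : |x - (y + 2 * π * m)| < 2 * π) : x = y + 2 * π * m := by
  obtain ⟨k, hk⟩ := Real.Angle.angle_eq_iff_two_pi_dvd_sub.mp h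
  have hkm : x - (y + 2 * π * m) = ((k - m : ℤ) : ℝ) * (2 * π) := by
    push_cast
    linarith
  rw [hkm, abs_mul, abs_of_pos Real.two_pi_pos, mul_lt_iff_lt_one_left Real.two_pi_pos,
    ← Int.cast_abs, ← Int.cast_one, Int.cast_lt, Int.abs_lt_one_iff] at hlt
  rw [hlt, Int.cast_zero, zero_mul] at hkm
  linarith

/-- The signed number of crossings of the negative real axis when stepping from `u` to `w`. -/
def axisCrossing (u w : ℂ) : ℤ :=
  if w.re < 0 then (if 0 < u.im then 1 else 0) - (if 0 < w.im then 1 else 0) else 0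

lemma arg_div_eq_add_axisCrossing {u w : ℂ} (hu : u.im ≠ 0) (hw : w.im ≠ 0)
    (h : ‖w - u‖ < ‖u‖) : (w / u).arg = w.arg - u.arg + 2 * π * axisCrossing u w := by
  refine eq_add_two_pi_mul_of_coe_angle_eq (by
    rw [coe_arg_div_of_norm_sub_lt h, Real.Angle.coe_sub]) ?_
  have hpos := Real.pi_pos
  have hdiv := abs_lt.mp (abs_arg_div_lt_of_norm_sub_lt h)
  obtain ⟨hu_gt, hu_le⟩ := Complex.arg_mem_Ioc u
  obtain ⟨hw_gt, hw_le⟩ := Complex.arg_mem_Ioc w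
  have hu_neg := Complex.arg_neg_iff (z := u)
  have hw_right := Complex.arg_le_pi_div_two_iff (z := w)
  have hw_right' := Complex.neg_pi_div_two_le_arg_iff (z := w)
  generalize (w / u).arg = δ at *
  rw [abs_lt, axisCrossing]
  push_cast
  split_ifs <;> grind

/-- The continuous argument `z.im` of `exp z`, corrected to a nearby point `u`, minus the principal
argument of `u`. -/
def argDefect (z u : ℂ) : ℝ := z.im + (u / Complex.exp z).arg - u.arg

lemma coe_arg_exp (z : ℂ) : ((Complex.exp z).arg : Real.Angle) = z.im := by
  rw [Complex.arg_exp]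
  exact Real.Angle.coe_toIocMod _ _

lemma axisCrossing_eq_argDefect_sub {y z u w : ℂ} (hyz : |z.im - y.im| < π / 2) (hu : u.im ≠ 0)
    (hw : w.im ≠ 0) (huw : ‖w - u‖ < ‖u‖) (hy : ‖u - Complex.exp y‖ < ‖Complex.exp y‖)
    (hz : ‖w - Complex.exp z‖ < ‖Complex.exp z‖) :
    2 * π * axisCrossing u w = argDefect z w - argDefect y u := by
  have hangle : ((w / u).arg : Real.Angle) =
      ((z.im + (w / Complex.exp z).arg - y.im - (u / Complex.exp y).arg : ℝ) : Real.Angle) := by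
    rw [Real.Angle.coe_sub, Real.Angle.coe_sub, Real.Angle.coe_add,
      coe_arg_div_of_norm_sub_lt huw, coe_arg_div_of_norm_sub_lt hy,
      coe_arg_div_of_norm_sub_lt hz, coe_arg_exp, coe_arg_exp]
    abel
  have hyz' := abs_lt.mp hyz
  have huw' := abs_lt.mp (abs_arg_div_lt_of_norm_sub_lt huw)
  have hy' := abs_lt.mp (abs_arg_div_lt_of_norm_sub_lt hy)
  have hz' := abs_lt.mp (abs_arg_div_lt_of_norm_sub_lt hz)
  have hsub := eq_add_two_pi_mul_of_coe_angle_eq (m := 0) hangle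
    (by rw [abs_lt, Int.cast_zero]; constructor <;> linarith)
  have hcross := arg_div_eq_add_axisCrossing hu hw huw
  rw [Int.cast_zero] at hsub
  unfold argDefect
  linarith

variable {α : Type*} [ConditionallyCompleteLinearOrder α] [DenselyOrdered α] [TopologicalSpace α]
  [OrderTopology α]

lemma abs_im_sub_lt_of_norm_exp_sub_lt {Θ : α → ℂ} (hΘ : Continuous Θ) {s t : α} (hst : s ≤ t)
    (h : ∀ r ∈ Set.Icc s t,
      ‖Complex.exp (Θ r) - Complex.exp (Θ s)‖ < ‖Complex.exp (Θ s)‖) :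
    |(Θ t).im - (Θ s).im| < π / 2 := by
  have hcos : ∀ r ∈ Set.Icc s t, 0 < Real.cos ((Θ r).im - (Θ s).im) := by
    intro r hr
    have := re_div_pos_of_norm_sub_lt (h r hr)
    rw [← Complex.exp_sub, Complex.exp_re, Complex.sub_im] at this
    exact (pos_iff_pos_of_mul_pos this).mp (Real.exp_pos _)
  have hcont : ContinuousOn (fun r => |(Θ r).im - (Θ s).im|) (Set.Icc s t) :=
    (by fun_prop : Continuous _).continuousOn
  by_contra! hge
  have hmem : π / 2 ∈ Set.Icc |(Θ s).im - (Θ s).im| |(Θ t).im - (Θ s).im| :=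
    ⟨by simpa using Real.pi_div_two_pos.le, hge⟩
  obtain ⟨r, hr, hr_eq⟩ := intermediate_value_Icc hst hcont hmem
  have hpos := hcos r hr
  rw [← Real.cos_abs, show |(Θ r).im - (Θ s).im| = π / 2 from hr_eq, Real.cos_pi_div_two] at hpos
  exact lt_irrefl _ hpos

lemma sum_axisCrossing {Θ : α → ℂ} (hΘ : Continuous Θ) {τ : ℕ → α} (hτ : Monotone τ) (K : ℕ)
    {u : ℕ → ℂ} (hu : ∀ k, (u k).im ≠ 0) (huu : ∀ k < K, ‖u (k + 1) - u k‖ < ‖u k‖)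
    (h : ∀ k < K, ∀ r ∈ Set.Icc (τ k) (τ (k + 1)),
      ‖Complex.exp (Θ r) - Complex.exp (Θ (τ k))‖ < ‖Complex.exp (Θ (τ k))‖)
    (hs : ∀ k ≤ K, ‖u k - Complex.exp (Θ (τ k))‖ < ‖Complex.exp (Θ (τ k))‖) :
    2 * π * ((∑ k ∈ range K, axisCrossing (u k) (u (k + 1)) : ℤ) : ℝ) =
      argDefect (Θ (τ K)) (u K) - argDefect (Θ (τ 0)) (u 0) := by
  rw [← sum_range_sub fun k => argDefect (Θ (τ k)) (u k), Int.cast_sum, mul_sum]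
  refine sum_congr rfl fun k hk => ?_
  rw [mem_range] at hk
  exact axisCrossing_eq_argDefect_sub
    (abs_im_sub_lt_of_norm_exp_sub_lt hΘ (hτ (Nat.le_succ k)) (h k hk)) (hu k) (hu (k + 1))
    (huu k hk) (hs k hk.le) (hs (k + 1) hk)

end AxisCrossing

lemma natCast_sub_add_half_pos {a b : ℕ} : 0 < (a : ℝ) - b + 1 / 2 ↔ b ≤ a := by
  rw [← Nat.lt_succ_iff, ← Nat.cast_lt (α := ℝ), Nat.cast_succ]
  refine ⟨fun h => by linarith, fun h => ?_⟩
  have : (b : ℝ) ≤ a := by exact_mod_cast Nat.lt_succ_iff.mp (by exact_mod_cast h)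
  linarith

lemma natCast_sub_add_half_ne_zero (a b : ℕ) : (a : ℝ) - b + 1 / 2 ≠ 0 := by
  rcases Nat.lt_or_ge a b with h | h
  · have : (a : ℝ) + 1 ≤ b := by exact_mod_cast h
    linarith
  · exact (natCast_sub_add_half_pos.mpr h).ne'

lemma natCast_sub_add_half_neg {a b : ℕ} : (a : ℝ) - b + 1 / 2 < 0 ↔ a < b := by
  rw [← (natCast_sub_add_half_ne_zero a b).le_iff_lt, ← not_lt, natCast_sub_add_half_pos, not_le]

namespace Grid

variable (R : ℕ) (D M : ℝ)

/-- The index of a line of class `a` modulo `R` close to the line at height `t`, for a grid of mesh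
`D / R` that starts at `-M`. -/
def index (a : ℕ) (t : ℝ) : ℕ := R * ⌊(t + M) / D⌋₊ + a

/-- The square of class `a` close to `w`. -/
def square (a : ℕ) (w : ℂ) : ℕ × ℕ := (index R D M a w.re, index R D M a w.im)

/-- The number of lines of the grid in each direction needed to cover the disc of radius `M`. -/
def size : ℕ := R * (⌊2 * M / D⌋₊ + 1)

/-- The centre of a square. -/
def center (z : ℕ × ℕ) : ℂ := ⟨D / R * z.1 - M, D / R * z.2 - M⟩

/-- The lower left corner of a square. -/
def corner (i j : ℕ) : ℂ := ⟨D / R * (i - 1 / 2) - M, D / R * (j - 1 / 2) - M⟩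

variable {R D M}

lemma abs_index_sub_le (hD : 0 < D) {a : ℕ} (ha : a < R) {t : ℝ} (ht : |t| ≤ M) :
    |D / R * index R D M a t - M - t| ≤ D := by
  have hR : (0 : ℝ) < R := by exact_mod_cast (Nat.zero_le a).trans_lt ha
  have hfloor := Nat.floor_le (div_nonneg (by linarith [(abs_le.mp ht).1]) hD.le : 0 ≤ (t + M) / D)
  have hlt := Nat.lt_floor_add_one ((t + M) / D)
  rw [le_div_iff₀ hD] at hfloor
  rw [div_lt_iff₀ hD] at hlt
  have hindex : D / R * index R D M a t = ⌊(t + M) / D⌋₊ * D + D * (a / R) := by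
    unfold index
    push_cast
    field_simp
  have hle_one : (a : ℝ) / R ≤ 1 := (div_le_one hR).mpr (by exact_mod_cast ha.le)
  have hnonneg : (0 : ℝ) ≤ a / R := by positivity
  rw [hindex, abs_le]
  constructor <;> nlinarith

lemma index_lt_size (hD : 0 < D) {a : ℕ} (ha : a < R) {t : ℝ} (ht : |t| ≤ M) :
    index R D M a t < size R D M := by
  have h : ⌊(t + M) / D⌋₊ ≤ ⌊2 * M / D⌋₊ :=
    Nat.floor_le_floor (by gcongr; linarith [(abs_le.mp ht).2])
  unfold index size
  nlinarith

lemma index_mod {a : ℕ} (ha : a < R) (t : ℝ) : index R D M a t % R = a := by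
  rw [index, Nat.mul_add_mod, Nat.mod_eq_of_lt ha]

lemma inClass_square (hD : 0 < D) {a : ℕ} (ha : a < R) {w : ℂ} (hw : ‖w‖ ≤ M) :
    InClass (· % R) (size R D M) a (square R D M a w) :=
  ⟨index_mod ha _, index_mod ha _, index_lt_size hD ha ((Complex.abs_re_le_norm w).trans hw),
    index_lt_size hD ha ((Complex.abs_im_le_norm w).trans hw)⟩

lemma norm_center_square_sub_le (hD : 0 < D) {a : ℕ} (ha : a < R) {w : ℂ} (hw : ‖w‖ ≤ M) :
    ‖center R D M (square R D M a w) - w‖ ≤ 2 * D := by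
  have hre := abs_index_sub_le hD ha ((Complex.abs_re_le_norm w).trans hw)
  have him := abs_index_sub_le hD ha ((Complex.abs_im_le_norm w).trans hw)
  refine (Complex.norm_le_abs_re_add_abs_im _).trans ?_
  rw [Complex.sub_re, Complex.sub_im]
  simp only [center, square]
  linarith

lemma center_sub_corner_re (z : ℕ × ℕ) (i j : ℕ) :
    (center R D M z - corner R D M i j).re = D / R * (z.1 - i + 1 / 2) := by
  simp only [Complex.sub_re, center, corner]
  ring

lemma center_sub_corner_im (z : ℕ × ℕ) (i j : ℕ) :
    (center R D M z - corner R D M i j).im = D / R * (z.2 - j + 1 / 2) := by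
  simp only [Complex.sub_im, center, corner]
  ring

lemma mesh_pos (hD : 0 < D) (hR : 0 < R) : 0 < D / R := div_pos hD (by exact_mod_cast hR)

lemma mesh_le (hD : 0 < D) (hR : 0 < R) : D / R ≤ D := div_le_self hD.le (by exact_mod_cast hR)

lemma axisCrossing_center_sub_corner (hD : 0 < D) (hR : 0 < R) (y z : ℕ × ℕ) (i j : ℕ) :
    axisCrossing (center R D M y - corner R D M i j) (center R D M z - corner R D M i j) =
      crossing y z i j := by
  have hneg (x : ℝ) : D / R * x < 0 ↔ x < 0 := by
    rw [← not_le, mul_nonneg_iff_of_pos_left (mesh_pos hD hR), not_le]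
  simp only [crossing, axisCrossing, center_sub_corner_re, center_sub_corner_im,
    mul_pos_iff_of_pos_left (mesh_pos hD hR), natCast_sub_add_half_pos,
    hneg, natCast_sub_add_half_neg]

lemma center_sub_corner_im_ne_zero (hD : 0 < D) (hR : 0 < R) (z : ℕ × ℕ) (i j : ℕ) :
    (center R D M z - corner R D M i j).im ≠ 0 := by
  rw [center_sub_corner_im]
  exact mul_ne_zero (mesh_pos hD hR).ne' (natCast_sub_add_half_ne_zero _ _)

lemma norm_center_sub_corner_le (hD : 0 < D) (hR : 0 < R) {y z : ℕ × ℕ} {i j : ℕ}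
    (h1 : |(i : ℤ) - z.1| ≤ |(y.1 : ℤ) - z.1|) (h2 : |(j : ℤ) - z.2| ≤ |(y.2 : ℤ) - z.2|) :
    ‖center R D M z - corner R D M i j‖ ≤ 2 * ‖center R D M y - center R D M z‖ + D := by
  have hmesh := mesh_pos hD hR
  have hcoord {i y z : ℕ} (h : |(i : ℤ) - z| ≤ |(y : ℤ) - z|) :
      |D / R * ((z : ℝ) - i + 1 / 2)| ≤ |D / R * y - M - (D / R * z - M)| + D / R / 2 := by
    have h' : |(i : ℝ) - z| ≤ |(y : ℝ) - z| := by exact_mod_cast h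
    rw [show D / R * ((z : ℝ) - i + 1 / 2) = -(D / R * (i - z)) + D / R / 2 by ring,
      show D / R * y - M - (D / R * z - M) = D / R * (y - z) by ring]
    refine (abs_add_le _ _).trans ?_
    rw [abs_neg, abs_mul, abs_mul, abs_of_pos (half_pos hmesh), abs_of_pos hmesh]
    gcongr
  have hre : |D / R * y.1 - M - (D / R * z.1 - M)| ≤ _ :=
    Complex.abs_re_le_norm (center R D M y - center R D M z)
  have him : |D / R * y.2 - M - (D / R * z.2 - M)| ≤ _ :=
    Complex.abs_im_le_norm (center R D M y - center R D M z)
  refine (Complex.norm_le_abs_re_add_abs_im _).trans ?_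
  rw [center_sub_corner_re, center_sub_corner_im]
  linarith [hcoord h1, hcoord h2, mesh_le hD hR]

lemma norm_corner_le (hD : 0 < D) (hR : 0 < R) (hM : 0 ≤ M) {i j : ℕ} (hi : i < size R D M)
    (hj : j < size R D M) : ‖corner R D M i j‖ ≤ 2 * (M + D) := by
  have hR' : (R : ℝ) ≠ 0 := by exact_mod_cast hR.ne'
  have hmesh := mesh_pos hD hR
  have hfloor := Nat.floor_le (show 0 ≤ 2 * M / D by positivity)
  rw [le_div_iff₀ hD] at hfloor
  have hcoord {i : ℕ} (hi : i < size R D M) : |D / R * ((i : ℝ) - 1 / 2) - M| ≤ M + D := by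
    have hi' : (i : ℝ) ≤ R * (⌊2 * M / D⌋₊ + 1) := by exact_mod_cast hi.le
    have hupper : D / R * i ≤ ⌊2 * M / D⌋₊ * D + D := by
      calc D / R * i ≤ D / R * (R * (⌊2 * M / D⌋₊ + 1)) := by gcongr
        _ = _ := by field_simp [hR']
    have hlower : 0 ≤ D / R * i := by positivity
    rw [abs_le]
    constructor <;> linarith [mesh_le hD hR]
  refine (Complex.norm_le_abs_re_add_abs_im _).trans ?_
  simp only [corner]
  linarith [hcoord hi, hcoord hj]

end Grid

section PathLog

variable {u v w x θ ψ η : ℂ}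

/-- `Γ` is a continuous logarithm of the path `γ` around `x`. -/
def IsPathLog (x : ℂ) (γ : Path u v) (Γ : Path θ ψ) : Prop :=
  ∀ r, Complex.exp (Γ r) = γ r - x

/-- The paths `γ₁`, `γ₂` and `γ₃` from `u` to `v`, from `v` to `w` and from `u` to `w` have
continuous logarithms around `x` which agree at `u`, `v` and `w`. -/
def HasClosedLog (x : ℂ) (γ₁ : Path u v) (γ₂ : Path v w) (γ₃ : Path u w) : Prop :=
  ∃ (θ ψ η : ℂ) (Γ₁ : Path θ ψ) (Γ₂ : Path ψ η) (Γ₃ : Path θ η),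
    IsPathLog x γ₁ Γ₁ ∧ IsPathLog x γ₂ Γ₂ ∧ IsPathLog x γ₃ Γ₃

namespace IsPathLog

lemma refl (h : Complex.exp θ = u - x) : IsPathLog x (Path.refl u) (Path.refl θ) := fun _ => h

lemma symm {γ : Path u v} {Γ : Path θ ψ} (h : IsPathLog x γ Γ) : IsPathLog x γ.symm Γ.symm :=
  fun r => h (unitInterval.symm r)

lemma trans {γ : Path u v} {δ : Path v w} {Γ : Path θ ψ} {Δ : Path ψ η} (h : IsPathLog x γ Γ)
    (h' : IsPathLog x δ Δ) : IsPathLog x (γ.trans δ) (Γ.trans Δ) := by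
  intro r
  rw [Path.trans_apply, Path.trans_apply]
  split_ifs
  exacts [h _, h' _]

lemma exp_target {γ : Path u v} {Γ : Path θ ψ} (h : IsPathLog x γ Γ) :
    Complex.exp ψ = v - x := by
  simpa using h 1

end IsPathLog

lemma exists_isPathLog {γ : Path u v} (hγ : ∀ r, γ r ≠ x) (hθ : Complex.exp θ = u - x) :
    ∃ (ψ : ℂ) (Γ : Path θ ψ), IsPathLog x γ Γ := by
  let F : C(unitInterval, {z : ℂ // z ≠ 0}) :=
    ⟨fun r => ⟨γ r - x, sub_ne_zero.mpr (hγ r)⟩, by fun_prop⟩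
  have hF : F 0 = ⟨Complex.exp θ, Complex.exp_ne_zero θ⟩ := Subtype.ext (by simp [F, hθ])
  let Γ := Complex.isCoveringMap_exp.liftPath F θ hF
  refine ⟨Γ 1, ⟨Γ, Complex.isCoveringMap_exp.liftPath_zero F θ hF, rfl⟩, fun r => ?_⟩
  exact congrArg Subtype.val (congrFun (Complex.isCoveringMap_exp.liftPath_lifts F θ hF) r)

lemma IsPathLog.eq_of_homotopic_refl {X : Type*} [TopologicalSpace X] {q : X} {ω : Path q q}
    (hω : ω.Homotopic (Path.refl q)) (F : C(X, {z : ℂ // z ≠ 0})) {γ : Path u u} {Γ : Path θ ψ}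
    (hF : ∀ r, (F (ω r) : ℂ) = γ r - x) (h : IsPathLog x γ Γ) : ψ = θ := by
  have hlift (r) : F (ω r) = ⟨Complex.exp (Γ r), Complex.exp_ne_zero _⟩ :=
    Subtype.ext ((hF r).trans (h r).symm)
  have hq : F q = ⟨Complex.exp θ, Complex.exp_ne_zero θ⟩ := by simpa using hlift 0
  have hω₀ : (F.comp ω.toContinuousMap) 0 = ⟨Complex.exp θ, Complex.exp_ne_zero θ⟩ := by
    simpa using hq
  have hΓ := Complex.isCoveringMap_exp.eq_liftPath_iff' hω₀ (Γ := Γ.toContinuousMap) |>.mpr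
    ⟨funext fun r => (hlift r).symm, Γ.source⟩
  have hend := Complex.isCoveringMap_exp.liftPath_apply_one_eq_of_homotopicRel
    (ContinuousMap.HomotopicRel.comp_continuousMap hω F) θ hω₀ hq
  rw [← hΓ] at hend
  exact (Γ.target.symm.trans hend).trans
    (DFunLike.congr_fun (Complex.isCoveringMap_exp.liftPath_const hq) 1)

lemma hasClosedLog_of_homotopic_refl {X : Type*} [TopologicalSpace X] {q : X} {ω : Path q q}
    (hω : ω.Homotopic (Path.refl q)) (F : C(X, {z : ℂ // z ≠ 0})) {γ₁ : Path u v} {γ₂ : Path v w}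
    {γ₃ : Path u w}
    (hF : ∀ r, (F (ω r) : ℂ) = (γ₁.trans (γ₂.trans (γ₃.symm.trans (Path.refl u)))) r - x)
    (h₁ : ∀ r, γ₁ r ≠ x) (h₂ : ∀ r, γ₂ r ≠ x) (h₃ : ∀ r, γ₃ r ≠ x) :
    HasClosedLog x γ₁ γ₂ γ₃ := by
  have hu : u - x ≠ 0 := by simpa [sub_eq_zero] using h₁ 0
  obtain ⟨ψ, Γ₁, hΓ₁⟩ := exists_isPathLog h₁ (Complex.exp_log hu)
  obtain ⟨η, Γ₂, hΓ₂⟩ := exists_isPathLog h₂ hΓ₁.exp_target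
  obtain ⟨θ, Γ₃, hΓ₃⟩ := exists_isPathLog (γ := γ₃.symm) (fun r => h₃ _) hΓ₂.exp_target
  obtain rfl : θ = Complex.log (u - x) := IsPathLog.eq_of_homotopic_refl hω F hF
    (hΓ₁.trans (hΓ₂.trans (hΓ₃.trans (.refl hΓ₃.exp_target))))
  exact ⟨_, _, _, Γ₁, Γ₂, Γ₃.symm, hΓ₁, hΓ₂, by simpa using hΓ₃.symm⟩

/-- A logarithm of `exp θ - c`, which depends continuously on `θ` as long as `‖c‖ < ‖exp θ‖`. -/
def shiftLog (c θ : ℂ) : ℂ := θ + Complex.log (1 - c * Complex.exp (-θ))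

lemma one_sub_mul_exp_neg_mem_slitPlane {c : ℂ} (h : ‖c‖ < ‖Complex.exp θ‖) :
    1 - c * Complex.exp (-θ) ∈ Complex.slitPlane := by
  rw [sub_eq_add_neg]
  apply Complex.mem_slitPlane_of_norm_lt_one
  rw [norm_neg, Complex.exp_neg, norm_mul, norm_inv, ← div_eq_mul_inv]
  exact (div_lt_one ((norm_nonneg _).trans_lt h)).mpr h

lemma exp_shiftLog {c : ℂ} (h : ‖c‖ < ‖Complex.exp θ‖) :
    Complex.exp (shiftLog c θ) = Complex.exp θ - c := by
  rw [shiftLog, Complex.exp_add,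
    Complex.exp_log (Complex.slitPlane_ne_zero (one_sub_mul_exp_neg_mem_slitPlane h)), mul_sub,
    mul_one, mul_left_comm, ← Complex.exp_add, add_neg_cancel, Complex.exp_zero, mul_one]

lemma IsPathLog.exists_shift {y : ℂ} {γ : Path u v} {Γ : Path θ ψ} (h : IsPathLog x γ Γ)
    (hy : ∀ r, ‖y - x‖ < ‖γ r - x‖) :
    ∃ Δ : Path (shiftLog (y - x) θ) (shiftLog (y - x) ψ), IsPathLog y γ Δ := by
  have hlt (r) : ‖y - x‖ < ‖Complex.exp (Γ r)‖ := h r ▸ hy r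
  refine ⟨Γ.map' (f := shiftLog (y - x)) ?_, fun r => ?_⟩
  · refine continuousOn_id.add (ContinuousOn.clog (by fun_prop) ?_)
    rintro _ ⟨r, rfl⟩
    exact one_sub_mul_exp_neg_mem_slitPlane (hlt r)
  · exact (exp_shiftLog (hlt r)).trans (by rw [h r, sub_sub_sub_cancel_right])

lemma HasClosedLog.of_norm_sub_lt {y : ℂ} {γ₁ : Path u v} {γ₂ : Path v w} {γ₃ : Path u w}
    (h : HasClosedLog x γ₁ γ₂ γ₃) (h₁ : ∀ r, ‖y - x‖ < ‖γ₁ r - x‖)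
    (h₂ : ∀ r, ‖y - x‖ < ‖γ₂ r - x‖) (h₃ : ∀ r, ‖y - x‖ < ‖γ₃ r - x‖) :
    HasClosedLog y γ₁ γ₂ γ₃ := by
  obtain ⟨θ, ψ, η, Γ₁, Γ₂, Γ₃, hΓ₁, hΓ₂, hΓ₃⟩ := h
  obtain ⟨Δ₁, hΔ₁⟩ := hΓ₁.exists_shift h₁
  obtain ⟨Δ₂, hΔ₂⟩ := hΓ₂.exists_shift h₂
  obtain ⟨Δ₃, hΔ₃⟩ := hΓ₃.exists_shift h₃
  exact ⟨_, _, _, Δ₁, Δ₂, Δ₃, hΔ₁, hΔ₂, hΔ₃⟩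

end PathLog

section Near

variable {u v x : ℂ}

/-- The path `γ` comes within distance `ε` of `x`. -/
def PassesWithin (ε : ℝ) (x : ℂ) (γ : Path u v) : Prop := ∃ r, ‖γ r - x‖ ≤ ε

lemma exists_pos_le_norm_sub {γ : Path u v} (h : ¬ PassesWithin 0 x γ) :
    ∃ δ > 0, ∀ r, δ ≤ ‖γ r - x‖ := by
  obtain ⟨s, -, hmin⟩ := isCompact_univ.exists_isMinOn Set.univ_nonempty
    (show ContinuousOn (fun r => ‖γ r - x‖) Set.univ by fun_prop)
  exact ⟨_, not_le.mp fun hs => h ⟨s, hs⟩, fun r => hmin (Set.mem_univ r)⟩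

lemma eventually_not_passesWithin {ι : Type*} {l : Filter ι} {ε : ι → ℝ} {y : ι → ℂ} {γ : Path u v}
    (hε : Tendsto ε l (𝓝 0)) (hy : Tendsto y l (𝓝 x)) (h : ¬ PassesWithin 0 x γ) :
    ∀ᶠ n in l, ¬ PassesWithin (ε n) (y n) γ ∧ ∀ r, ‖y n - x‖ < ‖γ r - x‖ := by
  obtain ⟨δ, hδ, hle⟩ := exists_pos_le_norm_sub h
  filter_upwards [hε.eventually (gt_mem_nhds (half_pos hδ)),
    hy.eventually (Metric.ball_mem_nhds x (half_pos hδ))] with n hεn hyn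
  rw [dist_eq_norm] at hyn
  refine ⟨?_, fun r => by linarith [hle r]⟩
  rintro ⟨r, hr⟩
  linarith [hle r, norm_sub_le_norm_sub_add_norm_sub (γ r) (y n) x]

variable {φ : ℕ → ℂ}

/-- The point `x` is, up to `ε`, on the drawing of a face or encircled by it; a face is given by
its list of at most three vertices, and `γ a b` is the drawing of the edge from `a` to `b`. -/
def Near (γ : ∀ a b, Path (φ a) (φ b)) (ε : ℝ) (x : ℂ) : List ℕ → Prop
  | [a] => ‖φ a - x‖ ≤ ε
  | [a, b] => PassesWithin ε x (γ a b)
  | [a, b, e] => PassesWithin ε x (γ a b) ∨ PassesWithin ε x (γ b e) ∨ PassesWithin ε x (γ a e) ∨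
      ¬ HasClosedLog x (γ a b) (γ b e) (γ a e)
  | _ => False

lemma Near.of_tendsto {γ : ∀ a b, Path (φ a) (φ b)} {ι : Type*} {l : Filter ι} [l.NeBot]
    {ε : ι → ℝ} {y : ι → ℂ} (hε : Tendsto ε l (𝓝 0)) (hy : Tendsto y l (𝓝 x)) {f : List ℕ}
    (h : ∀ᶠ n in l, Near γ (ε n) (y n) f) : Near γ 0 x f := by
  match f with
  | [] | _ :: _ :: _ :: _ :: _ => exact h.exists.choose_spec
  | [a] => exact le_of_tendsto_of_tendsto (tendsto_const_nhds.sub hy).norm hε h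
  | [a, b] =>
    by_contra hab
    obtain ⟨n, hn, hfar, -⟩ := (h.and (eventually_not_passesWithin hε hy hab)).exists
    exact hfar hn
  | [a, b, e] =>
    by_contra hfar
    simp only [Near, not_or, not_not] at hfar
    obtain ⟨hab, hbe, hae, hlog⟩ := hfar
    obtain ⟨n, hn, hab, hbe, hae⟩ := (h.and ((eventually_not_passesWithin hε hy hab).and
      ((eventually_not_passesWithin hε hy hbe).and (eventually_not_passesWithin hε hy hae)))).exists
    rcases hn with hn | hn | hn | hn
    exacts [hab.1 hn, hbe.1 hn, hae.1 hn, hn (hlog.of_norm_sub_lt hab.2 hbe.2 hae.2)]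

end Near

namespace Grid

/-- The times `0, 1 / N, …, 1`, followed by `1` for ever. -/
def time (N k : ℕ) : unitInterval := Set.projIcc 0 1 zero_le_one (k / N : ℝ)

lemma monotone_time (N : ℕ) : Monotone (time N) :=
  fun _ _ h => Set.monotone_projIcc _ (by gcongr)

lemma time_zero (N : ℕ) : time N 0 = 0 := by simp [time]

lemma time_of_le {N k : ℕ} (hN : 0 < N) (hk : N ≤ k) : time N k = 1 :=
  Set.projIcc_of_right_le _ ((one_le_div (by exact_mod_cast hN)).mpr (by exact_mod_cast hk))

lemma dist_time_succ_le (N k : ℕ) : dist (time N (k + 1)) (time N k) ≤ 1 / N := by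
  refine (LipschitzWith.projIcc zero_le_one).dist_le_mul _ _ |>.trans_eq ?_
  rw [NNReal.coe_one, one_mul, Real.dist_eq, ← sub_div, Nat.cast_succ, add_sub_cancel_left,
    abs_of_nonneg (by positivity)]

variable {R N : ℕ} {D M ε : ℝ} {φ : ℕ → ℂ} {γ : ∀ a b, Path (φ a) (φ b)}

/-- The squares approximating the path from `φ a` to `φ b` at the times `0, 1 / N, …, 1`, followed
by the square of class `b` close to `φ b`. -/
def chain (R N : ℕ) (D M : ℝ) (γ : ∀ a b, Path (φ a) (φ b)) (a b k : ℕ) : ℕ × ℕ :=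
  if k ≤ N then square R D M a (γ a b (time N k)) else square R D M b (φ b)

/-- The conditions under which the chains of squares approximate the paths up to `ε`. -/
structure IsFine (R N : ℕ) (D M ε : ℝ) (γ : ∀ a b, Path (φ a) (φ b)) : Prop where
  pos_N : 0 < N
  pos_D : 0 < D
  mul_D_le : 16 * D ≤ ε
  norm_le : ∀ a < R, ∀ b < R, ∀ r, ‖γ a b r‖ ≤ M
  norm_sub_le : ∀ a < R, ∀ b < R, ∀ r s, dist r s ≤ 1 / (N : ℝ) → ‖γ a b r - γ a b s‖ ≤ ε / 8

namespace IsFine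

lemma eps_pos (h : IsFine R N D M ε γ) : 0 < ε := by linarith [h.pos_D, h.mul_D_le]

lemma norm_vertex_le (h : IsFine R N D M ε γ) {a : ℕ} (ha : a < R) : ‖φ a‖ ≤ M := by
  simpa using h.norm_le a ha a ha 0

lemma norm_sub_time_le (h : IsFine R N D M ε γ) {a b k : ℕ} (ha : a < R) (hb : b < R)
    {r : unitInterval} (hr : r ∈ Set.Icc (time N k) (time N (k + 1))) :
    ‖γ a b r - γ a b (time N k)‖ ≤ ε / 8 :=
  h.norm_sub_le a ha b hb r _ <|
    (Real.dist_le_of_mem_Icc ⟨hr.1, hr.2⟩ ⟨le_rfl, hr.1.trans hr.2⟩).trans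
      ((le_abs_self _).trans (dist_time_succ_le N k))

lemma norm_center_chain_sub_le (h : IsFine R N D M ε γ) {a b : ℕ} (ha : a < R) (hb : b < R)
    (k : ℕ) : ‖center R D M (chain R N D M γ a b k) - γ a b (time N k)‖ ≤ ε / 8 := by
  refine le_trans ?_ (by linarith [h.mul_D_le] : 2 * D ≤ ε / 8)
  unfold chain
  split_ifs with hk
  · exact norm_center_square_sub_le h.pos_D ha (h.norm_le a ha b hb _)
  · rw [time_of_le h.pos_N (by omega), (γ a b).target]
    exact norm_center_square_sub_le h.pos_D hb (h.norm_vertex_le hb)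

lemma norm_center_chain_succ_sub_le (h : IsFine R N D M ε γ) {a b : ℕ} (ha : a < R) (hb : b < R)
    (k : ℕ) :
    ‖center R D M (chain R N D M γ a b (k + 1)) - center R D M (chain R N D M γ a b k)‖ ≤
      3 * (ε / 8) := by
  have hk := h.norm_center_chain_sub_le ha hb k
  have hk' := h.norm_center_chain_sub_le ha hb (k + 1)
  have htime := h.norm_sub_time_le ha hb (Set.right_mem_Icc.mpr (monotone_time N k.le_succ))
  rw [norm_sub_rev] at hk
  calc _ = ‖(center R D M (chain R N D M γ a b (k + 1)) - γ a b (time N (k + 1))) +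
        (γ a b (time N (k + 1)) - γ a b (time N k)) +
        (γ a b (time N k) - center R D M (chain R N D M γ a b k))‖ := by congr 1; ring
    _ ≤ _ := norm_add₃_le.trans (by linarith)

lemma chain_zero (γ : ∀ a b, Path (φ a) (φ b)) (a b : ℕ) :
    chain R N D M γ a b 0 = square R D M a (φ a) := by
  rw [chain, if_pos (Nat.zero_le N), time_zero, (γ a b).source]

lemma chain_length (γ : ∀ a b, Path (φ a) (φ b)) (a b : ℕ) :
    chain R N D M γ a b (N + 1) = square R D M b (φ b) := if_neg (by omega)

lemma isChainSystem_chain (h : IsFine R N D M ε γ) :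
    IsChainSystem (size R D M) R (· % R) (fun a => square R D M a (φ a)) (N + 1)
      (chain R N D M γ) where
  inClass_base a ha := inClass_square h.pos_D ha (h.norm_vertex_le ha)
  chain_zero := chain_zero γ
  chain_length := chain_length γ
  inClass_chain a ha b hb k hk := by
    rw [chain, if_pos (by omega)]
    exact inClass_square h.pos_D ha (h.norm_le a ha b hb _)

lemma sum_crossing_chain (h : IsFine R N D M ε γ) {a b i j : ℕ} (ha : a < R) (hb : b < R)
    {θ ψ : ℂ} {Γ : Path θ ψ} (hΓ : IsPathLog (corner R D M i j) (γ a b) Γ)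
    (hfar : ¬ PassesWithin ε (corner R D M i j) (γ a b)) :
    2 * Real.pi * ((∑ k ∈ range (N + 1), crossing (chain R N D M γ a b k)
      (chain R N D M γ a b (k + 1)) i j : ℤ) : ℝ) =
      argDefect ψ (center R D M (square R D M b (φ b)) - corner R D M i j) -
      argDefect θ (center R D M (square R D M a (φ a)) - corner R D M i j) := by
  simp only [PassesWithin, not_exists, not_le] at hfar
  have hε := h.eps_pos
  have hR : 0 < R := by omega
  have hchain (k) := h.norm_center_chain_sub_le ha hb k
  simp only [← axisCrossing_center_sub_corner (M := M) h.pos_D hR]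
  have hsum := sum_axisCrossing Γ.continuous (monotone_time N) (N + 1)
    (u := fun k => center R D M (chain R N D M γ a b k) - corner R D M i j)
    (fun k => center_sub_corner_im_ne_zero h.pos_D hR _ i j) ?_ ?_ ?_
  · rwa [time_zero, time_of_le h.pos_N N.le_succ, Γ.source, Γ.target, chain_zero,
      chain_length] at hsum
  · intro k _
    have hsub := norm_sub_norm_le (γ a b (time N k) - corner R D M i j)
      (center R D M (chain R N D M γ a b k) - corner R D M i j)
    rw [sub_sub_sub_cancel_right, norm_sub_rev (γ a b (time N k)) (center ..)] at hsub
    rw [sub_sub_sub_cancel_right]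
    linarith [hchain k, h.norm_center_chain_succ_sub_le ha hb k, hfar (time N k)]
  · intro k _ r hr
    rw [hΓ, hΓ, sub_sub_sub_cancel_right]
    linarith [hfar (time N k), h.norm_sub_time_le ha hb hr]
  · intro k _
    rw [hΓ, sub_sub_sub_cancel_right]
    linarith [hfar (time N k), hchain k]

lemma norm_vertex_sub_corner_le (h : IsFine R N D M ε γ) {a i j : ℕ} (ha : a < R)
    (hij : (i, j) = square R D M a (φ a)) : ‖φ a - corner R D M i j‖ ≤ ε := by
  have hcenter := norm_center_square_sub_le h.pos_D ha (h.norm_vertex_le ha)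
  have hcorner := norm_center_sub_corner_le (M := M) h.pos_D (by omega : 0 < R) (y := (i, j))
    (z := (i, j)) le_rfl le_rfl
  rw [← hij, norm_sub_rev] at hcenter
  rw [sub_self, norm_zero] at hcorner
  have := norm_sub_le_norm_sub_add_norm_sub (φ a) (center R D M (i, j)) (corner R D M i j)
  linarith [h.mul_D_le, h.pos_D]

lemma passesWithin_of_chainCovers (h : IsFine R N D M ε γ) {a b i j : ℕ} (ha : a < R) (hb : b < R)
    (hab : ChainCovers (fun a => square R D M a (φ a)) (N + 1) (chain R N D M γ) i j [a, b]) :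
    PassesWithin ε (corner R D M i j) (γ a b) := by
  obtain ⟨k, -, hi, hj⟩ := hab
  refine ⟨time N (k + 1), ?_⟩
  have hcorner := norm_center_sub_corner_le (M := M) h.pos_D (by omega : 0 < R) hi hj
  have hsucc := h.norm_center_chain_succ_sub_le ha hb k
  have hchain := h.norm_center_chain_sub_le ha hb (k + 1)
  rw [norm_sub_rev] at hsucc hchain
  have := norm_sub_le_norm_sub_add_norm_sub (γ a b (time N (k + 1)))
    (center R D M (chain R N D M γ a b (k + 1))) (corner R D M i j)
  linarith [h.mul_D_le, h.pos_D]

lemma near_triangle_of_chainCovers (h : IsFine R N D M ε γ) {a b e i j : ℕ} (ha : a < R)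
    (hb : b < R) (he : e < R)
    (habe : ChainCovers (fun a => square R D M a (φ a)) (N + 1) (chain R N D M γ) i j [a, b, e]) :
    Near γ ε (corner R D M i j) [a, b, e] := by
  by_contra hfar
  simp only [Near, not_or, not_not] at hfar
  obtain ⟨hab, hbe, hae, θ, ψ, η, Γ₁, Γ₂, Γ₃, h₁, h₂, h₃⟩ := hfar
  have sum_ab := h.sum_crossing_chain ha hb h₁ hab
  have sum_be := h.sum_crossing_chain hb he h₂ hbe
  have sum_ae := h.sum_crossing_chain ha he h₃ hae
  refine habe (Int.cast_injective (α := ℝ) (mul_left_cancel₀ Real.two_pi_pos.ne' ?_))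
  rw [Int.cast_add, Int.cast_sub, mul_add, mul_sub, sum_ab, sum_be, sum_ae]
  simp

lemma near_of_chainCovers (h : IsFine R N D M ε γ) {i j : ℕ} {f : List ℕ} (hf : ∀ a ∈ f, a < R)
    (hij : ChainCovers (fun a => square R D M a (φ a)) (N + 1) (chain R N D M γ) i j f) :
    Near γ ε (corner R D M i j) f := by
  match f with
  | [] | _ :: _ :: _ :: _ :: _ => exact hij
  | [a] => exact h.norm_vertex_sub_corner_le (hf a (by simp)) hij
  | [a, b] => exact h.passesWithin_of_chainCovers (hf a (by simp)) (hf b (by simp)) hij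
  | [a, b, e] =>
    exact h.near_triangle_of_chainCovers (hf a (by simp)) (hf b (by simp)) (hf e (by simp)) hij

open Coloring in
lemma exists_near {p : ℕ} [NeZero p] (h : IsFine (numLabels p) N D M ε γ) (hp : p.Prime)
    (hp2 : p ≠ 2) :
    ∃ (κ : Coloring p) (x : ℂ), ‖x‖ ≤ 2 * (M + D) ∧ ∀ t, Near γ ε x (face κ t).labels := by
  have hR : 0 < numLabels p := Nat.succ_pos _
  have hclass (a) (ha : a < numLabels p) :
      InClass (· % numLabels p) (size (numLabels p) D M) a (a, a) :=
    have hsize : a < size (numLabels p) D M := ha.trans_le (Nat.le_mul_of_pos_right _ (by omega))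
    ⟨Nat.mod_eq_of_lt ha, Nat.mod_eq_of_lt ha, hsize, hsize⟩
  obtain ⟨κ, i, j, hi, hj, hpart⟩ := exists_forall_part_ne_zero hp hp2 hclass
    h.isChainSystem_chain.stage_isPlacedAt
  refine ⟨κ, corner (numLabels p) D M i j, norm_corner_le h.pos_D hR ?_ hi hj, fun t => ?_⟩
  · exact (norm_nonneg _).trans (h.norm_vertex_le hR)
  · exact h.near_of_chainCovers (isAdmissible_labels_face κ t).2
      (h.isChainSystem_chain.chainCovers_of_part_ne_zero (hpart t))

end IsFine

end Grid

lemma exists_forall_norm_le {φ : ℕ → ℂ} (γ : ∀ a b, Path (φ a) (φ b)) (R : ℕ) :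
    ∃ M, ∀ a < R, ∀ b < R, ∀ r, ‖γ a b r‖ ≤ M := by
  obtain ⟨M, hM⟩ := isCompact_univ.exists_bound_of_continuousOn (s := Set.univ)
    (f := fun r (e : Fin R × Fin R) => γ e.1 e.2 r) (by fun_prop)
  exact ⟨M, fun a ha b hb r => (norm_le_pi_norm (fun e : Fin R × Fin R => γ e.1 e.2 r)
    (⟨a, ha⟩, ⟨b, hb⟩)).trans (hM r trivial)⟩

lemma exists_forall_norm_sub_le {φ : ℕ → ℂ} (γ : ∀ a b, Path (φ a) (φ b)) (R : ℕ) {ε : ℝ}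
    (hε : 0 < ε) :
    ∃ δ > 0, ∀ a < R, ∀ b < R, ∀ r s, dist r s < δ → ‖γ a b r - γ a b s‖ ≤ ε := by
  have hcont : Continuous fun r (e : Fin R × Fin R) => γ e.1 e.2 r := by fun_prop
  obtain ⟨δ, hδ, h⟩ := Metric.uniformContinuous_iff.mp
    (CompactSpace.uniformContinuous_of_continuous hcont) ε hε
  refine ⟨δ, hδ, fun a ha b hb r s hrs => (dist_eq_norm (γ a b r) (γ a b s)).symm.trans_le ?_⟩
  exact (dist_le_pi_dist (fun e : Fin R × Fin R => γ e.1 e.2 r) _ (⟨a, ha⟩, ⟨b, hb⟩)).trans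
    (h hrs).le

open Coloring in
lemma exists_near_of_pos {φ : ℕ → ℂ} (γ : ∀ a b, Path (φ a) (φ b)) {p : ℕ} [NeZero p]
    (hp : p.Prime) (hp2 : p ≠ 2) {M : ℝ}
    (hM : ∀ a < numLabels p, ∀ b < numLabels p, ∀ r, ‖γ a b r‖ ≤ M) {ε : ℝ} (hε : 0 < ε) :
    ∃ (κ : Coloring p) (x : ℂ), ‖x‖ ≤ 2 * (M + ε) ∧ ∀ t, Near γ ε x (face κ t).labels := by
  obtain ⟨δ, hδ, hδε⟩ := exists_forall_norm_sub_le γ (numLabels p) (by positivity : 0 < ε / 8)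
  obtain ⟨N, hN⟩ := exists_nat_one_div_lt hδ
  have hfine : Grid.IsFine (numLabels p) (N + 1) (ε / 16) M ε γ :=
    ⟨N.succ_pos, by positivity, by linarith, hM,
      fun a ha b hb r s hrs => hδε a ha b hb r s (hrs.trans_lt (by exact_mod_cast hN))⟩
  obtain ⟨κ, x, hx, hnear⟩ := hfine.exists_near hp hp2
  exact ⟨κ, x, hx.trans (by linarith), hnear⟩

/-- The optimal coloured Tverberg theorem for drawings in the plane. -/
theorem exists_coloring_forall_near_zero {φ : ℕ → ℂ} (γ : ∀ a b, Path (φ a) (φ b)) {p : ℕ}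
    [NeZero p] (hp : p.Prime) (hp2 : p ≠ 2) :
    ∃ (κ : Coloring p) (x : ℂ), ∀ t, Near γ 0 x (Coloring.face κ t).labels := by
  obtain ⟨M, hM⟩ := exists_forall_norm_le γ (Coloring.numLabels p)
  choose κ y hy hnear using fun n : ℕ =>
    exists_near_of_pos γ hp hp2 hM (Nat.one_div_pos_of_nat (n := n) : (0 : ℝ) < _)
  have hball (n) : y n ∈ Metric.closedBall 0 (2 * (M + 1)) := by
    rw [mem_closedBall_zero_iff]
    have hone : 1 / ((n : ℝ) + 1) ≤ 1 := div_le_one_of_le₀ (by simp) (by positivity)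
    exact (hy n).trans (by gcongr)
  obtain ⟨κ₀, hκ₀⟩ := ((hyperfilter ℕ).map κ).eq_pure_of_finite
  obtain ⟨x, -, hx⟩ := (isCompact_closedBall (0 : ℂ) (2 * (M + 1))).ultrafilter_le_nhds
    ((hyperfilter ℕ).map y) (le_principal_iff.mpr (Eventually.of_forall hball :
      ∀ᶠ n in hyperfilter ℕ, y n ∈ Metric.closedBall 0 (2 * (M + 1))))
  have hκ : ∀ᶠ n in hyperfilter ℕ, κ n = κ₀ :=
    (hκ₀ ▸ Set.mem_singleton κ₀ : {κ₀} ∈ (hyperfilter ℕ).map κ)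
  exact ⟨κ₀, x, fun t => Near.of_tendsto
    (tendsto_one_div_add_atTop_nhds_zero_nat.mono_left Nat.hyperfilter_le_atTop) hx
    (hκ.mono fun n hn => hn ▸ hnear n t)⟩

/-! ### Labelling along a matching -/

section Matching

variable {V : Type*} {M : Finset (Sym2 V)}

lemma exists_forall_notMem_of_two_mul_card_lt [Fintype V] (h : 2 * #M < Fintype.card V) :
    ∃ w, ∀ e ∈ M, w ∉ e := by
  classical
  have hcard : #(M.biUnion Sym2.toFinset) < Fintype.card V :=
    (card_biUnion_le_card_mul M _ 2 fun e _ => by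
      rw [Sym2.card_toFinset]; split_ifs <;> simp).trans_lt (by rwa [mul_comm])
  obtain ⟨w, -, hw⟩ := exists_mem_notMem_of_card_lt_card (t := univ) hcard
  exact ⟨w, fun e he hwe => hw (mem_biUnion.mpr ⟨e, he, Sym2.mem_toFinset.mpr hwe⟩)⟩

/-- An enumeration of vertices along a matching `M`: the vertex `ν 0` is not covered, and the edges
of `M` are `{ν 1, ν 2}, {ν 3, ν 4}, …`. -/
structure IsMatchingEnumeration (M : Finset (Sym2 V)) (ν : ℕ → V) : Prop where
  injOn : Set.InjOn ν (Set.Iic (2 * #M))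
  mem_iff : ∀ e, e ∈ M ↔ ∃ k < #M, e = s(ν (2 * k + 1), ν (2 * k + 2))

namespace IsMatchingEnumeration

variable {ν : ℕ → V}

lemma exists_mem (h : IsMatchingEnumeration M ν) {n : ℕ} (hn0 : n ≠ 0) (hn : n ≤ 2 * #M) :
    ∃ e ∈ M, ν n ∈ e := by
  refine ⟨_, (h.mem_iff _).mpr ⟨(n - 1) / 2, by omega, rfl⟩, Sym2.mem_iff.mpr ?_⟩
  rcases (by omega : n = 2 * ((n - 1) / 2) + 1 ∨ n = 2 * ((n - 1) / 2) + 2) with hn | hn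
  exacts [Or.inl (congrArg ν hn), Or.inr (congrArg ν hn)]

lemma exists_eq_of_mk_mem (h : IsMatchingEnumeration M ν) {m n : ℕ} (hmn : s(ν m, ν n) ∈ M)
    (hm : m ≤ 2 * #M) (hn : n ≤ 2 * #M) : ∃ k, s(m, n) = s(2 * k + 1, 2 * k + 2) := by
  obtain ⟨k, hk, heq⟩ := (h.mem_iff _).mp hmn
  have hodd : 2 * k + 1 ≤ 2 * #M := by omega
  have heven : 2 * k + 2 ≤ 2 * #M := by omega
  exact ⟨k, Sym2.eq_iff.mpr ((Sym2.eq_iff.mp heq).imp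
    (fun ⟨h₁, h₂⟩ => ⟨h.injOn hm hodd h₁, h.injOn hn heven h₂⟩)
    fun ⟨h₁, h₂⟩ => ⟨h.injOn hm heven h₁, h.injOn hn hodd h₂⟩)⟩

lemma exists_insert [DecidableEq V] (h : IsMatchingEnumeration M ν) {x y : V} (hxy : x ≠ y)
    (hx : ∀ n ≤ 2 * #M, ν n ≠ x) (hy : ∀ n ≤ 2 * #M, ν n ≠ y) :
    ∃ μ, μ 0 = ν 0 ∧ IsMatchingEnumeration (insert s(x, y) M) μ := by
  let μ : ℕ → V := fun n => if n ≤ 2 * #M then ν n else if n = 2 * #M + 1 then x else y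
  have hμ {n} (hn : n ≤ 2 * #M) : μ n = ν n := if_pos hn
  have hμx : μ (2 * #M + 1) = x := by simp [μ]
  have hμy : μ (2 * #M + 2) = y := by simp [μ]
  have hnotMem : s(x, y) ∉ M := fun hmem => by
    obtain ⟨k, hk, heq⟩ := (h.mem_iff _).mp hmem
    rcases Sym2.mem_iff.mp (heq ▸ Sym2.mem_mk_left _ _ : ν (2 * k + 1) ∈ s(x, y)) with hν | hν
    exacts [hx _ (by omega) hν, hy _ (by omega) hν]
  have hinj : Set.InjOn μ (Set.Iic (2 * #M)) := h.injOn.congr fun n hn => (hμ hn).symm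
  refine ⟨μ, hμ (Nat.zero_le _), ?_, fun e => ?_⟩
  · have hIic : Set.Iic (2 * #(insert s(x, y) M)) =
        insert (2 * #M + 2) (insert (2 * #M + 1) (Set.Iic (2 * #M))) := by
      ext n
      simp only [card_insert_of_notMem hnotMem, Set.mem_Iic, Set.mem_insert_iff]
      omega
    rw [hIic, Set.injOn_insert (by simp), Set.injOn_insert (by simp), Set.image_insert_eq, hμx,
      hμy]
    refine ⟨⟨hinj, ?_⟩, ?_⟩
    · rintro ⟨n, hn, hnx⟩
      exact hx n hn ((hμ hn).symm.trans hnx)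
    · rintro (hyx | ⟨n, hn, hny⟩)
      exacts [hxy hyx.symm, hy n hn ((hμ hn).symm.trans hny)]
  · rw [card_insert_of_notMem hnotMem, mem_insert, h.mem_iff, Nat.exists_lt_succ_right, or_comm,
      hμx, hμy]
    refine or_congr_left (exists_congr fun k => and_congr_right fun hk => ?_)
    rw [hμ (by omega), hμ (by omega)]

end IsMatchingEnumeration

lemma exists_isMatchingEnumeration (hdiag : ∀ e ∈ M, ¬ e.IsDiag)
    (hM : ∀ e ∈ M, ∀ e' ∈ M, e ≠ e' → ∀ v, v ∈ e → v ∉ e') {w : V} (hw : ∀ e ∈ M, w ∉ e) :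
    ∃ ν, ν 0 = w ∧ IsMatchingEnumeration M ν := by
  classical
  induction M using Finset.induction with
  | empty => exact ⟨fun _ => w, rfl, fun m hm n hn _ => by simp_all, by simp⟩
  | insert e M he ih =>
    obtain ⟨ν, hν0, hν⟩ := ih (fun e he => hdiag e (mem_insert_of_mem he))
      (fun e he e' he' => hM e (mem_insert_of_mem he) e' (mem_insert_of_mem he'))
      fun e he => hw e (mem_insert_of_mem he)
    have hfresh (n) (hn : n ≤ 2 * #M) : ν n ∉ e := by
      rcases eq_or_ne n 0 with rfl | hn0
      · exact hν0 ▸ hw _ (mem_insert_self _ _)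
      · obtain ⟨e', he', hne'⟩ := hν.exists_mem hn0 hn
        exact hM e' (mem_insert_of_mem he') _ (mem_insert_self _ _) (fun h => he (h ▸ he')) _ hne'
    induction e using Sym2.inductionOn with
    | _ x y =>
    obtain ⟨μ, hμ0, hμ⟩ := hν.exists_insert (hdiag _ (mem_insert_self _ _))
      (fun n hn h => hfresh n hn (h ▸ Sym2.mem_mk_left _ _))
      fun n hn h => hfresh n hn (h ▸ Sym2.mem_mk_right _ _)
    exact ⟨μ, hμ0.trans hν0, hμ⟩

end Matching

namespace Coloring

variable {p : ℕ} [NeZero p]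

/-- Consecutive labels `2k + 1` and `2k + 2` lie in the same block, as `p - 1` is even. -/
lemma notMem_labels_face_of_odd (hp : Odd p) {κ : Coloring p} {t : Fin p} {k : ℕ}
    (h₁ : 2 * k + 1 ∈ (face κ t).labels) : 2 * k + 2 ∉ (face κ t).labels := by
  intro h₂
  obtain ⟨h, -⟩ | ⟨a, r, hr, har, hrt⟩ := mem_labels_face.mp h₁
  · omega
  obtain ⟨h, -⟩ | ⟨b, q, hq, hbq, hqt⟩ := mem_labels_face.mp h₂
  · omega
  have hab : a = b := by
    by_contra hab
    obtain ⟨m, rfl⟩ := hp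
    have ha := mem_Ioc.mp (label_mem_Ioc a hr)
    have hb := mem_Ioc.mp (label_mem_Ioc b hq)
    rw [← har] at ha
    rw [← hbq] at hb
    fin_cases a <;> fin_cases b <;> simp at ha hb hab <;> omega
  subst hab
  have hrq : r = q := (κ.2 a).injective (hrt.trans hqt.symm)
  rw [← hrq] at hbq
  omega

variable {V : Type*} {M : Finset (Sym2 V)} {ν : ℕ → V} {κ : Coloring p} {t l : Fin p} {u v : ℕ}

lemma le_of_mem_labels_face (hM : 3 * (p - 1) ≤ 2 * #M) (hu : u ∈ (face κ t).labels) :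
    u ≤ 2 * #M :=
  (Nat.lt_succ_iff.mp ((isAdmissible_labels_face κ t).2 u hu)).trans hM

lemma eq_of_mem_labels_face_of_apply_eq (hν : IsMatchingEnumeration M ν)
    (hM : 3 * (p - 1) ≤ 2 * #M) (hu : u ∈ (face κ t).labels) (hv : v ∈ (face κ l).labels)
    (huv : ν u = ν v) : t = l :=
  eq_of_mem_labels_face hu
    (hν.injOn (le_of_mem_labels_face hM hu) (le_of_mem_labels_face hM hv) huv ▸ hv)

lemma adj_of_mem_labels_face (hν : IsMatchingEnumeration M ν) (hp : Odd p)
    (hM : 3 * (p - 1) ≤ 2 * #M) (hu : u ∈ (face κ t).labels) (hv : v ∈ (face κ t).labels)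
    (huv : u ≠ v) : ((⊤ : SimpleGraph V).deleteEdges ↑M).Adj (ν u) (ν v) := by
  have hu' := le_of_mem_labels_face hM hu
  have hv' := le_of_mem_labels_face hM hv
  rw [SimpleGraph.deleteEdges_adj, SimpleGraph.top_adj]
  refine ⟨fun h => huv (hν.injOn hu' hv' h), fun h => ?_⟩
  obtain ⟨k, hk⟩ := hν.exists_eq_of_mk_mem h hu' hv'
  obtain ⟨rfl, rfl⟩ | ⟨rfl, rfl⟩ := Sym2.eq_iff.mp hk
  exacts [notMem_labels_face_of_odd hp hu hv, notMem_labels_face_of_odd hp hv hu]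

end Coloring

/-! ### Drawings of graphs -/

namespace Drawing

variable {V : Type*} {G : SimpleGraph V} (D : Drawing G) (T : E2 ≃ₜ ℂ)

open Classical in
/-- The curve drawn between two vertices, in complex coordinates: the drawing of the edge if there
is one, and an arbitrary path otherwise. -/
def curve (a b : V) : Path (T (D.vert a)) (T (D.vert b)) :=
  if h : G.Adj a b then (D.edgePath h).map T.continuous else PathConnectedSpace.somePath _ _

variable {D T}

lemma curve_of_adj {a b : V} (h : G.Adj a b) : D.curve T a b = (D.edgePath h).map T.continuous :=
  dif_pos h

lemma mem_range_edgePath_of_passesWithin_zero {a b : V} (h : G.Adj a b) {x : ℂ}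
    (hx : PassesWithin 0 x (D.curve T a b)) : T.symm x ∈ Set.range (D.edgePath h) := by
  obtain ⟨r, hr⟩ := hx
  rw [curve_of_adj h, norm_le_zero_iff, sub_eq_zero] at hr
  exact ⟨r, T.eq_symm_apply.mpr hr⟩

variable (D) in
/-- A walk catches the point `x` if it satisfies the condition of the definition of a winding graph:
it is a path through `x`, or a cycle through `x` or around `x`. -/
def Catches (x : E2) {a b : V} (w : G.Walk a b) : Prop :=
  (w.IsPath ∧ x ∈ walkImage D w) ∨
    (∃ h : b = a, (w.copy rfl h).IsCycle ∧
      (x ∈ walkImage D w ∨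
        ∀ (p : ↥({x}ᶜ : Set E2)) (γ : Path p p),
          (∀ t, (γ t : E2) = (walkPath D (w.copy rfl h)) t) →
          ¬ γ.Homotopic (Path.refl p)))

section Triangle

variable {a b e : V} (hab : G.Adj a b) (hbe : G.Adj b e) (hae : G.Adj a e)

/-- The closed walk `a, b, e, a`. -/
abbrev triangle : G.Walk a a := .cons hab (.cons hbe (.cons hae.symm .nil))

lemma isCycle_triangle : (triangle hab hbe hae).IsCycle := by
  simp [SimpleGraph.Walk.cons_isCycle_iff, hab.ne, hbe.ne, hae.ne', hab.ne', hae.ne]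

lemma walkPath_triangle : walkPath D (triangle hab hbe hae) = (D.edgePath hab).trans
    ((D.edgePath hbe).trans ((D.edgePath hae).symm.trans (Path.refl _))) := by
  simp only [walkPath, D.edgePath_symm hae]

variable {hab hbe hae} in
lemma hasClosedLog_curve_of_homotopic_refl {x : ℂ}
    (hx : T.symm x ∉ walkImage D (triangle hab hbe hae))
    {q : ↥({T.symm x}ᶜ : Set E2)} {γ : Path q q}
    (hγ : ∀ t, (γ t : E2) = walkPath D (triangle hab hbe hae) t)
    (h : γ.Homotopic (Path.refl q)) :
    HasClosedLog x (D.curve T a b) (D.curve T b e) (D.curve T a e) := by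
  simp only [walkImage, D.edgePath_symm hae, Path.symm_range, Set.mem_union, not_or] at hx
  let F : C(↥({T.symm x}ᶜ : Set E2), {z : ℂ // z ≠ 0}) :=
    ⟨fun y => ⟨T y - x, fun h => y.2 (T.eq_symm_apply.mpr (sub_eq_zero.mp h))⟩, by fun_prop⟩
  rw [curve_of_adj hab, curve_of_adj hbe, curve_of_adj hae]
  have hmap : ((D.edgePath hab).trans ((D.edgePath hbe).trans ((D.edgePath hae).symm.trans
      (Path.refl _)))).map T.continuous = ((D.edgePath hab).map T.continuous).trans
        (((D.edgePath hbe).map T.continuous).trans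
          (((D.edgePath hae).map T.continuous).symm.trans (Path.refl _))) := by
    rw [Path.map_trans, Path.map_trans, Path.map_trans, Path.map_symm]
    rfl
  refine hasClosedLog_of_homotopic_refl h F (fun r => ?_)
    (fun r hr => hx.1 ⟨r, T.eq_symm_apply.mpr hr⟩)
    (fun r hr => hx.2.1 ⟨r, T.eq_symm_apply.mpr hr⟩)
    (fun r hr => hx.2.2.1 ⟨r, T.eq_symm_apply.mpr hr⟩)
  rw [← hmap, ← walkPath_triangle]
  exact congrArg (T · - x) (hγ r)

lemma catches_triangle {x : ℂ} (hx : PassesWithin 0 x (D.curve T a b) ∨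
    PassesWithin 0 x (D.curve T b e) ∨ PassesWithin 0 x (D.curve T a e) ∨
      ¬ HasClosedLog x (D.curve T a b) (D.curve T b e) (D.curve T a e)) :
    D.Catches (T.symm x) (triangle hab hbe hae) := by
  refine Or.inr ⟨rfl, isCycle_triangle hab hbe hae, or_iff_not_imp_left.mpr fun hmem => ?_⟩
  rcases hx with h | h | h | h
  · exact absurd (Or.inl (mem_range_edgePath_of_passesWithin_zero hab h)) hmem
  · exact absurd (Or.inr (Or.inl (mem_range_edgePath_of_passesWithin_zero hbe h))) hmem
  · refine absurd (Or.inr (Or.inr (Or.inl ?_))) hmem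
    rw [D.edgePath_symm hae, Path.symm_range]
    exact mem_range_edgePath_of_passesWithin_zero hae h
  · exact fun q γ hγ hhom => h (hasClosedLog_curve_of_homotopic_refl hmem hγ hhom)

end Triangle

lemma exists_catches {ν : ℕ → V} {x : ℂ} {l : List ℕ}
    (hadj : ∀ u ∈ l, ∀ v ∈ l, u ≠ v → G.Adj (ν u) (ν v)) (hl : l.Pairwise (· < ·))
    (h : Near (fun a b => D.curve T (ν a) (ν b)) 0 x l) :
    ∃ (a b : V) (w : G.Walk a b), (∀ v ∈ w.support, ∃ u ∈ l, ν u = v) ∧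
      D.Catches (T.symm x) w := by
  match l with
  | [] => exact h.elim
  | [a] =>
    refine ⟨ν a, ν a, .nil, by simp, Or.inl ⟨by simp, ?_⟩⟩
    exact T.symm_apply_eq.mpr (sub_eq_zero.mp (norm_le_zero_iff.mp h)).symm
  | [a, b] =>
    have hab : G.Adj (ν a) (ν b) := hadj a (by simp) b (by simp) (by simpa using hl : a < b).ne
    exact ⟨ν a, ν b, .cons hab .nil, by simp, Or.inl ⟨by simp [hab.ne],
      Or.inl (mem_range_edgePath_of_passesWithin_zero hab h)⟩⟩
  | [a, b, e] =>
    have hlt : (a < b ∧ a < e) ∧ b < e := by simpa using hl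
    have hab := hadj a (by simp) b (by simp) hlt.1.1.ne
    have hbe := hadj b (by simp) e (by simp) hlt.2.ne
    have hae := hadj a (by simp) e (by simp) hlt.1.2.ne
    exact ⟨ν a, ν a, triangle hab hbe hae, by simp, catches_triangle hab hbe hae h⟩
  | _ :: _ :: _ :: _ :: _ => exact h.elim

end Drawing

theorem complete_minus_matching_winding_general {V : Type*} [DecidableEq V] {p : ℕ} (hp : p.Prime)
    (hp2 : p ≠ 2) {M : Finset (Sym2 V)} (hdiag : ∀ e ∈ M, ¬ e.IsDiag)
    (hM : ∀ e ∈ M, ∀ e' ∈ M, e ≠ e' → ∀ v, v ∈ e → v ∉ e') {w : V} (hw : ∀ e ∈ M, w ∉ e)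
    (hcard : 3 * (p - 1) ≤ 2 * #M) :
    IsQWinding ((⊤ : SimpleGraph V).deleteEdges ↑M) p := by
  intro D
  have : NeZero p := ⟨hp.ne_zero⟩
  obtain ⟨ν, -, hν⟩ := exists_isMatchingEnumeration hdiag hM hw
  let T : E2 ≃ₜ ℂ := Complex.orthonormalBasisOneI.repr.symm.toHomeomorph
  obtain ⟨κ, x, hx⟩ := exists_coloring_forall_near_zero (fun a b => D.curve T (ν a) (ν b)) hp hp2
  choose a b P hsupp hP using fun t => Drawing.exists_catches
    (fun u hu v hv => Coloring.adj_of_mem_labels_face hν (hp.odd_of_ne_two hp2) hcard hu hv)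
    (Coloring.isAdmissible_labels_face κ t).1 (hx t)
  refine ⟨a, b, P, T.symm x, fun t l htl => Finset.disjoint_left.mpr fun v hvt hvl => htl ?_, hP⟩
  obtain ⟨u, hu, rfl⟩ := hsupp t v (List.mem_toFinset.mp hvt)
  obtain ⟨u', hu', hνu⟩ := hsupp l _ (List.mem_toFinset.mp hvl)
  exact Coloring.eq_of_mem_labels_face_of_apply_eq hν hcard hu hu' hνu.symm

/-- For a prime `p ≥ 3`, the complete graph `K_{3p-2}` minus a maximal matching
is `p`-winding. -/
theorem complete_minus_matching_winding (p : ℕ) (hp : p.Prime) (hp3 : 3 ≤ p)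
    (M : Finset (Sym2 (Fin (3*p-2))))
    (hMedges : ∀ e ∈ M, ¬ e.IsDiag)
    (hMmatching : ∀ e ∈ M, ∀ e' ∈ M, e ≠ e' → ∀ v, v ∈ e → v ∉ e')
    (hMcard : M.card = (3*p-3)/2) :
    IsQWinding ((⊤ : SimpleGraph (Fin (3*p-2))).deleteEdges ↑M) p := by
  have hodd : p % 2 = 1 := hp.eq_two_or_odd.resolve_left (by omega)
  obtain ⟨w, hw⟩ := exists_forall_notMem_of_two_mul_card_lt (M := M)
    (by rw [Fintype.card_fin]; omega)
  exact complete_minus_matching_winding_general hp (by omega) hMedges hMmatching hw (by omega)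
end
end

section
/- Let q ≥ 2, let K_{3q−2} be the complete simple graph on 3q−2 vertices, let v be a vertex of K_{3q−2}, and let N be a set of q−1 edges of K_{3q−2} all incident to v (joining v to q−1 distinct other vertices). Then the graph obtained from K_{3q−2} by deleting the edges of N is not q-winding. -/
noncomputable section

/-!
A straight-line drawing turns winding into convexity: a walk stays in the convex hull of its
vertices, and a loop in a convex set not containing `x` is nullhomotopic off `x`. So a `q`-winding
graph has, for every placement of its vertices, `q` disjoint connected vertex sets whose convex
hulls meet. Put `v` and at most `q - 1` vertices not adjacent to `v` at opposite corners of a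
square, and the other vertices at the two remaining corners, at most `q - 1` at each. Each corner is
missed by one of the `q` sets, so their hulls can only meet at the centre. A set missing one of the
two remaining corners then contains both `v` and a vertex opposite to it; as `v` lies in one set
only, some set meets no corner but those of `v` and its opposite. It is not connected.
-/

theorem exists_nullhomotopic_lift_of_isSimplyConnected {X : Type*} [TopologicalSpace X]
    {K U : Set X} (hK : IsSimplyConnected K) (hKU : K ⊆ U) {y : X} (γ : Path y y)
    (hγ : ∀ t, γ t ∈ K) :
    ∃ (p : U) (γ' : Path p p), (∀ t, (γ' t : X) = γ t) ∧ γ'.Homotopic (Path.refl p) := by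
  have := hK.simplyConnectedSpace
  have hy : y ∈ K := by simpa using hγ 0
  let γK : Path (⟨y, hy⟩ : K) ⟨y, hy⟩ :=
    { toFun := fun t => ⟨γ t, hγ t⟩
      source' := by simp
      target' := by simp }
  let ι : C(K, U) := ⟨Set.inclusion hKU, continuous_inclusion hKU⟩
  exact ⟨ι ⟨y, hy⟩, γK.map ι.continuous, fun _ => rfl,
    (SimplyConnectedSpace.paths_homotopic γK (Path.refl _)).map ι⟩

theorem isSimplyConnected_of_convex {E : Type*} [AddCommGroup E] [Module ℝ E] [TopologicalSpace E]
    [ContinuousAdd E] [ContinuousSMul ℝ E] {K : Set E} (hK : Convex ℝ K) (hne : K.Nonempty) :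
    IsSimplyConnected K :=
  have := hK.contractibleSpace hne
  SimplyConnectedSpace.ofContractible K

namespace Drawing

variable {V : Type*} {G : SimpleGraph V}

/-- The straight-line drawing with vertex positions `f`. -/
def straight (G : SimpleGraph V) (f : V → E2) : Drawing G where
  vert := f
  edgePath {a b} _ := Path.segment (f a) (f b)
  edgePath_symm _ := (Path.segment_symm _ _).symm

theorem range_walkPath_subset_walkImage (D : Drawing G) {a b : V} (w : G.Walk a b) :
    Set.range (walkPath D w) ⊆ walkImage D w := by
  induction w with
  | nil => simp [walkPath, walkImage]
  | cons h w ih =>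
    rw [walkPath, Path.trans_range, walkImage]
    exact Set.union_subset_union_right _ ih

theorem walkImage_straight_subset_of_convex {f : V → E2} {K : Set E2} (hK : Convex ℝ K) {a b : V}
    {w : G.Walk a b} (hw : ∀ u ∈ w.support, f u ∈ K) : walkImage (straight G f) w ⊆ K := by
  induction w with
  | nil => simpa [walkImage, straight] using hw
  | @cons a b _ h w ih =>
    rw [SimpleGraph.Walk.support_cons, List.forall_mem_cons] at hw
    refine Set.union_subset ?_ (ih hw.2)
    change Set.range (Path.segment (f a) (f b)) ⊆ K
    rw [Path.range_segment]
    exact hK.segment_subset hw.1 (hw.2 b w.start_mem_support)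

end Drawing

theorem IsQWinding.exists_connected_mem_convexHull {V : Type*} [DecidableEq V] {G : SimpleGraph V}
    {q : ℕ} (hG : IsQWinding G q) (f : V → E2) :
    ∃ (S : Fin q → Set V) (x : E2), Pairwise (fun i j => Disjoint (S i) (S j)) ∧
      (∀ i, (G.induce (S i)).Connected) ∧ ∀ i, x ∈ convexHull ℝ (f '' S i) := by
  obtain ⟨a, b, w, x, hdisj, hw⟩ := hG (Drawing.straight G f)
  refine ⟨fun i => {u | u ∈ (w i).support}, x, fun i j hij => ?_,
    fun i => (w i).connected_induce_support, fun i => ?_⟩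
  · simpa [Set.disjoint_left, Finset.disjoint_left] using hdisj i j hij
  · set K := convexHull ℝ (f '' {u | u ∈ (w i).support})
    have hK : Convex ℝ K := convex_convexHull ℝ _
    have hvert : ∀ u ∈ (w i).support, f u ∈ K := fun u hu =>
      subset_convexHull ℝ _ (Set.mem_image_of_mem f hu)
    obtain ⟨-, hx⟩ | ⟨h, -, hx | hloop⟩ := hw i
    · exact Drawing.walkImage_straight_subset_of_convex hK hvert hx
    · exact Drawing.walkImage_straight_subset_of_convex hK hvert hx
    · by_contra hxK
      have hpath : ∀ t, walkPath (Drawing.straight G f) ((w i).copy rfl h) t ∈ K := fun t =>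
        Drawing.walkImage_straight_subset_of_convex hK (by simpa using hvert)
          (Drawing.range_walkPath_subset_walkImage _ _ (Set.mem_range_self t))
      obtain ⟨p, γ, hγ, hnull⟩ := exists_nullhomotopic_lift_of_isSimplyConnected
        (isSimplyConnected_of_convex hK ⟨_, hpath 0⟩)
        (Set.subset_compl_singleton_iff.2 hxK) _ hpath
      exact hloop p γ hγ hnull

/-- The corners `(1, 0), (0, 1), (-1, 0), (0, -1)` of a square centred at the origin, in cyclic
order, so that `k` and `k + 2` are opposite. -/
def squareCorner : Fin 4 → E2 := ![!₂[1, 0], !₂[0, 1], !₂[-1, 0], !₂[0, -1]]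

theorem inner_squareCorner (j k : Fin 4) :
    inner ℝ (squareCorner j) (squareCorner k) =
      if j = k then 1 else if j = k + 2 then -1 else 0 := by
  rw [PiLp.inner_apply, Fin.sum_univ_two]
  fin_cases j <;> fin_cases k <;> simp [squareCorner]

theorem exists_mem_le_map_of_mem_convexHull_image {ι E : Type*} [AddCommGroup E] [Module ℝ E]
    (ℓ : E →ₗ[ℝ] ℝ) {f : ι → E} {T : Set ι} {x : E} (hx : x ∈ convexHull ℝ (f '' T)) :
    ∃ k ∈ T, ℓ x ≤ ℓ (f k) := by
  simpa using (ℓ.convexOn convex_univ).exists_ge_of_mem_convexHull (Set.subset_univ _) hx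

theorem eq_zero_of_forall_mem_convexHull_squareCorner {x : E2}
    (hx : ∀ k, x ∈ convexHull ℝ (squareCorner '' {k}ᶜ)) : x = 0 := by
  have hinner (k : Fin 4) : inner ℝ (squareCorner k) x ≤ 0 := by
    obtain ⟨j, hjk, hle⟩ :=
      exists_mem_le_map_of_mem_convexHull_image (innerₛₗ ℝ (squareCorner k)) (hx k)
    refine hle.trans ?_
    rw [innerₛₗ_apply_apply, inner_squareCorner, if_neg (Ne.symm hjk)]
    split_ifs <;> norm_num
  have hx₀ : x 0 ≤ 0 := by simpa [squareCorner, PiLp.inner_apply] using hinner 0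
  have hx₁ : x 1 ≤ 0 := by simpa [squareCorner, PiLp.inner_apply] using hinner 1
  have hx₂ : 0 ≤ x 0 := by simpa [squareCorner, PiLp.inner_apply] using hinner 2
  have hx₃ : 0 ≤ x 1 := by simpa [squareCorner, PiLp.inner_apply] using hinner 3
  ext i
  fin_cases i
  · exact hx₀.antisymm hx₂
  · exact hx₁.antisymm hx₃

theorem opposite_mem_of_zero_mem_convexHull_squareCorner {T : Set (Fin 4)}
    (hT : 0 ∈ convexHull ℝ (squareCorner '' T)) : (0 ∈ T ∧ 2 ∈ T) ∨ (1 ∈ T ∧ 3 ∈ T) := by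
  have hadj (k : Fin 4) : k ∈ T ∨ k + 1 ∈ T := by
    obtain ⟨j, hj, hle⟩ := exists_mem_le_map_of_mem_convexHull_image
      (innerₛₗ ℝ (squareCorner k + squareCorner (k + 1))) hT
    rw [map_zero, innerₛₗ_apply_apply, inner_add_left, inner_squareCorner,
      inner_squareCorner] at hle
    obtain rfl | rfl : j = k ∨ j = k + 1 := by
      by_contra! hne
      grind
    · exact Or.inl hj
    · exact Or.inr hj
  have h₀ := hadj 0
  have h₁ := hadj 1
  have h₂ := hadj 2
  have h₃ := hadj 3
  simp only [Fin.reduceAdd, zero_add] at h₀ h₁ h₂ h₃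
  tauto

theorem exists_disjoint_of_encard_lt {ι V : Type*} {T : ι → Set V}
    (hT : Pairwise fun i j => Disjoint (T i) (T j)) {S : Set V} (hS : S.encard < ENat.card ι) :
    ∃ i, Disjoint (T i) S := by
  by_contra! h
  choose g hgT hgS using fun i => Set.not_disjoint_iff.1 (h i)
  have hg : Function.Injective g := fun i j hij => by
    by_contra hne
    exact Set.disjoint_left.1 (hT hne) (hgT i) (hij ▸ hgT j)
  exact hS.not_ge (hg.encard_range.trans (Set.encard_le_encard (Set.range_subset_iff.2 hgS)))

theorem not_isQWinding_of_corner_assignment {V : Type*} [DecidableEq V] {G : SimpleGraph V}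
    {q : ℕ} {v : V} (c : V → Fin 4) (hclass : ∀ k, (c ⁻¹' {k}).encard < q)
    (hzero : ∀ u, c u = 0 → u = v) (htwo : ∀ u, c u = 2 → ¬ G.Adj v u) : ¬ IsQWinding G q := by
  intro hG
  obtain ⟨S, x, hdisj, hconn, hx⟩ := hG.exists_connected_mem_convexHull (squareCorner ∘ c)
  simp only [Set.image_comp] at hx
  have hmiss (k : Fin 4) : ∃ i, k ∉ c '' S i := by
    obtain ⟨i, hi⟩ := exists_disjoint_of_encard_lt hdisj (S := c ⁻¹' {k}) (by simpa using hclass k)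
    exact ⟨i, fun ⟨u, hu, huk⟩ => Set.disjoint_left.1 hi hu huk⟩
  obtain rfl : x = 0 := eq_zero_of_forall_mem_convexHull_squareCorner fun k => by
    obtain ⟨i, hi⟩ := hmiss k
    exact convexHull_mono (Set.image_mono (Set.subset_compl_singleton_iff.2 hi)) (hx i)
  have hopp (i) := opposite_mem_of_zero_mem_convexHull_squareCorner (hx i)
  obtain ⟨i, hi⟩ := hmiss 1
  obtain ⟨j, hj⟩ := hmiss 3
  have hv_mem {i} (h : 0 ∈ c '' S i) : c v = 0 ∧ v ∈ S i := by
    obtain ⟨u, hu, hcu⟩ := h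
    obtain rfl := hzero u hcu
    exact ⟨hcu, hu⟩
  obtain ⟨hi₀, u, hu, hcu⟩ := (hopp i).resolve_right fun h => hi h.1
  obtain ⟨hj₀, -⟩ := (hopp j).resolve_right fun h => hj h.2
  obtain ⟨hcv, hvi⟩ := hv_mem hi₀
  obtain rfl : i = j := by
    by_contra hij
    exact Set.disjoint_left.1 (hdisj hij) hvi (hv_mem hj₀).2
  have hvu : v ≠ u := by
    rintro rfl
    simp [hcv] at hcu
  have : Nontrivial (S i) := ⟨⟨v, hvi⟩, ⟨u, hu⟩, Subtype.coe_ne_coe.1 hvu⟩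
  obtain ⟨⟨z, hz⟩, hvz : G.Adj v z⟩ := (hconn i).preconnected.exists_adj_of_nontrivial ⟨v, hvi⟩
  match hcz : c z with
  | 0 => exact hvz.ne (hzero z hcz).symm
  | 1 => exact hi ⟨z, hz, hcz⟩
  | 2 => exact htwo z hcz hvz
  | 3 => exact hj ⟨z, hz, hcz⟩

theorem exists_subset_card_le_card_sdiff_le {α : Type*} [DecidableEq α] {s : Finset α} {m n : ℕ}
    (hs : s.card ≤ m + n) : ∃ t ⊆ s, t.card ≤ m ∧ (s \ t).card ≤ n := by
  obtain ⟨t, hts, ht⟩ := Finset.exists_subset_card_eq (min_le_right m s.card)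
  refine ⟨t, hts, by lia, ?_⟩
  rw [Finset.card_sdiff_of_subset hts]
  lia

theorem exists_corner_assignment_of_degree_le {V : Type*} [Fintype V] {G : SimpleGraph V} {v : V}
    [Fintype (G.neighborSet v)] {q : ℕ} (hq : 2 ≤ q) (hV : Fintype.card V ≤ 3 * q - 2)
    (hv : G.degree v ≤ 2 * q - 2) :
    ∃ c : V → Fin 4, (∀ k, (c ⁻¹' {k}).encard < q) ∧ (∀ u, c u = 0 → u = v) ∧
      ∀ u, c u = 2 → ¬ G.Adj v u := by
  classical
  set M := (insert v (G.neighborFinset v))ᶜ with hM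
  have hMcard : M.card ≤ (q - 1) + (2 * (q - 1) - G.degree v) := by
    rw [hM, Finset.card_compl, Finset.card_insert_of_notMem (by simp),
      SimpleGraph.card_neighborFinset_eq_degree]
    lia
  obtain ⟨A, hAM, hA, hMA⟩ := exists_subset_card_le_card_sdiff_le hMcard
  have hR : (G.neighborFinset v ∪ M \ A).card ≤ (q - 1) + (q - 1) := by
    grw [Finset.card_union_le, hMA, SimpleGraph.card_neighborFinset_eq_degree]
    lia
  obtain ⟨B, -, hB, hC⟩ := exists_subset_card_le_card_sdiff_le hR
  let c : V → Fin 4 := fun u => if u = v then 0 else if u ∈ A then 2 else if u ∈ B then 1 else 3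
  let classBound : Fin 4 → Finset V := ![{v}, B, A, (G.neighborFinset v ∪ M \ A) \ B]
  have hcard (k : Fin 4) : (classBound k).card < q := by
    fin_cases k <;> simp [classBound] <;> lia
  have hmem (u : V) : u ∈ classBound (c u) := by
    simp only [c, classBound]
    split_ifs with huv huA huB
    · simp [huv]
    · simpa using huA
    · simpa using huB
    · simp [hM, huv, huA, huB, em]
  refine ⟨c, fun k => ?_, fun u hu => ?_, fun u hu => ?_⟩
  · have hsub : c ⁻¹' {k} ⊆ classBound k := fun u hu => hu ▸ hmem u
    exact (Set.encard_le_encard hsub).trans_lt (by simpa using hcard k)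
  · simpa [classBound, hu] using hmem u
  · have huM := hAM (show u ∈ A by simpa [classBound, hu] using hmem u)
    simp only [hM, Finset.mem_compl, Finset.mem_insert, SimpleGraph.mem_neighborFinset,
      not_or] at huM
    exact huM.2

theorem degree_deleteEdges_add_card {V : Type*} {G : SimpleGraph V} {v : V} {N : Finset (Sym2 V)}
    [Fintype (G.neighborSet v)] [Fintype ((G.deleteEdges (N : Set (Sym2 V))).neighborSet v)]
    (hN : ∀ e ∈ N, e ∈ G.incidenceSet v) :
    (G.deleteEdges (N : Set (Sym2 V))).degree v + N.card = G.degree v := by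
  classical
  have hincidence :
      (G.deleteEdges (N : Set (Sym2 V))).incidenceFinset v = G.incidenceFinset v \ N := by
    ext e
    simp [SimpleGraph.incidenceSet, and_right_comm]
  rw [← SimpleGraph.card_incidenceFinset_eq_degree, ← SimpleGraph.card_incidenceFinset_eq_degree,
    hincidence]
  exact Finset.card_sdiff_add_card_eq_card fun e he => by simpa using hN e he

theorem degree_top_deleteEdges_add_card {V : Type*} [Fintype V] {v : V} {N : Finset (Sym2 V)}
    [Fintype (((⊤ : SimpleGraph V).deleteEdges (N : Set (Sym2 V))).neighborSet v)]
    (hN : ∀ e ∈ N, v ∈ e ∧ ¬ e.IsDiag) :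
    ((⊤ : SimpleGraph V).deleteEdges (N : Set (Sym2 V))).degree v + N.card =
      Fintype.card V - 1 := by
  classical
  rw [← SimpleGraph.complete_graph_degree v]
  exact degree_deleteEdges_add_card fun e he => ⟨by simpa using (hN e he).2, (hN e he).1⟩

theorem complete_minus_star_not_winding_general {V : Type*} [Fintype V] [DecidableEq V]
    {G : SimpleGraph V} {q : ℕ} (hq : 2 ≤ q) (hV : Fintype.card V ≤ 3 * q - 2) (v : V)
    [Fintype (G.neighborSet v)] (hv : G.degree v ≤ 2 * q - 2) : ¬ IsQWinding G q :=
  let ⟨c, hclass, hzero, htwo⟩ := exists_corner_assignment_of_degree_le hq hV hv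
  not_isQWinding_of_corner_assignment c hclass hzero htwo

/-- Deleting `q - 1` edges meeting in one vertex from `K_{3q-2}` yields a graph
that is not `q`-winding. -/
theorem complete_minus_star_not_winding (q : ℕ) (hq : 2 ≤ q)
    (v : Fin (3*q-2)) (N : Finset (Sym2 (Fin (3*q-2))))
    (hN : ∀ e ∈ N, v ∈ e ∧ ¬ e.IsDiag)
    (hNcard : N.card = q - 1) :
    ¬ IsQWinding ((⊤ : SimpleGraph (Fin (3*q-2))).deleteEdges ↑N) q := by
  have hdeg := degree_top_deleteEdges_add_card hN
  rw [Fintype.card_fin] at hdeg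
  exact complete_minus_star_not_winding_general hq (Fintype.card_fin _).le v (by lia)
end
end
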